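/- arXiv:1306.3841 — 2 statements merged into one kernel-verified Lean document; each statement's English description precedes it below -/
import Mathlib

section
/- Let E = E(2,M,p) be a planar fractal percolation with M^{-1} < p < 1. Then, conditioned on E ≠ ∅, almost surely the following holds: for every continuously differentiable real-valued function f defined on an open neighborhood of [0,1]² whose two partial derivatives are strictly positive at every point, the image f(E) contains a nonempty open interval. -/
open MeasureTheory Set ENNReal ProbabilityTheory Real

noncomputable section

/-- The alphabet indexing the `M^d` subcubes of a cube in `[0,1]^d`. -/
abbrev Alpha (d M : ℕ) : Type := Fin d → Fin M

/-- Finite nonempty words over the alphabet; they index `M`-adic cubes. -/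
abbrev Word (d M : ℕ) : Type := {w : List (Alpha d M) // w ≠ []}

/-- The sample space: `{0,1}`-labelings of all finite nonempty words. -/
abbrev PercSpace (d M : ℕ) : Type := Word d M → Bool

/-- `P` is the product measure making the labels i.i.d. Bernoulli(`p`). -/
def IsBernoulliPerc (d M : ℕ) (p : ℝ) (P : Measure (PercSpace d M)) : Prop :=
  IsProbabilityMeasure P ∧
    ∀ (S : Finset (Word d M)) (b : Word d M → Bool),
      P {ω | ∀ w ∈ S, ω w = b w} =
        ∏ w ∈ S, if b w then ENNReal.ofReal p else ENNReal.ofReal (1 - p)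

/-- A level-`w.length` cube is retained iff its word and every nonempty prefix
of its word carry label 1. -/
def Retained (d M : ℕ) (ω : PercSpace d M) (w : List (Alpha d M)) : Prop :=
  ∀ (u : List (Alpha d M)) (hu : u ≠ []), u <+: w → ω ⟨u, hu⟩ = true

/-- The `i`-th coordinate of the lower-left corner of the cube indexed by `w`. -/
def wordBase (d M : ℕ) (w : List (Alpha d M)) (i : Fin d) : ℝ :=
  ∑ j : Fin w.length, ((w.get j) i : ℝ) * (M : ℝ) ^ (-(j : ℤ) - 1)

/-- The closed `M`-adic cube of level `w.length` indexed by the word `w`. -/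
def wordCube (d M : ℕ) (w : List (Alpha d M)) : Set (EuclideanSpace ℝ (Fin d)) :=
  {x | ∀ i, wordBase d M w i ≤ x i ∧ x i ≤ wordBase d M w i + (M : ℝ) ^ (-(w.length : ℤ))}

/-- `E_n`, the union of the retained level-`n` cubes. -/
def approx (d M : ℕ) (ω : PercSpace d M) (n : ℕ) : Set (EuclideanSpace ℝ (Fin d)) :=
  ⋃ w ∈ {w : List (Alpha d M) | w.length = n ∧ Retained d M ω w}, wordCube d M w

/-- The fractal percolation set `E = ⋂_{n ≥ 1} E_n`. -/
def percLimit (d M : ℕ) (ω : PercSpace d M) : Set (EuclideanSpace ℝ (Fin d)) :=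
  ⋂ n ∈ {n : ℕ | 1 ≤ n}, approx d M ω n

/-!
A level set `{f = t}` is followed inside `E` through a sequence of nested retained cubes. Seen in
the coordinates of a small cube it is close to a line of slope in `[-K, -K⁻¹]`, and the lines that
cross a square away from two of its corners form a compact family, which a finite net `Λ`
approximates well.

Along one line the percolation is a branching process of mean `pM > 1` per level. The number of
retained cubes crossed therefore doubles from one block of levels to the next except with
probability exponentially small in that number, which beats the polynomial size of the nets. So
with positive probability every line of `Λ` crosses many retained level-`m` cubes near their
centers. A line near such a cube's center stays admissible after a small perturbation, so inside
the cube it is again close to a line of `Λ`, and a union bound over `Λ` gives a positive probability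
to the event that this can be continued forever.

By the zero-one law for Galton–Watson trees, almost surely on survival this event is seen from
retained cubes of arbitrarily high level, for all `K` at once. For a given `f`, on such a cube, the
derivative of `f` is almost constant, and every value `t` in an interval is attained: the linear
approximation error at each step is absorbed by the gap between crossing a cube near its center and
being admissible.
-/

/-- The words of length `n`; they index the level-`n` cubes. -/
abbrev LevelWord (d M n : ℕ) : Type := List.Vector (Alpha d M) n

/-- The labeling seen from inside the cube indexed by `w`. -/
def subtree {d M : ℕ} (w : List (Alpha d M)) (ω : PercSpace d M) : PercSpace d M :=
  fun u => ω ⟨w ++ u.1, by simp [u.2]⟩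

/-- The words of length at most `m`. An event is determined by the first `m` levels when its
indicator satisfies `DependsOn` for this set. -/
def shallowWords (d M m : ℕ) : Set (Word d M) := {w | w.1.length ≤ m}

section Words

variable {d M : ℕ}

lemma retained_nil (ω : PercSpace d M) : Retained d M ω [] :=
  fun _ hu h => absurd (List.prefix_nil.1 h) hu

lemma Retained.of_prefix {ω : PercSpace d M} {u w : List (Alpha d M)} (hw : Retained d M ω w)
    (h : u <+: w) : Retained d M ω u :=
  fun v hv hvu => hw v hv (hvu.trans h)

lemma retained_append (ω : PercSpace d M) (w u : List (Alpha d M)) :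
    Retained d M ω (w ++ u) ↔ Retained d M ω w ∧ Retained d M (subtree w ω) u := by
  constructor
  · intro h
    exact ⟨h.of_prefix (List.prefix_append _ _), fun v hv hvu =>
      h (w ++ v) (by simp [hv]) ((List.prefix_append_right_inj w).2 hvu)⟩
  · rintro ⟨hw, hu⟩ v hv hvp
    rcases List.prefix_or_prefix_of_prefix hvp (List.prefix_append w u) with h | ⟨t, rfl⟩
    · exact hw v hv h
    · rcases eq_or_ne t [] with rfl | ht
      · exact hw _ hv (by simp)
      · exact hu t ht ((List.prefix_append_right_inj w).1 hvp)

lemma retained_singleton (ω : PercSpace d M) (c : Alpha d M) :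
    Retained d M ω [c] ↔ ω ⟨[c], by simp⟩ = true := by
  refine ⟨fun h => h _ _ List.prefix_rfl, fun h u hu hp => ?_⟩
  obtain rfl : u = [c] := by
    simpa [List.prefix_cons_iff, hu] using hp
  exact h

lemma subtree_append (ω : PercSpace d M) (w u : List (Alpha d M)) :
    subtree (w ++ u) ω = subtree u (subtree w ω) := by
  funext v
  simp [subtree, List.append_assoc]

@[fun_prop]
lemma measurable_subtree (w : List (Alpha d M)) : Measurable (subtree (d := d) (M := M) w) :=
  measurable_pi_lambda _ fun _ => measurable_pi_apply _

lemma measurableSet_retained (w : List (Alpha d M)) :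
    MeasurableSet {ω : PercSpace d M | Retained d M ω w} := by
  simp only [Retained, Set.ofPred_forall]
  exact .iInter fun u => .iInter fun hu => .iInter fun _ =>
    measurable_pi_apply (X := fun _ : Word d M => Bool) ⟨u, hu⟩ (measurableSet_singleton true)

lemma dependsOn_retained {m : ℕ} {w : List (Alpha d M)} (hw : w.length ≤ m) :
    DependsOn (Retained d M · w) (shallowWords d M m) := by
  intro ω η h
  refine forall_congr fun u => forall_congr fun hu => pi_congr fun hp => ?_
  rw [h _ (hp.length_le.trans hw)]

end Words

section BernoulliLabels

variable {d M : ℕ}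

/-- The law of a labeling whose labels are i.i.d. with law `ν`. -/
def percMeasure (d M : ℕ) (ν : Measure Bool) : Measure (PercSpace d M) :=
  Measure.infinitePi fun _ => ν

instance (ν : Measure Bool) [IsProbabilityMeasure ν] : IsProbabilityMeasure (percMeasure d M ν) :=
  inferInstanceAs (IsProbabilityMeasure (Measure.infinitePi _))

lemma IsBernoulliPerc.eq_percMeasure {p : unitInterval} {P : Measure (PercSpace d M)}
    (hP : IsBernoulliPerc d M p P) : P = percMeasure d M (bernoulliMeasure true false p) := by
  have := hP.1
  refine IsProjectiveLimit.unique (fun I => ?_)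
    (Measure.isProjectiveLimit_infinitePi fun _ => bernoulliMeasure true false p)
  refine Measure.ext_of_singleton fun b : I → Bool => ?_
  have hcyl : I.restrict ⁻¹' ({b} : Set (I → Bool)) =
      {ω : PercSpace d M | ∀ w ∈ I, ω w = Function.extend Subtype.val b (fun _ => true) w} := by
    ext ω
    rw [mem_preimage, mem_singleton_iff, funext_iff, Subtype.forall]
    refine forall₂_congr fun w hw => ?_
    rw [← Subtype.val_injective.extend_apply b (fun _ => true) ⟨w, hw⟩]
    rfl
  rw [Measure.map_apply (Finset.measurable_restrict I) (measurableSet_singleton b), hcyl, hP.2,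
    ← Finset.prod_coe_sort, Measure.pi_singleton]
  refine Finset.prod_congr rfl fun w _ => ?_
  rw [Subtype.val_injective.extend_apply]
  rw [bernoulliMeasure_apply _ (measurableSet_singleton _)]
  cases b w
  · simpa using ENNReal.ofReal_coe_nnreal (p := unitInterval.toNNReal (unitInterval.symm p))
  · simpa using ENNReal.ofReal_coe_nnreal (p := unitInterval.toNNReal p)

lemma measurePreserving_label (ν : Measure Bool) [IsProbabilityMeasure ν] (w : Word d M) :
    MeasurePreserving (fun ω : PercSpace d M => ω w) (percMeasure d M ν) ν :=
  measurePreserving_eval_infinitePi _ w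

end BernoulliLabels

section Graft

variable {d M m : ℕ}

/-- The position of the label of `w` in a labeling cut at level `m`: the words of length at most
`m` form the top part `none`, the others are sorted according to their level-`m` ancestor. -/
def graftIndex (m : ℕ) (w : Word d M) : Option (LevelWord d M m) × Word d M :=
  if h : w.1.length ≤ m then (none, w) else
    (some ⟨w.1.take m, by simp; omega⟩, ⟨w.1.drop m, by simp; omega⟩)

/-- Keep the labels of `x.2` of length at most `m` and hang the labelings `x.1` below them. -/
def graft (m : ℕ) (x : (LevelWord d M m → PercSpace d M) × PercSpace d M) : PercSpace d M :=
  fun w => (MeasurableEquiv.piOptionEquivProd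
    fun _ : Option (LevelWord d M m) => PercSpace d M).symm x (graftIndex m w).1 (graftIndex m w).2

lemma graftIndex_injective : Function.Injective (graftIndex (d := d) (M := M) m) := by
  intro w u h
  by_cases hw : w.1.length ≤ m <;> by_cases hu : u.1.length ≤ m <;>
    simp only [graftIndex, hw, hu, dite_true, dite_false, Prod.mk.injEq, Subtype.mk.injEq,
      reduceCtorEq, false_and, true_and] at h
  · exact h
  · obtain ⟨htake, hdrop⟩ := h
    have htake : w.1.take m = u.1.take m := congrArg Subtype.val (Option.some.inj htake)
    rw [← Subtype.coe_inj, ← List.take_append_drop m w.1, htake, hdrop, List.take_append_drop]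

lemma graft_of_le (x : (LevelWord d M m → PercSpace d M) × PercSpace d M) {w : Word d M}
    (hw : w ∈ shallowWords d M m) : graft m x w = x.2 w := by
  have hlen : w.1.length ≤ m := hw
  simp only [graft, graftIndex, ne_eq, hlen, ↓reduceDIte]
  rfl

lemma subtree_graft (x : (LevelWord d M m → PercSpace d M) × PercSpace d M)
    (v : LevelWord d M m) : subtree v.1 (graft m x) = x.1 v := by
  funext u
  have hu : ¬ (v.1 ++ u.1).length ≤ m := by
    have := List.length_pos_iff.2 u.2
    rw [List.length_append, v.2]
    omega
  simp only [subtree, graft, graftIndex, hu, dite_false]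
  change x.1 ⟨(v.1 ++ u.1).take m, _⟩ ⟨(v.1 ++ u.1).drop m, _⟩ = x.1 v u
  have hv : (⟨(v.1 ++ u.1).take m, by simp [v.2]⟩ : LevelWord d M m) = v :=
    Subtype.ext (List.take_left' v.2)
  rw [hv]
  exact congrArg (x.1 v) (Subtype.ext (List.drop_left' v.2))

lemma measurePreserving_graft (ν : Measure Bool) [IsProbabilityMeasure ν] (m : ℕ) :
    MeasurePreserving (graft m)
      ((Measure.pi fun _ : LevelWord d M m => percMeasure d M ν).prod (percMeasure d M ν))
      (percMeasure d M ν) := by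
  let e := MeasurableEquiv.piOptionEquivProd fun _ : Option (LevelWord d M m) => PercSpace d M
  have he : MeasurePreserving e.symm
      ((Measure.pi fun _ : LevelWord d M m => percMeasure d M ν).prod (percMeasure d M ν))
      (Measure.infinitePi fun _ => percMeasure d M ν) :=
    ⟨e.symm.measurable, by
      rw [Measure.infinitePi_eq_pi]
      exact Measure.pi_map_piOptionEquivProd fun _ => percMeasure d M ν⟩
  have hcurry : MeasurePreserving
      (MeasurableEquiv.curry (Option (LevelWord d M m)) (Word d M) Bool).symm
      (Measure.infinitePi fun _ => percMeasure d M ν) (Measure.infinitePi fun _ => ν) :=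
    ⟨MeasurableEquiv.measurable _, Measure.infinitePi_map_curry_symm _⟩
  have hindex : MeasurePreserving (fun (y : Option (LevelWord d M m) × Word d M → Bool) w =>
      y (graftIndex m w)) (Measure.infinitePi fun _ => ν) (percMeasure d M ν) :=
    ⟨by fun_prop, Measure.map_infinitePi_infinitePi_of_inj graftIndex_injective⟩
  exact hindex.comp (hcurry.comp he)

/-- The branching property: given the first `m` levels, the labelings seen from the level-`m`
cubes are independent copies of the whole labeling. -/
lemma lintegral_subtrees (ν : Measure Bool) [IsProbabilityMeasure ν]
    {F : PercSpace d M → (LevelWord d M m → PercSpace d M) → ℝ≥0∞}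
    (hF : Measurable (Function.uncurry F))
    (hdep : ∀ y, DependsOn (F · y) (shallowWords d M m)) :
    ∫⁻ ω, F ω (fun v => subtree v.1 ω) ∂(percMeasure d M ν) =
      ∫⁻ ω, ∫⁻ y, F ω y ∂(Measure.pi fun _ => percMeasure d M ν) ∂(percMeasure d M ν) := by
  have hgraft (x : (LevelWord d M m → PercSpace d M) × PercSpace d M) :
      F (graft m x) (fun v => subtree v.1 (graft m x)) = F x.2 x.1 := by
    simp only [subtree_graft]
    exact hdep x.1 fun w hw => graft_of_le x hw
  have hmeas : Measurable fun ω => F ω (fun v => subtree v.1 ω) :=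
    hF.comp (by fun_prop : Measurable fun ω => (ω, fun v : LevelWord d M m => subtree v.1 ω))
  rw [← (measurePreserving_graft ν m).lintegral_comp hmeas]
  simp only [hgraft]
  exact lintegral_prod_symm _ (hF.comp measurable_swap).aemeasurable

lemma measure_inter_preimage_subtree (ν : Measure Bool) [IsProbabilityMeasure ν]
    {V A : Set (PercSpace d M)} (hV : MeasurableSet V)
    (hdep : DependsOn (· ∈ V) (shallowWords d M m)) (hA : MeasurableSet A) (v : LevelWord d M m) :
    percMeasure d M ν (V ∩ subtree v.1 ⁻¹' A) = percMeasure d M ν V * percMeasure d M ν A := by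
  let F (ω : PercSpace d M) (y : LevelWord d M m → PercSpace d M) : ℝ≥0∞ :=
    V.indicator 1 ω * A.indicator 1 (y v)
  have hA' : Measurable (A.indicator (1 : PercSpace d M → ℝ≥0∞)) := measurable_one.indicator hA
  have hF : Measurable (Function.uncurry F) :=
    ((measurable_one.indicator hV).comp measurable_fst).mul (hA'.comp (by fun_prop))
  have hFdep (y) : DependsOn (F · y) (shallowWords d M m) := fun ω η h => by
    have hV_iff : (ω ∈ V) = (η ∈ V) := hdep h
    by_cases hω : ω ∈ V
    · simp only [F, indicator_of_mem hω, indicator_of_mem (hV_iff ▸ hω), Pi.one_apply]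
    · simp only [F, indicator_of_notMem hω, indicator_of_notMem (hV_iff ▸ hω)]
  have hint (ω : PercSpace d M) : ∫⁻ y, F ω y ∂(Measure.pi fun _ => percMeasure d M ν) =
      V.indicator 1 ω * percMeasure d M ν A := by
    rw [show ∫⁻ y, F ω y ∂(Measure.pi fun _ => percMeasure d M ν) = _ from
        lintegral_const_mul _ (hA'.comp (measurable_pi_apply v)),
      (measurePreserving_eval (fun _ => percMeasure d M ν) v).lintegral_comp hA',
      lintegral_indicator_one hA]
  calc percMeasure d M ν (V ∩ subtree v.1 ⁻¹' A)
      = ∫⁻ ω, F ω (fun v => subtree v.1 ω) ∂(percMeasure d M ν) := by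
        rw [← lintegral_indicator_one (hV.inter (measurable_subtree _ hA))]
        refine lintegral_congr fun ω => ?_
        simp only [F, inter_indicator_one, Pi.mul_apply]
        rfl
    _ = percMeasure d M ν V * percMeasure d M ν A := by
        rw [lintegral_subtrees ν hF hFdep]
        simp only [hint]
        rw [lintegral_mul_const _ (measurable_one.indicator hV), lintegral_indicator_one hV]

lemma measure_retained (ν : Measure Bool) [IsProbabilityMeasure ν] (w : List (Alpha d M)) :
    percMeasure d M ν {ω | Retained d M ω w} = ν {true} ^ w.length := by
  induction w with
  | nil => simp [retained_nil]
  | cons c w ih =>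
    have hone : percMeasure d M ν {ω | Retained d M ω [c]} = ν {true} := by
      simp only [retained_singleton]
      exact (measurePreserving_label ν _).measure_preimage
        (measurableSet_singleton true).nullMeasurableSet
    have hcons : {ω | Retained d M ω (c :: w)} =
        {ω | Retained d M ω [c]} ∩ subtree [c] ⁻¹' {ω | Retained d M ω w} := by
      ext ω
      exact retained_append ω [c] w
    rw [hcons, measure_inter_preimage_subtree (m := 1) ν (measurableSet_retained _)
      (dependsOn_retained le_rfl) (measurableSet_retained _) ⟨[c], rfl⟩, hone, ih,
      List.length_cons, pow_succ']

open Classical in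
/-- The product over the cubes of `C` that are retained of a function of the labeling seen from the
cube. -/
def retainedProd (C : Finset (LevelWord d M m)) (g : LevelWord d M m → PercSpace d M → ℝ≥0∞)
    (ω : PercSpace d M) : ℝ≥0∞ :=
  ∏ v ∈ C, if Retained d M ω v.1 then g v (subtree v.1 ω) else 1

variable {C : Finset (LevelWord d M m)} {g : LevelWord d M m → PercSpace d M → ℝ≥0∞}

lemma measurable_retainedProd (hg : ∀ v, Measurable (g v)) : Measurable (retainedProd C g) := by
  classical
  exact Finset.measurable_fun_prod _ fun v _ => .ite (measurableSet_retained v.1)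
    ((hg v).comp (measurable_subtree _)) measurable_const

lemma setLIntegral_retainedProd (ν : Measure Bool) [IsProbabilityMeasure ν]
    {V : Set (PercSpace d M)} (hV : MeasurableSet V)
    (hdep : DependsOn (· ∈ V) (shallowWords d M m)) (hg : ∀ v, Measurable (g v)) :
    ∫⁻ ω in V, retainedProd C g ω ∂(percMeasure d M ν) =
      ∫⁻ ω in V, retainedProd C (fun v _ => ∫⁻ η, g v η ∂(percMeasure d M ν)) ω
        ∂(percMeasure d M ν) := by
  classical
  let G (ω : PercSpace d M) (v : LevelWord d M m) (η : PercSpace d M) : ℝ≥0∞ :=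
    if Retained d M ω v.1 then g v η else 1
  have hG (ω v) : Measurable (G ω v) := by
    by_cases h : Retained d M ω v.1 <;> simp [G, h, hg v]
  let F (ω : PercSpace d M) (y : LevelWord d M m → PercSpace d M) : ℝ≥0∞ :=
    V.indicator (fun ω => ∏ v ∈ C, G ω v (y v)) ω
  have hFmeas : Measurable (Function.uncurry F) := by
    refine Measurable.indicator (Finset.measurable_fun_prod _ fun v _ => ?_) (measurable_fst hV)
    exact .ite (measurable_fst (measurableSet_retained v.1))
      ((hg v).comp (by fun_prop)) measurable_const
  have hFdep (y) : DependsOn (F · y) (shallowWords d M m) := by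
    intro ω η h
    have hret (v : LevelWord d M m) : Retained d M ω v.1 = Retained d M η v.1 :=
      dependsOn_retained v.2.le h
    simp only [F, G, indicator, hdep h, hret]
  have hint (ω : PercSpace d M) :
      ∫⁻ y, ∏ v ∈ C, G ω v (y v) ∂(Measure.pi fun _ => percMeasure d M ν) =
      retainedProd C (fun v _ => ∫⁻ η, g v η ∂(percMeasure d M ν)) ω := by
    rw [lintegral_prod_eq_prod_lintegral_of_indepFun C _
      (iIndepFun_pi fun v => (hG ω v).aemeasurable) fun v => (hG ω v).comp (measurable_pi_apply v)]
    refine Finset.prod_congr rfl fun v _ => ?_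
    rw [(measurePreserving_eval (fun _ => percMeasure d M ν) v).lintegral_comp (hG ω v)]
    by_cases h : Retained d M ω v.1 <;> simp [G, h]
  rw [← lintegral_indicator hV, ← lintegral_indicator hV]
  refine (lintegral_subtrees ν hFmeas hFdep).trans (lintegral_congr fun ω => ?_)
  by_cases hω : ω ∈ V <;> simp [F, hω, hint]

open Classical in
/-- The number of retained cubes among those indexed by `C`. -/
def retainedCount (C : Finset (LevelWord d M m)) (ω : PercSpace d M) : ℕ :=
  (C.filter fun v => Retained d M ω v.1).card

/-- A Chernoff bound: on an event of the first `m` levels that guarantees `N` retained cubes, each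
of them contributes an independent factor of mean at most `exp (-γ)`. -/
lemma measure_inter_one_le_retainedProd_le (ν : Measure Bool) [IsProbabilityMeasure ν]
    {V : Set (PercSpace d M)} (hV : MeasurableSet V)
    (hdep : DependsOn (· ∈ V) (shallowWords d M m)) (hg : ∀ v, Measurable (g v)) {γ N : ℝ}
    (hγ : 0 ≤ γ)
    (hgγ : ∀ v ∈ C, ∫⁻ η, g v η ∂(percMeasure d M ν) ≤ ENNReal.ofReal (Real.exp (-γ)))
    (hN : ∀ ω ∈ V, N ≤ retainedCount C ω) :
    percMeasure d M ν (V ∩ {ω | 1 ≤ retainedProd C g ω}) ≤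
      ENNReal.ofReal (Real.exp (-γ * N)) * percMeasure d M ν V := by
  classical
  have hfactor : ∀ ω ∈ V, retainedProd C (fun v _ => ∫⁻ η, g v η ∂(percMeasure d M ν)) ω ≤
      ENNReal.ofReal (Real.exp (-γ * N)) := by
    intro ω hω
    set R := C.filter fun v => Retained d M ω v.1
    calc retainedProd C (fun v _ => ∫⁻ η, g v η ∂(percMeasure d M ν)) ω
        = ∏ v ∈ R, ∫⁻ η, g v η ∂(percMeasure d M ν) := (Finset.prod_filter _ _).symm
      _ ≤ ∏ _v ∈ R, ENNReal.ofReal (Real.exp (-γ)) :=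
          Finset.prod_le_prod' fun v hv => hgγ v (Finset.mem_filter.1 hv).1
      _ = ENNReal.ofReal (Real.exp (R.card * -γ)) := by
          rw [Finset.prod_const, ← ENNReal.ofReal_pow (Real.exp_nonneg _), ← Real.exp_nat_mul]
      _ ≤ ENNReal.ofReal (Real.exp (-γ * N)) :=
          ENNReal.ofReal_le_ofReal (Real.exp_le_exp.2 (by
            have hcard : N ≤ R.card := hN ω hω
            nlinarith))
  calc percMeasure d M ν (V ∩ {ω | 1 ≤ retainedProd C g ω})
      = (percMeasure d M ν).restrict V {ω | 1 ≤ retainedProd C g ω} := by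
        rw [Measure.restrict_apply (measurableSet_le measurable_const
          (measurable_retainedProd hg)), inter_comm]
    _ ≤ ∫⁻ ω in V, retainedProd C g ω ∂(percMeasure d M ν) := by
        simpa using mul_meas_ge_le_lintegral (μ := (percMeasure d M ν).restrict V)
          (measurable_retainedProd hg) 1
    _ ≤ ∫⁻ _ω in V, ENNReal.ofReal (Real.exp (-γ * N)) ∂(percMeasure d M ν) := by
        rw [setLIntegral_retainedProd ν hV hdep hg]
        exact setLIntegral_mono' hV hfactor
    _ = ENNReal.ofReal (Real.exp (-γ * N)) * percMeasure d M ν V := by simp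

end Graft

section WordCoordinates

variable {d M : ℕ}

lemma wordBase_nil (i : Fin d) : wordBase d M [] i = 0 := by
  simp [wordBase]

lemma wordBase_cons (c : Alpha d M) (w : List (Alpha d M)) (i : Fin d) :
    wordBase d M (c :: w) i = (M : ℝ)⁻¹ * ((c i : ℝ) + wordBase d M w i) := by
  have hM : (M : ℝ) ≠ 0 := by exact_mod_cast (c i).pos.ne'
  have hterm (j : ℕ) (x : ℝ) :
      x * (M : ℝ) ^ (-((j + 1 : ℕ) : ℤ) - 1) = (M : ℝ)⁻¹ * (x * (M : ℝ) ^ (-(j : ℤ) - 1)) := by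
    rw [show (-((j + 1 : ℕ) : ℤ) - 1) = (-(j : ℤ) - 1) + -1 by push_cast; ring,
      zpow_add₀ hM, zpow_neg_one]
    ring
  unfold wordBase
  rw [mul_add, Finset.mul_sum]
  refine (Fin.sum_univ_succ (n := w.length) fun j : Fin (w.length + 1) =>
    (((c :: w).get j) i : ℝ) * (M : ℝ) ^ (-(j : ℤ) - 1)).trans ?_
  congr 1
  · simp only [List.get_eq_getElem, Fin.val_zero, Nat.cast_zero, neg_zero, zero_sub, zpow_neg_one,
      mul_comm]
    rfl
  · exact Finset.sum_congr rfl fun j _ => hterm j _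

lemma wordBase_append (w u : List (Alpha d M)) (i : Fin d) :
    wordBase d M (w ++ u) i = wordBase d M w i + ((M : ℝ) ^ w.length)⁻¹ * wordBase d M u i := by
  induction w with
  | nil => simp [wordBase_nil]
  | cons c w ih =>
    rw [List.cons_append, wordBase_cons, ih, wordBase_cons, List.length_cons, pow_succ, mul_inv]
    ring

lemma wordBase_nonneg (w : List (Alpha d M)) (i : Fin d) : 0 ≤ wordBase d M w i := by
  unfold wordBase
  positivity

lemma wordBase_add_le_one (w : List (Alpha d M)) (i : Fin d) :
    wordBase d M w i + ((M : ℝ) ^ w.length)⁻¹ ≤ 1 := by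
  induction w with
  | nil => simp [wordBase_nil]
  | cons c w ih =>
    have hM : (0 : ℝ) < M := by exact_mod_cast (c i).pos
    have hc : (c i : ℝ) + 1 ≤ M := by exact_mod_cast (c i).2
    calc wordBase d M (c :: w) i + ((M : ℝ) ^ (c :: w).length)⁻¹
        = (M : ℝ)⁻¹ * (c i + (wordBase d M w i + ((M : ℝ) ^ w.length)⁻¹)) := by
          rw [wordBase_cons, List.length_cons, pow_succ, mul_inv]; ring
      _ ≤ 1 := by rw [inv_mul_le_iff₀ hM]; linarith

lemma wordBase_le_one (w : List (Alpha d M)) (i : Fin d) : wordBase d M w i ≤ 1 := by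
  have : (0 : ℝ) ≤ ((M : ℝ) ^ w.length)⁻¹ := by positivity
  linarith [wordBase_add_le_one w i]

lemma exists_levelWord_wordBase_eq (n : ℕ) : ∀ k : Fin d → ℕ, (∀ i, k i < M ^ n) →
    ∃ w : LevelWord d M n, ∀ i, (M : ℝ) ^ n * wordBase d M w.1 i = k i := by
  induction n with
  | zero =>
    intro k hk
    refine ⟨⟨[], rfl⟩, fun i => ?_⟩
    have hk0 : k i = 0 := by simpa using hk i
    simp [wordBase_nil, hk0]
  | succ n ih =>
    intro k hk
    have hM (i : Fin d) : 0 < M := Nat.pos_of_ne_zero fun h => by simpa [h] using hk i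
    obtain ⟨w, hw⟩ := ih (fun i => k i % M ^ n) fun i => Nat.mod_lt _ (pow_pos (hM i) n)
    refine ⟨⟨(fun i => ⟨k i / M ^ n, Nat.div_lt_of_lt_mul (by rw [← pow_succ]; exact hk i)⟩) :: w.1,
      by simp [w.2]⟩, fun i => ?_⟩
    have hMi : (M : ℝ) ≠ 0 := by exact_mod_cast (hM i).ne'
    calc (M : ℝ) ^ (n + 1) * wordBase d M (_ :: w.1) i
        = (M : ℝ) ^ n * (k i / M ^ n : ℕ) + (M : ℝ) ^ n * wordBase d M w.1 i := by
          rw [wordBase_cons, pow_succ]; field_simp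
      _ = k i := by rw [hw]; exact_mod_cast Nat.div_add_mod (k i) (M ^ n)

end WordCoordinates

/-- The pair `L` encodes the line `y = L.2 - L.1 * x`. It belongs to `lineWindow δ` when it passes
above `(δ, 0)` and below `(1 - δ, 1)`; for `δ < 1 / 2` it then crosses the unit square well away
from the corners `(0, 0)` and `(1, 1)`. -/
def lineWindow (δ : ℝ) : Set (ℝ × ℝ) :=
  {L | δ * L.1 ≤ L.2 ∧ L.2 ≤ 1 + (1 - δ) * L.1}

/-- The lines of slope in `[-K, -K⁻¹]` whose intersection with the unit square is long enough for
the percolation to be followed along them. -/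
def admissibleLines (K : ℝ) : Set (ℝ × ℝ) :=
  {L | K⁻¹ ≤ L.1 ∧ L.1 ≤ K ∧ L ∈ lineWindow (1 / 4)}

/-- The line `L` in the coordinates in which the cube of `w` is the unit square. -/
def renormLine {M : ℕ} (w : List (Alpha 2 M)) (L : ℝ × ℝ) : ℝ × ℝ :=
  (L.1, (M : ℝ) ^ w.length * (L.2 - wordBase 2 M w 1 - L.1 * wordBase 2 M w 0))

open Classical in
/-- The words of length `n` whose cube is crossed by `L` near its center. -/
def crossedWords (M n : ℕ) (L : ℝ × ℝ) : Finset (LevelWord 2 M n) :=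
  {v | renormLine v.1 L ∈ lineWindow (1 / 2)}

section Lines

variable {M n : ℕ} {K δ δ' : ℝ} {L L' : ℝ × ℝ}

lemma mem_crossedWords {v : LevelWord 2 M n} :
    v ∈ crossedWords M n L ↔ renormLine v.1 L ∈ lineWindow (1 / 2) := by
  simp [crossedWords]

lemma renormLine_nil : renormLine (M := M) [] L = L := by
  simp [renormLine, wordBase_nil]

lemma renormLine_append (w u : List (Alpha 2 M)) :
    renormLine (w ++ u) L = renormLine u (renormLine w L) := by
  rcases w with _ | ⟨c, w⟩
  · simp [renormLine_nil]
  · have hM : (M : ℝ) ≠ 0 := by exact_mod_cast (c 0).pos.ne'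
    simp only [renormLine, wordBase_append, List.length_append, pow_add, Prod.mk.injEq, true_and]
    field_simp
    ring

lemma lineWindow_mono (hδ : δ' ≤ δ) (hL : 0 ≤ L.1) (h : L ∈ lineWindow δ) : L ∈ lineWindow δ' :=
  ⟨by nlinarith [h.1], by nlinarith [h.2]⟩

lemma renormLine_mem_admissibleLines (hK : 0 < K) (hL : L ∈ admissibleLines K)
    {w : List (Alpha 2 M)} (hδ : 1 / 4 ≤ δ) (hw : renormLine w L ∈ lineWindow δ) :
    renormLine w L ∈ admissibleLines K :=
  ⟨hL.1, hL.2.1, lineWindow_mono hδ ((inv_pos.2 hK).le.trans hL.1) hw⟩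

lemma exists_mem_crossedWords_of_column {i : ℕ} (hi : i < M ^ n)
    (hpos : L.1 * (i + 1 / 2) < M ^ n * L.2)
    (hle : (M : ℝ) ^ n * L.2 ≤ M ^ n + L.1 * (i + 1 / 2)) :
    ∃ w ∈ crossedWords M n L, (M : ℝ) ^ n * wordBase 2 M w.1 0 = i := by
  set h : ℝ := M ^ n * L.2 - L.1 * (i + 1 / 2)
  have hhM : h ≤ M ^ n := sub_le_iff_le_add.2 hle
  have hceil : 0 < ⌈h⌉₊ := Nat.ceil_pos.2 (sub_pos.2 hpos)
  obtain ⟨j, hj⟩ := Nat.exists_eq_add_one.2 hceil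
  have hjh : (j : ℝ) < h := Nat.lt_ceil.1 (by omega)
  have hhj : h ≤ j + 1 := by exact_mod_cast hj ▸ Nat.le_ceil h
  have hjM : j < M ^ n := by
    have : (j : ℝ) < (M : ℝ) ^ n := by linarith
    exact_mod_cast this
  obtain ⟨w, hw⟩ := exists_levelWord_wordBase_eq (M := M) n ![i, j]
    (by simp [Fin.forall_fin_two, hi, hjM])
  have hw0 : (M : ℝ) ^ n * wordBase 2 M w.1 0 = i := by simpa using hw 0
  have hw1 : (M : ℝ) ^ n * wordBase 2 M w.1 1 = j := by simpa using hw 1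
  have hintercept : (renormLine w.1 L).2 = h + L.1 / 2 - j := by
    simp only [renormLine, w.2, ← hw1, h, ← hw0]
    ring
  refine ⟨w, mem_crossedWords.2 ?_, hw0⟩
  constructor <;> rw [hintercept] <;> simp only [renormLine] <;> linarith

lemma exists_Ico_of_mem_admissibleLines (hK : 1 ≤ K) (hL : L ∈ admissibleLines K) :
    ∃ lo hi : ℝ, 0 ≤ lo ∧ hi ≤ 1 ∧ (4 * K)⁻¹ ≤ hi - lo ∧
      ∀ x ∈ Ico lo hi, L.1 * x < L.2 ∧ L.2 ≤ 1 + L.1 * x := by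
  obtain ⟨hs, hsK, hlow, hup⟩ := hL
  have hs0 : 0 < L.1 := (inv_pos.2 (by linarith)).trans_le hs
  refine ⟨max 0 ((L.2 - 1) / L.1), min 1 (L.2 / L.1), le_max_left _ _, min_le_left _ _, ?_, ?_⟩
  · have h1 : (4 * K)⁻¹ ≤ 1 / 4 := by
      rw [inv_le_comm₀ (by linarith) (by norm_num)]
      linarith
    have h2 : (4 * K)⁻¹ ≤ 1 / L.1 := by
      rw [one_div]
      gcongr
      linarith
    have h3 : 1 / 4 ≤ L.2 / L.1 := by rwa [le_div_iff₀ hs0]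
    have h4 : (L.2 - 1) / L.1 ≤ 3 / 4 := by rw [div_le_iff₀ hs0]; linarith
    have h5 : L.2 / L.1 - (L.2 - 1) / L.1 = 1 / L.1 := by ring
    rcases max_cases 0 ((L.2 - 1) / L.1) with ⟨e, _⟩ | ⟨e, _⟩ <;>
      rcases min_cases 1 (L.2 / L.1) with ⟨e', _⟩ | ⟨e', _⟩ <;> rw [e, e'] <;> linarith
  · intro x hx
    have h1 := (div_le_iff₀' hs0).1 ((max_le_iff.1 hx.1).2)
    have h2 := (lt_div_iff₀' hs0).1 ((lt_min_iff.1 hx.2).2)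
    exact ⟨h2, by linarith⟩

lemma le_card_crossedWords (hM : 0 < M) (hK : 1 ≤ K) (hL : L ∈ admissibleLines K) :
    (M : ℝ) ^ n / (4 * K) - 1 ≤ (crossedWords M n L).card := by
  obtain ⟨lo, hi, hlo, hhi, hlen, hline⟩ := exists_Ico_of_mem_admissibleLines hK hL
  set D : ℝ := (M : ℝ) ^ n
  have hD : 0 < D := by positivity
  let columns := Finset.Ico ⌈D * lo - 1 / 2⌉₊ ⌈D * hi - 1 / 2⌉₊
  have hcolumn : ∀ i ∈ columns, ∃ w ∈ crossedWords M n L, D * wordBase 2 M w.1 0 = i := by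
    intro i hi'
    obtain ⟨h1, h2⟩ := Finset.mem_Ico.1 hi'
    have h1 := Nat.ceil_le.1 h1
    have h2 := Nat.lt_ceil.1 h2
    have hiM : (i : ℝ) < (M : ℝ) ^ n := by nlinarith
    obtain ⟨hx1, hx2⟩ := hline ((i + 1 / 2) / D)
      ⟨by rw [le_div_iff₀ hD]; linarith, by rw [div_lt_iff₀ hD]; linarith⟩
    rw [mul_div_assoc', div_lt_iff₀ hD] at hx1
    rw [mul_div_assoc', ← sub_le_iff_le_add', le_div_iff₀ hD] at hx2
    exact exists_mem_crossedWords_of_column (mod_cast hiM) (by linarith) (by linarith)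
  have hcard : columns.card ≤ (crossedWords M n L).card := by
    refine Finset.card_le_card_of_surjOn (fun w => ⌊D * wordBase 2 M w.1 0⌋₊) fun i hi => ?_
    obtain ⟨w, hw, hwi⟩ := hcolumn i hi
    exact ⟨w, hw, by simp [hwi]⟩
  have hsub : ⌈D * hi - 1 / 2⌉₊ ≤ columns.card + ⌈D * lo - 1 / 2⌉₊ := by
    rw [Nat.card_Ico]
    omega
  have hceil_hi := Nat.le_ceil (D * hi - 1 / 2)
  have hceil_lo : (⌈D * lo - 1 / 2⌉₊ : ℝ) < D * lo - 1 / 2 + 1 :=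
    Nat.ceil_lt_add_one_of_gt_neg_one (by nlinarith)
  have hwidth : D / (4 * K) ≤ D * (hi - lo) := by
    rw [div_eq_mul_inv]
    gcongr
  have hcard' : (columns.card : ℝ) ≤ (crossedWords M n L).card := by exact_mod_cast hcard
  have hsub' : (⌈D * hi - 1 / 2⌉₊ : ℝ) ≤ columns.card + ⌈D * lo - 1 / 2⌉₊ := by exact_mod_cast hsub
  linarith

end Lines

/-- A finite set of admissible lines from which every admissible line is at distance at most
`(24 K M^n)⁻¹`. At this scale a line crossing a level-`n` cube near its center is approximated by
lines that still cross the cube away from its corners. -/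
def IsLineNet (M : ℕ) (K : ℝ) (n : ℕ) (Λ : Finset (ℝ × ℝ)) : Prop :=
  ↑Λ ⊆ admissibleLines K ∧ ∀ L ∈ admissibleLines K, ∃ L' ∈ Λ, dist L L' ≤ (24 * K * M ^ n)⁻¹

section Nets

lemma abs_sub_le_of_floor_div_eq {r a b : ℝ} (hr : 0 < r) (ha : 0 ≤ a) (hb : 0 ≤ b)
    (h : ⌊a / r⌋₊ = ⌊b / r⌋₊) : |a - b| ≤ r := by
  have ha1 := Nat.floor_le (div_nonneg ha hr.le)
  have ha2 := Nat.lt_floor_add_one (a / r)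
  have hb1 := Nat.floor_le (div_nonneg hb hr.le)
  have hb2 := Nat.lt_floor_add_one (b / r)
  rw [h] at ha1 ha2
  have hscaled : |a / r - b / r| ≤ 1 := abs_le.2 ⟨by linarith, by linarith⟩
  rwa [← sub_div, abs_div, abs_of_pos hr, div_le_one hr] at hscaled

lemma exists_finset_dist_le {T : Set (ℝ × ℝ)} {A r : ℝ} (hA : 0 ≤ A)
    (hT : T ⊆ Icc 0 A ×ˢ Icc 0 A) (hr : 0 < r) :
    ∃ Λ : Finset (ℝ × ℝ), ↑Λ ⊆ T ∧ (Λ.card : ℝ) ≤ (A / r + 1) ^ 2 ∧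
      ∀ x ∈ T, ∃ y ∈ Λ, dist x y ≤ r := by
  let φ (x : ℝ × ℝ) : ℕ × ℕ := (⌊x.1 / r⌋₊, ⌊x.2 / r⌋₊)
  let cells := Finset.range (⌊A / r⌋₊ + 1) ×ˢ Finset.range (⌊A / r⌋₊ + 1)
  obtain ⟨S, hST, hS⟩ := exists_subset_bijOn T φ
  have hcell {a : ℝ} (ha : a ∈ Icc 0 A) : ⌊a / r⌋₊ < ⌊A / r⌋₊ + 1 :=
    Nat.lt_succ_of_le (Nat.floor_mono (div_le_div_of_nonneg_right ha.2 hr.le))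
  have hmaps : MapsTo φ S cells := fun x hx => by
    simpa [cells, φ] using And.intro (hcell (hT (hST hx)).1) (hcell (hT (hST hx)).2)
  have hfin : S.Finite := .of_injOn hmaps hS.injOn cells.finite_toSet
  refine ⟨hfin.toFinset, by simpa using hST, ?_, fun x hx => ?_⟩
  · have hcard : hfin.toFinset.card ≤ cells.card :=
      Finset.card_le_card_of_injOn φ (by simpa using hmaps) (by simpa using hS.injOn)
    have hfloor := Nat.floor_le (div_nonneg hA hr.le)
    calc (hfin.toFinset.card : ℝ) ≤ (⌊A / r⌋₊ + 1) ^ 2 := by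
          rw [sq]; simpa [cells] using (Nat.cast_le (α := ℝ)).2 hcard
      _ ≤ (A / r + 1) ^ 2 := by gcongr
  · obtain ⟨y, hyS, hxy⟩ := hS.surjOn (mem_image_of_mem φ hx)
    have hx := hT hx
    have hy := hT (hST hyS)
    refine ⟨y, hfin.mem_toFinset.2 hyS, max_le ?_ ?_⟩ <;> rw [Real.dist_eq]
    · exact abs_sub_le_of_floor_div_eq hr hx.1.1 hy.1.1 (congrArg Prod.fst hxy).symm
    · exact abs_sub_le_of_floor_div_eq hr hx.2.1 hy.2.1 (congrArg Prod.snd hxy).symm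

variable {M n : ℕ} {K : ℝ} {L L' : ℝ × ℝ}

lemma exists_isLineNet (hM : 0 < M) (hK : 1 ≤ K) (n : ℕ) :
    ∃ Λ, IsLineNet M K n Λ ∧ (Λ.card : ℝ) ≤ (25 * K * (K + 1) * M ^ n) ^ 2 := by
  have hsub : admissibleLines K ⊆ Icc 0 (K + 1) ×ˢ Icc 0 (K + 1) := by
    rintro L ⟨h1, h2, h3, h4⟩
    have hL : 0 < L.1 := (inv_pos.2 (by linarith)).trans_le h1
    exact ⟨⟨hL.le, by linarith⟩, ⟨by linarith, by linarith⟩⟩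
  have hMn : (1 : ℝ) ≤ M ^ n := one_le_pow₀ (by exact_mod_cast hM)
  obtain ⟨Λ, hΛ, hcard, hdist⟩ := exists_finset_dist_le (r := (24 * K * M ^ n)⁻¹) (by linarith) hsub
    (by positivity)
  refine ⟨Λ, ⟨hΛ, hdist⟩, hcard.trans ?_⟩
  have h1 : 1 ≤ K * (K + 1) := by nlinarith
  have h2 : 1 ≤ K * (K + 1) * M ^ n := one_le_mul_of_one_le_of_one_le h1 hMn
  rw [div_inv_eq_mul]
  gcongr
  linarith

lemma abs_renormLine_snd_sub_le (v : LevelWord 2 M n) :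
    |(renormLine v.1 L).2 - (renormLine v.1 L').2| ≤ M ^ n * (2 * dist L L') := by
  have hfst : |L.1 - L'.1| ≤ dist L L' := le_max_left _ _
  have hsnd : |L.2 - L'.2| ≤ dist L L' := le_max_right _ _
  have hbase : |L.1 - L'.1| * wordBase 2 M v.1 0 ≤ dist L L' :=
    (mul_le_of_le_one_right (abs_nonneg _) (wordBase_le_one v.1 0)).trans hfst
  have hdiff : (renormLine v.1 L).2 - (renormLine v.1 L').2 =
      M ^ n * ((L.2 - L'.2) - (L.1 - L'.1) * wordBase 2 M v.1 0) := by
    simp only [renormLine, v.2]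
    ring
  rw [hdiff, abs_mul, abs_of_nonneg (by positivity : (0 : ℝ) ≤ M ^ n)]
  gcongr
  calc |(L.2 - L'.2) - (L.1 - L'.1) * wordBase 2 M v.1 0|
      ≤ |L.2 - L'.2| + |(L.1 - L'.1) * wordBase 2 M v.1 0| := abs_sub _ _
    _ ≤ 2 * dist L L' := by
        rw [abs_mul, abs_of_nonneg (wordBase_nonneg v.1 0)]
        linarith

lemma renormLine_mem_lineWindow_of_dist_le (hM : 0 < M) (hK : 0 < K) {v : LevelWord 2 M n}
    (hv : v ∈ crossedWords M n L') (hL : K⁻¹ ≤ L.1) (hdist : dist L L' ≤ (24 * K * M ^ n)⁻¹) :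
    renormLine v.1 L ∈ lineWindow (3 / 8) := by
  have hMn : (1 : ℝ) ≤ M ^ n := one_le_pow₀ (by exact_mod_cast hM)
  have hscaled : M ^ n * dist L L' ≤ K⁻¹ / 24 := by
    calc M ^ n * dist L L' ≤ M ^ n * (24 * K * M ^ n)⁻¹ := by gcongr
      _ = K⁻¹ / 24 := by field_simp
  have hslope : |L.1 - L'.1| ≤ K⁻¹ / 24 := by
    have hfst : |L.1 - L'.1| ≤ dist L L' := le_max_left _ _
    exact (hfst.trans (le_mul_of_one_le_left dist_nonneg hMn)).trans hscaled
  have hintercept := abs_renormLine_snd_sub_le (L := L) (L' := L') v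
  obtain ⟨hv1, hv2⟩ := mem_crossedWords.1 hv
  rw [abs_le] at hslope hintercept
  change 1 / 2 * L'.1 ≤ _ at hv1
  change _ ≤ 1 + (1 - 1 / 2) * L'.1 at hv2
  constructor
  · change 3 / 8 * L.1 ≤ _
    linarith
  · change _ ≤ 1 + (1 - 3 / 8) * L.1
    linarith

end Nets

section Growth

/-- Every line of `Λ` crosses at least `N` retained level-`n` cubes near their centers. -/
def manyCrossings (M n : ℕ) (Λ : Finset (ℝ × ℝ)) (N : ℝ) : Set (PercSpace 2 M) :=
  {ω | ∀ L ∈ Λ, N ≤ retainedCount (crossedWords M n L) ω}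

section RetainedCount

variable {d M n : ℕ} {C : Finset (LevelWord d M n)}

open Classical in
lemma retainedCount_eq_sum_indicator (ω : PercSpace d M) :
    (retainedCount C ω : ℝ) = ∑ v ∈ C, {ω | Retained d M ω v.1}.indicator 1 ω := by
  simp [retainedCount, indicator_apply]

lemma retainedCount_le_card (ω : PercSpace d M) : retainedCount C ω ≤ C.card := by
  classical
  exact Finset.card_filter_le _ _

lemma measurable_retainedCount :
    Measurable fun ω : PercSpace d M => (retainedCount C ω : ℝ) := by
  simp only [retainedCount_eq_sum_indicator]
  exact Finset.measurable_fun_sum _ fun v _ =>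
    measurable_one.indicator (measurableSet_retained v.1)

lemma dependsOn_retainedCount (C : Finset (LevelWord d M n)) :
    DependsOn (retainedCount C) (shallowWords d M n) := by
  classical
  intro ω η h
  have hret (v : LevelWord d M n) : Retained d M ω v.1 = Retained d M η v.1 :=
    dependsOn_retained v.2.le h
  simp only [retainedCount, hret]

lemma integral_retainedCount (ν : Measure Bool) [IsProbabilityMeasure ν] :
    ∫ ω, (retainedCount C ω : ℝ) ∂(percMeasure d M ν) = ν.real {true} ^ n * C.card := by
  simp only [retainedCount_eq_sum_indicator]
  have hint (v : LevelWord d M n) : Integrable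
      ({ω | Retained d M ω v.1}.indicator (1 : PercSpace d M → ℝ)) (percMeasure d M ν) :=
    (integrable_const (1 : ℝ)).indicator (measurableSet_retained v.1)
  rw [integral_finsetSum _ fun v _ => hint v]
  simp_rw [integral_indicator_one (measurableSet_retained _), Measure.real, measure_retained,
    List.Vector.length_val, ENNReal.toReal_pow]
  rw [Finset.sum_const, nsmul_eq_mul, mul_comm]

open Classical in
lemma retainedProd_ofReal_exp (f : LevelWord d M n → PercSpace d M → ℝ) (ω : PercSpace d M) :
    retainedProd C (fun v η => ENNReal.ofReal (exp (f v η))) ω =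
      ENNReal.ofReal (exp (∑ v ∈ C with Retained d M ω v.1, f v (subtree v.1 ω))) := by
  rw [retainedProd, ← Finset.prod_filter, Real.exp_sum,
    ENNReal.ofReal_prod_of_nonneg fun _ _ => exp_nonneg _]

end RetainedCount

/-- Hoeffding's lemma, at the value of the Laplace parameter that is optimal when the mean
is `-1`. -/
lemma lintegral_exp_le_of_mem_Icc {Ω : Type*} [MeasurableSpace Ω] {μ : Measure Ω}
    [IsProbabilityMeasure μ] {X : Ω → ℝ} {a b : ℝ} (hX : AEMeasurable X μ)
    (hb : ∀ᵐ ω ∂μ, X ω ∈ Icc a b) (hab : a < b) (hmean : ∫ ω, X ω ∂μ ≤ -1) :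
    ∫⁻ ω, ENNReal.ofReal (exp (4 / (b - a) ^ 2 * X ω)) ∂μ ≤
      ENNReal.ofReal (exp (-(2 / (b - a) ^ 2))) := by
  set t := 4 / (b - a) ^ 2
  have hba : 0 < b - a := sub_pos.2 hab
  have hsub := hasSubgaussianMGF_of_mem_Icc hX hb
  have hexp (ω) : exp (t * X ω) = exp (t * ∫ ω, X ω ∂μ) * exp (t * (X ω - ∫ ω, X ω ∂μ)) := by
    rw [← exp_add]
    ring_nf
  simp only [hexp]
  rw [← ofReal_integral_eq_lintegral_ofReal ((hsub.integrable_exp_mul t).const_mul _)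
    (.of_forall fun _ => by positivity), integral_const_mul]
  refine ENNReal.ofReal_le_ofReal ?_
  calc exp (t * ∫ ω, X ω ∂μ) * ∫ ω, exp (t * (X ω - ∫ ω, X ω ∂μ)) ∂μ
      ≤ exp (t * -1) * exp (((b - a) / 2) ^ 2 * t ^ 2 / 2) := by
        gcongr
        simpa [mgf, abs_of_pos hba] using hsub.mgf_le t
    _ = exp (-(2 / (b - a) ^ 2)) := by
        rw [← exp_add]
        congr 1
        simp only [t]
        field_simp
        norm_num

variable {M m n : ℕ} {K N : ℝ} {Λ Λ' : Finset (ℝ × ℝ)}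

lemma measurableSet_manyCrossings : MeasurableSet (manyCrossings M n Λ N) := by
  simp only [manyCrossings, Set.ofPred_forall]
  exact Finset.measurableSet_biInter _ fun L _ =>
    measurableSet_le measurable_const measurable_retainedCount

lemma dependsOn_manyCrossings :
    DependsOn (· ∈ manyCrossings M n Λ N) (shallowWords 2 M n) := by
  intro ω η h
  simp only [manyCrossings, mem_ofPred_eq, dependsOn_retainedCount _ h]

open Classical in
lemma sum_retainedCount_le (C : Finset (LevelWord 2 M n)) (L : ℝ × ℝ) (ω : PercSpace 2 M) :
    ∑ v ∈ C with Retained 2 M ω v.1,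
        retainedCount (crossedWords M m (renormLine v.1 L)) (subtree v.1 ω) ≤
      retainedCount (crossedWords M (n + m) L) ω := by
  unfold retainedCount
  rw [← Finset.card_sigma]
  refine Finset.card_le_card_of_injOn (fun x => ⟨x.1.1 ++ x.2.1, by simp⟩) ?_ ?_
  · rintro ⟨v, u⟩ hx
    obtain ⟨⟨-, hv⟩, hu, hvu⟩ : (v ∈ C ∧ Retained 2 M ω v.1) ∧
        u ∈ crossedWords M m (renormLine v.1 L) ∧ Retained 2 M (subtree v.1 ω) u.1 := by
      simpa using hx
    refine Finset.mem_filter.2 ⟨mem_crossedWords.2 ?_, (retained_append ω v.1 u.1).2 ⟨hv, hvu⟩⟩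
    rw [renormLine_append]
    exact mem_crossedWords.1 hu
  · rintro ⟨v, u⟩ _ ⟨v', u'⟩ _ hx
    obtain ⟨hv, hu⟩ := List.append_inj (congrArg Subtype.val hx) (by simp)
    obtain rfl := Subtype.ext hv
    obtain rfl := Subtype.ext hu
    rfl

/-- The weight in the Chernoff bound of a level-`n` cube `v` crossed by `L`: it exceeds `1` exactly
when the cube has fewer than `2` retained descendants crossed by `L`, `m` levels below. -/
def deficitWeight (m : ℕ) (t : ℝ) (L : ℝ × ℝ) (v : LevelWord 2 M n) (η : PercSpace 2 M) : ℝ≥0∞ :=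
  ENNReal.ofReal (exp (t * (2 - retainedCount (crossedWords M m (renormLine v.1 L)) η)))

lemma measurable_deficitWeight (t : ℝ) (L : ℝ × ℝ) (v : LevelWord 2 M n) :
    Measurable (deficitWeight m t L v) :=
  ((measurable_retainedCount.const_sub 2).const_mul t).exp.ennreal_ofReal

lemma two_mul_retainedCount_le {t : ℝ} (ht : 0 < t) {C : Finset (LevelWord 2 M n)} {L : ℝ × ℝ}
    {ω : PercSpace 2 M} (hω : retainedProd C (deficitWeight m t L) ω < 1) :
    (2 * retainedCount C ω : ℝ) ≤ retainedCount (crossedWords M (n + m) L) ω := by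
  classical
  set R := C.filter fun v => Retained 2 M ω v.1
  let count (v : LevelWord 2 M n) : ℕ :=
    retainedCount (crossedWords M m (renormLine v.1 L)) (subtree v.1 ω)
  have hdeficit : ∑ v ∈ R, (2 - count v : ℝ) < 0 := by
    have h : ENNReal.ofReal (exp (∑ v ∈ R, t * (2 - count v))) < 1 :=
      (retainedProd_ofReal_exp _ ω).symm.trans_lt hω
    rw [ENNReal.ofReal_lt_one, exp_lt_one_iff, ← Finset.mul_sum] at h
    exact (pos_iff_neg_of_mul_neg h).1 ht
  rw [Finset.sum_sub_distrib, Finset.sum_const, nsmul_eq_mul, mul_comm, sub_neg] at hdeficit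
  have hcount : (∑ v ∈ R, count v : ℝ) ≤ retainedCount (crossedWords M (n + m) L) ω := by
    exact_mod_cast sum_retainedCount_le C L ω
  exact hdeficit.le.trans hcount

lemma lintegral_exp_two_sub_retainedCount_le (ν : Measure Bool) [IsProbabilityMeasure ν]
    {C : Finset (LevelWord 2 M m)} (hC : 3 ≤ ν.real {true} ^ m * C.card) :
    ∫⁻ η, ENNReal.ofReal (exp (4 / (Fintype.card (LevelWord 2 M m)) ^ 2 * (2 - retainedCount C η)))
        ∂(percMeasure 2 M ν) ≤
      ENNReal.ofReal (exp (-(2 / (Fintype.card (LevelWord 2 M m)) ^ 2))) := by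
  set B : ℝ := ↑(Fintype.card (LevelWord 2 M m))
  have hCB : (C.card : ℝ) ≤ B := Nat.cast_le.2 (Finset.card_le_univ C)
  have hbound (η : PercSpace 2 M) : (2 - retainedCount C η : ℝ) ∈ Icc (2 - B) 2 := by
    have hcount : (retainedCount C η : ℝ) ≤ C.card := by exact_mod_cast retainedCount_le_card η
    exact ⟨by linarith, by simp⟩
  have hB : 0 < B := by
    have : ν.real {true} ^ m * C.card ≤ 1 * C.card := by
      gcongr
      exact pow_le_one₀ measureReal_nonneg measureReal_le_one
    linarith
  have hmean : ∫ η, (2 - retainedCount C η : ℝ) ∂(percMeasure 2 M ν) ≤ -1 := by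
    have hint : Integrable (fun η => (retainedCount C η : ℝ)) (percMeasure 2 M ν) :=
      .of_mem_Icc 0 B measurable_retainedCount.aemeasurable
        (.of_forall fun η => ⟨by positivity, by linarith [(hbound η).1]⟩)
    rw [integral_sub (integrable_const _) hint, integral_retainedCount]
    simp only [integral_const, probReal_univ, one_smul]
    linarith
  simpa using lintegral_exp_le_of_mem_Icc (X := fun η => (2 - retainedCount C η : ℝ))
    (measurable_retainedCount.const_sub 2).aemeasurable (.of_forall hbound) (by linarith) hmean

lemma one_sub_mul_measureReal_le {Ω ι : Type*} [MeasurableSpace Ω] {μ : Measure Ω}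
    [IsFiniteMeasure μ] {V W : Set Ω} {s : Finset ι} {B : ι → Set Ω} {ε : ℝ} (hε : 0 ≤ ε)
    (hVW : V \ ⋃ i ∈ s, B i ⊆ W) (hB : ∀ i ∈ s, μ (V ∩ B i) ≤ ENNReal.ofReal ε * μ V) :
    (1 - s.card * ε) * μ.real V ≤ μ.real W := by
  have hbad : ∀ i ∈ s, μ.real (V ∩ B i) ≤ ε * μ.real V := fun i hi => by
    simpa [Measure.real, ENNReal.toReal_ofReal hε] using
      ENNReal.toReal_mono (by finiteness) (hB i hi)
  have hcover : V ⊆ W ∪ ⋃ i ∈ s, V ∩ B i := by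
    rw [← inter_iUnion₂, union_comm, ← sdiff_subset_iff, sdiff_self_inter]
    exact hVW
  have hV : μ.real V ≤ μ.real W + s.card * (ε * μ.real V) := by
    calc μ.real V ≤ μ.real (W ∪ ⋃ i ∈ s, V ∩ B i) := measureReal_mono hcover
      _ ≤ μ.real W + ∑ i ∈ s, μ.real (V ∩ B i) :=
          (measureReal_union_le _ _).trans
            (add_le_add_right (measureReal_biUnion_finset_le _ _) _)
      _ ≤ μ.real W + s.card * (ε * μ.real V) := by
          gcongr
          exact (Finset.sum_le_card_nsmul _ _ _ hbad).trans_eq (nsmul_eq_mul _ _)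
  linarith

lemma measureReal_manyCrossings_add (ν : Measure Bool) [IsProbabilityMeasure ν] (hM : 0 < M)
    (hK : 1 ≤ K) (hm : 3 ≤ ν.real {true} ^ m * ((M : ℝ) ^ m / (4 * K) - 1))
    (hΛ : IsLineNet M K n Λ) (hΛ' : ↑Λ' ⊆ admissibleLines K) :
    (1 - Λ'.card * exp (-(2 / (Fintype.card (LevelWord 2 M m)) ^ 2) * N)) *
        (percMeasure 2 M ν).real (manyCrossings M n Λ N) ≤
      (percMeasure 2 M ν).real (manyCrossings M (n + m) Λ' (2 * N)) := by
  choose! near hnear hdist using hΛ.2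
  set B : ℝ := ↑(Fintype.card (LevelWord 2 M m))
  have hB : 0 < B := Nat.cast_pos.2 <| Fintype.card_pos_iff.2
    ⟨List.Vector.replicate m fun _ => ⟨0, hM⟩⟩
  refine one_sub_mul_measureReal_le (exp_nonneg _) (B := fun L => {ω | 1 ≤
    retainedProd (crossedWords M n (near L)) (deficitWeight m (4 / B ^ 2) L) ω}) ?_ fun L hL => ?_
  · rintro ω ⟨hω, hbad⟩ L hL
    have hgood : ¬ 1 ≤ retainedProd (crossedWords M n (near L)) (deficitWeight m (4 / B ^ 2) L) ω :=
      fun h => hbad (mem_iUnion₂.2 ⟨L, hL, h⟩)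
    have hcount := two_mul_retainedCount_le (by positivity) (not_le.1 hgood)
    linarith [hω _ (hnear L (hΛ' hL))]
  · refine measure_inter_one_le_retainedProd_le ν measurableSet_manyCrossings
      dependsOn_manyCrossings (fun v => measurable_deficitWeight _ L v) (by positivity)
      (fun v hv => lintegral_exp_two_sub_retainedCount_le ν (hm.trans ?_))
      fun ω hω => hω _ (hnear L (hΛ' hL))
    have hwindow := renormLine_mem_lineWindow_of_dist_le hM (by linarith) hv (hΛ' hL).1
      (hdist L (hΛ' hL))
    gcongr
    exact le_card_crossedWords hM hK
      (renormLine_mem_admissibleLines (by linarith) (hΛ' hL) (by norm_num) hwindow)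

end Growth

section Parameters

variable {M n : ℕ} {K N : ℝ} {Λ : Finset (ℝ × ℝ)}

lemma measureReal_manyCrossings_pos (ν : Measure Bool) [IsProbabilityMeasure ν]
    (hν : 0 < ν.real {true}) (hM : 0 < M) (hK : 1 ≤ K) (hΛ : ↑Λ ⊆ admissibleLines K)
    (hN : N ≤ (M : ℝ) ^ n / (4 * K) - 1) :
    0 < (percMeasure 2 M ν).real (manyCrossings M n Λ N) := by
  classical
  have hfin : (shallowWords 2 M n).Finite :=
    (List.finite_length_le _ n).preimage Subtype.val_injective.injOn
  have hfull : (hfin.toFinset : Set (Word 2 M)).pi (fun _ => {true}) ⊆ manyCrossings M n Λ N := by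
    intro ω hω L hL
    have hret (v : LevelWord 2 M n) : Retained 2 M ω v.1 := fun u hu huv =>
      hω ⟨u, hu⟩ (hfin.mem_toFinset.2 (huv.length_le.trans v.2.le))
    simpa [retainedCount, hret] using hN.trans (le_card_crossedWords hM hK (hΛ hL))
  refine lt_of_lt_of_le ?_ (measureReal_mono hfull)
  rw [Measure.real, percMeasure, Measure.infinitePi_pi _ fun _ _ => measurableSet_singleton true,
    Finset.prod_const, ENNReal.toReal_pow]
  exact pow_pos hν _

lemma exists_pos_eventually_le_of_summable {x ε : ℕ → ℝ} (hx : ∀ j, 0 < x j) (hε : ∀ j, 0 ≤ ε j)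
    (hsum : Summable ε) (hstep : ∀ j, (1 - ε j) * x j ≤ x (j + 1)) :
    ∃ q > 0, ∀ᶠ j in Filter.atTop, q ≤ x j := by
  obtain ⟨J, hJ⟩ := ((tendsto_sum_nat_add ε).eventually_lt_const
    (show (0 : ℝ) < 1 / 2 by norm_num)).exists
  have hpartial (k : ℕ) : ∑ i ∈ Finset.range k, ε (i + J) ≤ 1 / 2 :=
    (((summable_nat_add_iff J).2 hsum).sum_le_tsum _ fun i _ => hε _).trans hJ.le
  have hlower (k : ℕ) : (1 - ∑ i ∈ Finset.range k, ε (i + J)) * x J ≤ x (k + J) := by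
    induction k with
    | zero => simp
    | succ k ih =>
      have hnonneg : 0 ≤ ∑ i ∈ Finset.range k, ε (i + J) := Finset.sum_nonneg fun i _ => hε _
      have hsucc := hpartial (k + 1)
      have hεk := hε (k + J)
      rw [Finset.sum_range_succ] at hsucc ⊢
      calc (1 - (∑ i ∈ Finset.range k, ε (i + J) + ε (k + J))) * x J
          ≤ ((1 - ε (k + J)) * (1 - ∑ i ∈ Finset.range k, ε (i + J))) * x J := by
            gcongr
            · exact (hx J).le
            · nlinarith
        _ ≤ (1 - ε (k + J)) * x (k + J) := by
            rw [mul_assoc]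
            gcongr
            linarith
        _ ≤ x (k + 1 + J) := by
            rw [add_right_comm]
            exact hstep _
  refine ⟨x J / 2, half_pos (hx J), Filter.eventually_atTop.2 ⟨J, fun j hj => ?_⟩⟩
  obtain ⟨k, rfl⟩ := Nat.exists_eq_add_of_le' hj
  nlinarith [hlower k, hpartial k, hx J]

lemma summable_pow_mul_exp_neg_two_pow {R γ : ℝ} (hR : 0 < R) (hγ : 0 < γ) :
    Summable fun j : ℕ => R ^ j * exp (-γ * 2 ^ j) := by
  refine summable_of_ratio_test_tendsto_lt_one zero_lt_one (.of_forall fun j => by positivity) ?_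
  have hratio (j : ℕ) : ‖R ^ (j + 1) * exp (-γ * 2 ^ (j + 1))‖ / ‖R ^ j * exp (-γ * 2 ^ j)‖ =
      R * exp (-(γ * 2 ^ j)) := by
    rw [Real.norm_of_nonneg (by positivity), Real.norm_of_nonneg (by positivity),
      div_eq_iff (by positivity)]
    have hexp : exp (-γ * 2 ^ (j + 1)) = exp (-(γ * 2 ^ j)) * exp (-γ * 2 ^ j) := by
      rw [← exp_add]
      ring_nf
    rw [hexp]
    ring
  simp only [hratio]
  have hexp : Filter.Tendsto (fun j : ℕ => γ * 2 ^ j) Filter.atTop Filter.atTop :=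
    (tendsto_pow_atTop_atTop_of_one_lt (one_lt_two (α := ℝ))).const_mul_atTop hγ
  simpa using (tendsto_exp_neg_atTop_nhds_zero.comp hexp).const_mul R

/-- A block length that turns the supercriticality `1 < pM` of the percolation along a line into a
growth factor `3`. -/
lemma exists_le_pow_and_three_le_pow_mul {p : ℝ} (hp0 : 0 ≤ p) (hp1 : p ≤ 1) (hpM : 1 < p * M)
    (hK : 0 < K) :
    ∃ m : ℕ, 1 ≤ m ∧ 16 * K ≤ (M : ℝ) ^ m ∧ 3 ≤ p ^ m * ((M : ℝ) ^ m / (4 * K) - 1) := by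
  obtain ⟨m, hm, hm1⟩ := (((tendsto_pow_atTop_atTop_of_one_lt hpM).eventually_gt_atTop
    (16 * K)).and (Filter.eventually_ge_atTop 1)).exists
  have hpow : p ^ m ≤ 1 := pow_le_one₀ hp0 hp1
  have hMm : (p * M) ^ m ≤ M ^ m := by
    rw [mul_pow]
    exact mul_le_of_le_one_left (by positivity) hpow
  refine ⟨m, hm1, hm.le.trans hMm, ?_⟩
  have hfour : 4 ≤ (p * M) ^ m / (4 * K) := by
    rw [le_div_iff₀ (by positivity)]
    linarith
  calc (3 : ℝ) ≤ (p * M) ^ m / (4 * K) - p ^ m := by linarith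
    _ = p ^ m * ((M : ℝ) ^ m / (4 * K) - 1) := by rw [mul_pow]; ring

lemma two_pow_le_pow_succ_div_sub_one {a : ℝ} (hK : 0 < K) (h16 : 16 ≤ a) (ha : 16 * K ≤ a)
    (j : ℕ) : 2 ^ j ≤ a ^ (j + 1) / (4 * K) - 1 := by
  have hj : (1 : ℝ) ≤ 2 ^ j := one_le_pow₀ one_le_two
  have hdiv : 2 ^ j * 4 ≤ a ^ (j + 1) / (4 * K) := by
    rw [le_div_iff₀ (by positivity)]
    calc (2 : ℝ) ^ j * 4 * (4 * K) = 2 ^ j * (16 * K) := by ring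
      _ ≤ a ^ j * a := by gcongr; linarith
      _ = a ^ (j + 1) := (pow_succ a j).symm
  linarith

lemma exists_isLineNet_summable (hM : 0 < M) (hK : 1 ≤ K) (m : ℕ) :
    ∃ Λ : ℕ → Finset (ℝ × ℝ), (∀ j, IsLineNet M K ((j + 1) * m) (Λ j)) ∧
      ∀ γ : ℝ, 0 < γ → Summable fun j => (Λ j).card * exp (-γ * 2 ^ j) := by
  choose Λ hΛ hcard using exists_isLineNet (K := K) hM hK
  refine ⟨fun j => Λ ((j + 1) * m), fun j => hΛ _, fun γ hγ => ?_⟩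
  refine .of_nonneg_of_le (fun j => by positivity) (fun j => ?_)
    ((summable_pow_mul_exp_neg_two_pow (R := ((M : ℝ) ^ m) ^ 2) (by positivity) hγ).mul_left
      ((25 * K * (K + 1) * M ^ m) ^ 2))
  calc (Λ ((j + 1) * m)).card * exp (-γ * 2 ^ j)
      ≤ (25 * K * (K + 1) * M ^ ((j + 1) * m)) ^ 2 * exp (-γ * 2 ^ j) := by
        gcongr
        exact hcard _
    _ = _ := by ring

/-- The parameters of the renewal argument: at level `m` there are, with probability at least `2q`,
`N` retained cubes crossed by each line of a net, and a union bound over the net still leaves room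
for events of probability `exp (-qN)`. -/
lemma exists_frequent_crossings (ν : Measure Bool) [IsProbabilityMeasure ν]
    (hν : 1 < ν.real {true} * M) (hK : 1 ≤ K) :
    ∃ (m : ℕ) (Λ : Finset (ℝ × ℝ)) (N q : ℝ), 1 ≤ m ∧ 0 < q ∧ IsLineNet M K m Λ ∧
      2 * q ≤ (percMeasure 2 M ν).real (manyCrossings M m Λ N) ∧
      Λ.card * exp (-q * N) ≤ 1 / 2 := by
  have hM : 0 < M := Nat.pos_of_ne_zero fun h => by norm_num [h] at hν
  have hν0 : 0 < ν.real {true} := pos_of_mul_pos_left (one_pos.trans hν) (Nat.cast_nonneg M)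
  obtain ⟨m, hm1, hMm, hm⟩ :=
    exists_le_pow_and_three_le_pow_mul hν0.le measureReal_le_one hν (one_pos.trans_le hK)
  obtain ⟨Λ, hΛ, hsum⟩ := exists_isLineNet_summable hM hK m
  let x (j : ℕ) := (percMeasure 2 M ν).real (manyCrossings M ((j + 1) * m) (Λ j) (2 ^ j))
  have hx (j : ℕ) : 0 < x j := measureReal_manyCrossings_pos ν hν0 hM hK (hΛ _).1 <| by
    rw [mul_comm, pow_mul]
    exact two_pow_le_pow_succ_div_sub_one (by linarith) (by linarith) hMm j
  set γ : ℝ := 2 / (Fintype.card (LevelWord 2 M m)) ^ 2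
  have hγ : 0 < γ := by
    have : Nonempty (LevelWord 2 M m) := ⟨List.Vector.replicate m fun _ => ⟨0, hM⟩⟩
    positivity
  obtain ⟨q, hq, hqx⟩ := exists_pos_eventually_le_of_summable hx (fun j => by positivity)
    ((summable_nat_add_iff 1).2 (hsum _ (half_pos hγ))) fun j => by
      have hexp : -(γ / 2) * 2 ^ (j + 1) = -γ * 2 ^ j := by ring
      have hlevel : (j + 1 + 1) * m = (j + 1) * m + m := by ring
      have hthreshold : (2 : ℝ) ^ (j + 1) = 2 * 2 ^ j := pow_succ' 2 j
      simp only [x]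
      rw [hexp, hlevel, hthreshold]
      exact measureReal_manyCrossings_add ν hM hK hm (hΛ _) (hΛ _).1
  obtain ⟨j, hqj, hj⟩ := (hqx.and ((hsum _ (half_pos hq)).tendsto_atTop_zero.eventually_le_const
    (show (0 : ℝ) < 1 / 2 by norm_num))).exists
  exact ⟨(j + 1) * m, Λ j, 2 ^ j, q / 2, Nat.mul_pos j.succ_pos hm1, half_pos hq, hΛ _,
    by linarith, hj⟩

end Parameters

section Hitting

variable {d M m : ℕ} {ι : Type*} {s : Finset ι} {C : ι → Finset (LevelWord d M m)}
  {A B : Set (PercSpace d M)}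

/-- Each of the families `C i`, `i ∈ s`, of level-`m` cubes contains a retained cube in which the
percolation belongs to `A`. -/
def hitting (s : Finset ι) (C : ι → Finset (LevelWord d M m)) (A : Set (PercSpace d M)) :
    Set (PercSpace d M) :=
  {ω | ∀ i ∈ s, ∃ v ∈ C i, Retained d M ω v.1 ∧ subtree v.1 ω ∈ A}

/-- The largest set `A` with `A = hitting s C A`, obtained by iterating `hitting` from `univ`: the
families `C i` are hit at every scale. -/
def perpetuallyHitting (s : Finset ι) (C : ι → Finset (LevelWord d M m)) : Set (PercSpace d M) :=
  ⋂ k, (hitting s C)^[k] univ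

lemma hitting_mono : Monotone (hitting s C) := fun _ _ hAB _ hω i hi =>
  let ⟨v, hv, hret, hA⟩ := hω i hi
  ⟨v, hv, hret, hAB hA⟩

lemma measurableSet_hitting (hA : MeasurableSet A) : MeasurableSet (hitting s C A) := by
  have heq : hitting s C A =
      ⋂ i ∈ s, ⋃ v ∈ C i, {ω | Retained d M ω v.1} ∩ subtree v.1 ⁻¹' A := by
    ext ω
    simp [hitting, and_left_comm]
  rw [heq]
  exact Finset.measurableSet_biInter _ fun i _ => Finset.measurableSet_biUnion _ fun v _ =>
    (measurableSet_retained _).inter (measurable_subtree _ hA)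

lemma antitone_iterate_hitting : Antitone fun k => (hitting s C)^[k] univ :=
  hitting_mono.antitone_iterate_of_map_le (subset_univ _)

lemma measurableSet_iterate_hitting (k : ℕ) : MeasurableSet ((hitting s C)^[k] univ) := by
  induction k with
  | zero => exact .univ
  | succ k ih =>
    rw [Function.iterate_succ_apply']
    exact measurableSet_hitting ih

lemma measurableSet_perpetuallyHitting : MeasurableSet (perpetuallyHitting s C) :=
  .iInter measurableSet_iterate_hitting

lemma perpetuallyHitting_subset_hitting :
    perpetuallyHitting s C ⊆ hitting s C (perpetuallyHitting s C) := by
  intro ω hω i hi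
  have hk (k : ℕ) : ∃ v ∈ C i, Retained d M ω v.1 ∧ subtree v.1 ω ∈ (hitting s C)^[k] univ := by
    have := mem_iInter.1 hω (k + 1)
    rw [Function.iterate_succ_apply'] at this
    exact this i hi
  choose v hv hret hiter using hk
  obtain ⟨u, hu⟩ := Finite.exists_infinite_fiber v
  rw [infinite_coe_iff] at hu
  obtain ⟨k₀, rfl⟩ := hu.nonempty
  refine ⟨v k₀, hv k₀, hret k₀, mem_iInter.2 fun k => ?_⟩
  obtain ⟨l, hl, hkl⟩ := hu.exists_gt k
  rw [← show v l = v k₀ from hl]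
  exact antitone_iterate_hitting hkl.le (hiter l)

variable {N q : ℝ} {V : Set (PercSpace d M)}

lemma le_measureReal_hitting (ν : Measure Bool) [IsProbabilityMeasure ν] (hV : MeasurableSet V)
    (hdep : DependsOn (· ∈ V) (shallowWords d M m))
    (hN : ∀ ω ∈ V, ∀ i ∈ s, N ≤ retainedCount (C i) ω) (hq : 0 ≤ q)
    (hVq : 2 * q ≤ (percMeasure d M ν).real V) (hs : s.card * Real.exp (-q * N) ≤ 1 / 2)
    (hA : MeasurableSet A) (hAq : q ≤ (percMeasure d M ν).real A) :
    q ≤ (percMeasure d M ν).real (hitting s C A) := by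
  let miss (_ : LevelWord d M m) : PercSpace d M → ℝ≥0∞ := Aᶜ.indicator 1
  have hmiss (v) : Measurable (miss v) := measurable_one.indicator hA.compl
  have hmiss_le : ∫⁻ η, Aᶜ.indicator 1 η ∂(percMeasure d M ν) ≤ ENNReal.ofReal (Real.exp (-q)) := by
    rw [lintegral_indicator_one hA.compl, ← ofReal_measureReal, probReal_compl_eq_one_sub hA]
    exact ENNReal.ofReal_le_ofReal (by linarith [Real.add_one_le_exp (-q)])
  have hcover : V \ ⋃ i ∈ s, {ω | 1 ≤ retainedProd (C i) miss ω} ⊆ hitting s C A := by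
    rintro ω ⟨-, hω⟩ i hi
    by_contra! hnone
    refine hω (mem_biUnion (x := i) hi (?_ : 1 ≤ retainedProd (C i) miss ω))
    refine (Finset.prod_eq_one fun v hv => ?_).ge
    by_cases hret : Retained d M ω v.1
    · simp [miss, hret, hnone v hv hret]
    · simp [hret]
  have hunion := one_sub_mul_measureReal_le (Real.exp_nonneg (-q * N)) hcover fun i hi =>
    measure_inter_one_le_retainedProd_le ν hV hdep hmiss hq (fun _ _ => hmiss_le)
      fun ω hω => hN ω hω i hi
  nlinarith

lemma measure_perpetuallyHitting_pos (ν : Measure Bool) [IsProbabilityMeasure ν]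
    (hV : MeasurableSet V) (hdep : DependsOn (· ∈ V) (shallowWords d M m))
    (hN : ∀ ω ∈ V, ∀ i ∈ s, N ≤ retainedCount (C i) ω) (hq : 0 < q)
    (hVq : 2 * q ≤ (percMeasure d M ν).real V) (hs : s.card * Real.exp (-q * N) ≤ 1 / 2) :
    0 < percMeasure d M ν (perpetuallyHitting s C) := by
  have hiter (k : ℕ) : q ≤ (percMeasure d M ν).real ((hitting s C)^[k] univ) := by
    induction k with
    | zero =>
      have hV1 : (percMeasure d M ν).real V ≤ 1 := measureReal_le_one
      simp only [Function.iterate_zero, id_eq, probReal_univ]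
      linarith
    | succ k ih =>
      rw [Function.iterate_succ_apply']
      exact le_measureReal_hitting ν hV hdep hN hq.le hVq hs (measurableSet_iterate_hitting k) ih
  refine (ENNReal.ofReal_pos.2 hq).trans_le (ge_of_tendsto' (tendsto_measure_iInter_atTop
    (fun k => (measurableSet_iterate_hitting k).nullMeasurableSet) antitone_iterate_hitting
    ⟨0, by finiteness⟩) fun k => ?_)
  rw [Function.comp_apply, ← ofReal_measureReal]
  exact ENNReal.ofReal_le_ofReal (hiter k)

end Hitting

section Recurrence

variable {d M : ℕ} {A : Set (PercSpace d M)}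

/-- There are retained cubes of arbitrarily high level in which the percolation belongs to `A`.
In particular `recurrent univ` is the event of survival. -/
def recurrent (A : Set (PercSpace d M)) : Set (PercSpace d M) :=
  {ω | ∀ n : ℕ, ∃ w : List (Alpha d M), n ≤ w.length ∧ Retained d M ω w ∧ subtree w ω ∈ A}

lemma measurableSet_recurrent (hA : MeasurableSet A) : MeasurableSet (recurrent A) := by
  have heq : recurrent A = ⋂ n : ℕ, ⋃ w : List (Alpha d M), ⋃ _ : n ≤ w.length,
      {ω | Retained d M ω w} ∩ subtree w ⁻¹' A := by
    ext ω
    simp [recurrent, and_left_comm]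
  rw [heq]
  exact .iInter fun n => .iUnion fun w => .iUnion fun _ =>
    (measurableSet_retained _).inter (measurable_subtree _ hA)

lemma mem_recurrent_iff {ω : PercSpace d M} :
    ω ∈ recurrent A ↔ ∃ v : LevelWord d M 1, Retained d M ω v.1 ∧ subtree v.1 ω ∈ recurrent A := by
  constructor
  · intro hω
    have hfirst (n : ℕ) : ∃ (v : LevelWord d M 1) (u : List (Alpha d M)), n ≤ u.length ∧
        Retained d M ω (v.1 ++ u) ∧ subtree (v.1 ++ u) ω ∈ A := by
      obtain ⟨_ | ⟨c, u⟩, hlen, hret, hA⟩ := hω (n + 1)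
      · simp at hlen
      · exact ⟨⟨[c], rfl⟩, u, by simpa using hlen, hret, hA⟩
    choose v u hlen hret hA using hfirst
    obtain ⟨x, hx⟩ := Finite.exists_infinite_fiber v
    rw [infinite_coe_iff] at hx
    obtain ⟨k, hk⟩ := hx.nonempty
    rw [mem_preimage, mem_singleton_iff] at hk
    refine ⟨x, hk ▸ ((retained_append _ _ _).1 (hret k)).1, fun n => ?_⟩
    obtain ⟨l, hl, hnl⟩ := hx.exists_gt n
    rw [mem_preimage, mem_singleton_iff] at hl
    refine ⟨u l, hnl.le.trans (hlen l), ?_, ?_⟩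
    · exact hl ▸ ((retained_append _ _ _).1 (hret l)).2
    · rw [← subtree_append, ← hl]
      exact hA l
  · rintro ⟨v, hv, hrec⟩ n
    obtain ⟨u, hlen, hret, hA⟩ := hrec n
    exact ⟨v.1 ++ u, hlen.trans (by simp), (retained_append _ _ _).2 ⟨hv, hret⟩,
      subtree_append ω v.1 u ▸ hA⟩

lemma lintegral_retainedProd_univ_const (ν : Measure Bool) [IsProbabilityMeasure ν] (a : ℝ≥0∞) :
    ∫⁻ ω, retainedProd (Finset.univ : Finset (LevelWord d M 1)) (fun _ _ => a) ω
        ∂(percMeasure d M ν) =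
      (ν {true} * a + ν {false}) ^ Fintype.card (LevelWord d M 1) := by
  let word (v : LevelWord d M 1) : Word d M := ⟨v.1, List.ne_nil_of_length_pos (by simp)⟩
  have hret (ω : PercSpace d M) (v : LevelWord d M 1) :
      Retained d M ω v.1 ↔ ω (word v) = true := by
    obtain ⟨c, hc⟩ := List.length_eq_one_iff.1 v.2
    simp only [word, hc, retained_singleton]
  have hword : Function.Injective word := fun v u h => Subtype.ext (Subtype.mk.inj h)
  let weight (b : Bool) : ℝ≥0∞ := if b then a else 1
  have hweight : Measurable weight := .of_discrete
  have hindep : iIndepFun (fun (v : LevelWord d M 1) (ω : PercSpace d M) => weight (ω (word v)))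
      (percMeasure d M ν) :=
    (iIndepFun_infinitePi (X := fun _ => weight) fun _ => hweight).precomp hword
  have hfactor (v : LevelWord d M 1) :
      ∫⁻ ω, weight (ω (word v)) ∂(percMeasure d M ν) = ν {true} * a + ν {false} := by
    rw [(measurePreserving_label ν (word v)).lintegral_comp hweight, lintegral_fintype]
    simp [weight, mul_comm]
  simp only [retainedProd, hret]
  rw [lintegral_prod_eq_prod_lintegral_of_indepFun Finset.univ _ hindep fun v =>
    hweight.comp (measurable_pi_apply _)]
  simp [hfactor]

lemma measure_compl_recurrent (ν : Measure Bool) [IsProbabilityMeasure ν] (hA : MeasurableSet A) :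
    percMeasure d M ν (recurrent A)ᶜ =
      (ν {true} * percMeasure d M ν (recurrent A)ᶜ + ν {false}) ^
        Fintype.card (LevelWord d M 1) := by
  have hrec := (measurableSet_recurrent hA).compl
  let fail (_ : LevelWord d M 1) : PercSpace d M → ℝ≥0∞ := (recurrent A)ᶜ.indicator 1
  have hfail (ω : PercSpace d M) :
      (recurrent A)ᶜ.indicator 1 ω = retainedProd Finset.univ fail ω := by
    by_cases hω : ω ∈ recurrent A
    · obtain ⟨v, hret, hv⟩ := mem_recurrent_iff.1 hω
      rw [retainedProd, Finset.prod_eq_zero (Finset.mem_univ v)] <;> simp [hω, hret, hv, fail]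
    · rw [indicator_of_mem hω, Pi.one_apply, retainedProd, Finset.prod_eq_one]
      intro v _
      by_cases hret : Retained d M ω v.1
      · simp [fail, hret, show subtree v.1 ω ∉ recurrent A from
          fun h => hω (mem_recurrent_iff.2 ⟨v, hret, h⟩)]
      · simp [hret]
  have hbranch := setLIntegral_retainedProd (C := Finset.univ) (g := fail) ν .univ
    (fun _ _ _ => rfl) fun _ => measurable_one.indicator hrec
  simp only [Measure.restrict_univ, ← hfail, fail, lintegral_indicator_one hrec] at hbranch
  rw [← lintegral_retainedProd_univ_const, ← hbranch]

/-- The generating function `s ↦ (p s + 1 - p)^n` is strictly convex and also fixes `1`. -/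
lemma eq_of_eq_mul_add_pow {p x y : ℝ} {n : ℕ} (hp : 0 < p) (hp1 : p ≤ 1) (hn : 2 ≤ n)
    (hx : 0 ≤ x) (hxy : x ≤ y) (hy : y < 1) (hxfix : x = (p * x + (1 - p)) ^ n)
    (hyfix : y = (p * y + (1 - p)) ^ n) : x = y := by
  by_contra hne
  have hlt : x < y := hxy.lt_of_ne hne
  have hslope := (strictConvexOn_pow hn).slope_strict_mono_adjacent
    (x := p * x + (1 - p)) (y := p * y + (1 - p)) (z := 1)
    (mem_Ici.2 (by nlinarith)) (mem_Ici.2 zero_le_one) (by nlinarith) (by nlinarith)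
  rw [← hxfix, ← hyfix, one_pow, div_lt_div_iff₀ (by nlinarith) (by nlinarith)] at hslope
  linarith

/-- The zero-one law: both complements solve the fixed point equation of extinction. -/
lemma ae_mem_recurrent_of_mem_recurrent_univ (ν : Measure Bool) [IsProbabilityMeasure ν]
    (hν : 0 < ν.real {true}) (hcard : 2 ≤ Fintype.card (LevelWord d M 1)) (hA : MeasurableSet A)
    (hpos : 0 < percMeasure d M ν (recurrent A)) :
    ∀ᵐ ω ∂percMeasure d M ν, ω ∈ recurrent univ → ω ∈ recurrent A := by
  have hsub : recurrent A ⊆ recurrent univ := fun ω hω n =>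
    let ⟨w, hlen, hret, _⟩ := hω n
    ⟨w, hlen, hret, mem_univ _⟩
  have hfalse : ν.real {false} = 1 - ν.real {true} := by
    rw [← probReal_compl_eq_one_sub (measurableSet_singleton _)]
    congr 1
    ext b
    cases b <;> simp
  have hfix {B : Set (PercSpace d M)} (hB : MeasurableSet B) :
      (percMeasure d M ν).real (recurrent B)ᶜ =
        (ν.real {true} * (percMeasure d M ν).real (recurrent B)ᶜ + (1 - ν.real {true})) ^
          Fintype.card (LevelWord d M 1) := by
    have h := congrArg ENNReal.toReal (measure_compl_recurrent ν hB)
    rwa [ENNReal.toReal_pow, ENNReal.toReal_add (by finiteness) (by finiteness), ENNReal.toReal_mul,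
      ← measureReal_def, ← measureReal_def, ← measureReal_def, hfalse] at h
  have hreal : 0 < (percMeasure d M ν).real (recurrent A) :=
    ENNReal.toReal_pos hpos.ne' (measure_ne_top _ _)
  have heq := eq_of_eq_mul_add_pow hν measureReal_le_one hcard measureReal_nonneg
    (measureReal_mono (compl_subset_compl.2 hsub))
    (by linarith [probReal_compl_eq_one_sub (μ := percMeasure d M ν) (measurableSet_recurrent hA)])
    (hfix .univ) (hfix hA)
  rw [probReal_compl_eq_one_sub (measurableSet_recurrent hA),
    probReal_compl_eq_one_sub (measurableSet_recurrent .univ)] at heq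
  change recurrent univ ≤ᵐ[percMeasure d M ν] recurrent A
  rw [ae_le_set, ← measureReal_eq_zero_iff (by finiteness),
    measureReal_sdiff hsub (measurableSet_recurrent hA)]
  linarith

lemma perpetuallyHitting_subset_recurrent {m : ℕ} {ι : Type*} {s : Finset ι}
    {C : ι → Finset (LevelWord d M m)} (hm : 1 ≤ m) (hs : s.Nonempty) :
    perpetuallyHitting s C ⊆ recurrent (perpetuallyHitting s C) := by
  obtain ⟨i, hi⟩ := hs
  intro ω hω n
  induction n with
  | zero => exact ⟨[], le_rfl, retained_nil ω, hω⟩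
  | succ n ih =>
    obtain ⟨w, hlen, hret, hw⟩ := ih
    obtain ⟨v, -, hvret, hv⟩ := perpetuallyHitting_subset_hitting hw i hi
    refine ⟨w ++ v.1, ?_, (retained_append _ _ _).2 ⟨hret, hvret⟩, subtree_append ω w v.1 ▸ hv⟩
    rw [List.length_append, v.2]
    omega

end Recurrence

lemma exists_isLineNet_ae_mem_recurrent {M : ℕ} {K : ℝ} (ν : Measure Bool)
    [IsProbabilityMeasure ν] (hM : 2 ≤ M) (hν : 1 < ν.real {true} * M) (hK : 1 ≤ K) :
    ∃ (m : ℕ) (Λ : Finset (ℝ × ℝ)), 1 ≤ m ∧ IsLineNet M K m Λ ∧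
      ∀ᵐ ω ∂percMeasure 2 M ν, ω ∈ recurrent univ →
        ω ∈ recurrent (perpetuallyHitting Λ (crossedWords M m)) := by
  obtain ⟨m, Λ, N, q, hm, hq, hΛ, hVq, hcard⟩ := exists_frequent_crossings ν hν hK
  have hline : ((1, 1 / 2) : ℝ × ℝ) ∈ admissibleLines K :=
    ⟨inv_le_one_of_one_le₀ hK, hK, by norm_num, by norm_num⟩
  obtain ⟨L, hL, -⟩ := hΛ.2 _ hline
  have hν0 : 0 < ν.real {true} := pos_of_mul_pos_left (one_pos.trans hν) (Nat.cast_nonneg M)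
  have hletters : 2 ≤ Fintype.card (LevelWord 2 M 1) := by
    simp only [card_vector, Fintype.card_pi, Fintype.card_fin, Finset.prod_const, Finset.card_univ,
      pow_one]
    nlinarith
  refine ⟨m, Λ, hm, hΛ, ae_mem_recurrent_of_mem_recurrent_univ ν hν0 hletters
    measurableSet_perpetuallyHitting ?_⟩
  exact (measure_perpetuallyHitting_pos ν measurableSet_manyCrossings dependsOn_manyCrossings
    (fun ω hω => hω) hq hVq hcard).trans_le
      (measure_mono (perpetuallyHitting_subset_recurrent hm ⟨L, hL⟩))

section Cubes

variable {d M : ℕ}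

/-- The unit cube `[0,1]^d`. -/
def unitCube (d : ℕ) : Set (EuclideanSpace ℝ (Fin d)) := {x | ∀ i, 0 ≤ x i ∧ x i ≤ 1}

/-- The corner of the cube of `w` with the smallest coordinates. -/
def corner (w : List (Alpha d M)) : EuclideanSpace ℝ (Fin d) := WithLp.toLp 2 (wordBase d M w)

lemma corner_apply (w : List (Alpha d M)) (i : Fin d) : corner w i = wordBase d M w i := rfl

lemma mem_wordCube {w : List (Alpha d M)} {x : EuclideanSpace ℝ (Fin d)} :
    x ∈ wordCube d M w ↔
      ∀ i, wordBase d M w i ≤ x i ∧ x i ≤ wordBase d M w i + ((M : ℝ) ^ w.length)⁻¹ := by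
  simp only [wordCube, mem_ofPred_eq, zpow_neg, zpow_natCast]

lemma isCompact_unitCube : IsCompact (unitCube d) := by
  have heq : unitCube d =
      (EuclideanSpace.equiv (Fin d) ℝ).symm.toHomeomorph '' Set.pi univ fun _ => Icc 0 1 := by
    ext x
    constructor
    · exact fun hx => ⟨fun i => x i, fun i _ => hx i, rfl⟩
    · rintro ⟨y, hy, rfl⟩ i
      exact hy i (mem_univ i)
  rw [heq, Homeomorph.isCompact_image]
  exact isCompact_univ_pi fun _ => isCompact_Icc

lemma isClosed_wordCube (w : List (Alpha d M)) : IsClosed (wordCube d M w) := by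
  simp only [wordCube, Set.ofPred_forall, Set.ofPred_and]
  exact isClosed_iInter fun i =>
    (isClosed_le (by fun_prop) (by fun_prop)).inter (isClosed_le (by fun_prop) (by fun_prop))

lemma convex_wordCube (w : List (Alpha d M)) : Convex ℝ (wordCube d M w) := by
  intro x hx y hy a b ha hb hab i
  exact convex_Icc _ _ (hx i) (hy i) ha hb hab

lemma corner_mem_wordCube (w : List (Alpha d M)) : corner w ∈ wordCube d M w :=
  mem_wordCube.2 fun i => ⟨le_rfl, le_add_of_nonneg_right (by positivity)⟩

lemma wordCube_append_subset (w u : List (Alpha d M)) :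
    wordCube d M (w ++ u) ⊆ wordCube d M w := by
  intro x hx
  refine mem_wordCube.2 fun i => ?_
  have h := mem_wordCube.1 hx i
  rw [wordBase_append, List.length_append, pow_add, mul_inv] at h
  have hw : (0 : ℝ) ≤ ((M : ℝ) ^ w.length)⁻¹ := by positivity
  constructor
  · nlinarith [wordBase_nonneg u i]
  · nlinarith [wordBase_add_le_one u i]

lemma wordCube_subset_unitCube (w : List (Alpha d M)) : wordCube d M w ⊆ unitCube d := by
  intro x hx i
  have h := mem_wordCube.1 hx i
  exact ⟨(wordBase_nonneg w i).trans h.1, h.2.trans (wordBase_add_le_one w i)⟩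

lemma sum_apply_smul_single (x : EuclideanSpace ℝ (Fin d)) :
    ∑ i, x i • EuclideanSpace.single i (1 : ℝ) = x := by
  simpa using (EuclideanSpace.basisFun (Fin d) ℝ).sum_repr x

lemma norm_le_natCast_mul_of_abs_apply_le {x : EuclideanSpace ℝ (Fin d)} {r : ℝ}
    (h : ∀ i, |x i| ≤ r) : ‖x‖ ≤ d * r := by
  rw [← sum_apply_smul_single x]
  refine (norm_sum_le_of_le Finset.univ (f := fun i => x i • EuclideanSpace.single i (1 : ℝ))
    fun i _ => ?_ : _ ≤ ∑ _i : Fin d, r).trans (by simp)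
  simpa [norm_smul] using h i

lemma exists_nat_forall_mem_Icc_inv {X : Type*} [TopologicalSpace X] {S : Set X} (hS : IsCompact S)
    {g : X → ℝ} (hg : ContinuousOn g S) (hpos : ∀ x ∈ S, 0 < g x) :
    ∃ K : ℕ, 1 ≤ K ∧ ∀ x ∈ S, g x ∈ Icc (K : ℝ)⁻¹ K := by
  have hcont : ContinuousOn (fun x => max (g x) (g x)⁻¹) S :=
    hg.sup (hg.inv₀ fun x hx => (hpos x hx).ne')
  obtain ⟨B, hB⟩ := hS.bddAbove_image hcont
  obtain ⟨K, hK⟩ := exists_nat_ge (max B 1)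
  have hK1 : (1 : ℝ) ≤ K := (le_max_right _ _).trans hK
  refine ⟨K, by exact_mod_cast hK1, fun x hx => ?_⟩
  have hgK := (hB (mem_image_of_mem _ hx)).trans ((le_max_left _ _).trans hK)
  exact ⟨inv_le_of_inv_le₀ (hpos x hx) ((le_max_right _ _).trans hgK),
    (le_max_left _ _).trans hgK⟩

lemma exists_forall_dist_corner_le {Y : Type*} [PseudoMetricSpace Y] (hM : 2 ≤ M)
    {g : EuclideanSpace ℝ (Fin d) → Y} (hg : ContinuousOn g (unitCube d)) {ε : ℝ} (hε : 0 < ε) :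
    ∃ n : ℕ, ∀ w : List (Alpha d M), n ≤ w.length →
      ∀ x ∈ wordCube d M w, dist (g x) (g (corner w)) ≤ ε := by
  obtain ⟨δ, hδ, hunif⟩ := Metric.uniformContinuousOn_iff.1
    (isCompact_unitCube.uniformContinuousOn_of_continuous hg) ε hε
  have hM1 : (1 : ℝ) < M := by exact_mod_cast hM
  have hsmall : Filter.Tendsto (fun n : ℕ => d * ((M : ℝ) ^ n)⁻¹) Filter.atTop (nhds 0) := by
    simpa using (tendsto_pow_atTop_atTop_of_one_lt hM1).inv_tendsto_atTop.const_mul (d : ℝ)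
  obtain ⟨n, hn⟩ := (hsmall.eventually_lt_const hδ).exists
  refine ⟨n, fun w hw x hx => (hunif x (wordCube_subset_unitCube w hx) _
    (wordCube_subset_unitCube w (corner_mem_wordCube w)) ?_).le⟩
  calc dist x (corner w) = ‖x - corner w‖ := dist_eq_norm _ _
    _ ≤ d * ((M : ℝ) ^ w.length)⁻¹ := by
        refine norm_le_natCast_mul_of_abs_apply_le fun i => ?_
        have h := mem_wordCube.1 hx i
        rw [PiLp.sub_apply, corner_apply, abs_of_nonneg (by linarith)]
        linarith
    _ ≤ d * ((M : ℝ) ^ n)⁻¹ := by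
        gcongr
        exact hM1.le
    _ < δ := hn

lemma exists_forall_dist_corner_le_mul {Y : Type*} [PseudoMetricSpace Y] (hM : 2 ≤ M)
    {g : EuclideanSpace ℝ (Fin d) → Y} (hg : ContinuousOn g (unitCube d))
    {h : EuclideanSpace ℝ (Fin d) → ℝ} (hh : ContinuousOn h (unitCube d))
    (hpos : ∀ x ∈ unitCube d, 0 < h x) {ε : ℝ} (hε : 0 < ε) :
    ∃ n : ℕ, ∀ w : List (Alpha d M), n ≤ w.length →
      ∀ x ∈ wordCube d M w, dist (g x) (g (corner w)) ≤ ε * h (corner w) := by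
  obtain ⟨c, hc, hle⟩ := exists_nat_forall_mem_Icc_inv isCompact_unitCube hh hpos
  have hc0 : (0 : ℝ) < c := by exact_mod_cast hc
  obtain ⟨n, hn⟩ := exists_forall_dist_corner_le hM hg (mul_pos hε (inv_pos.2 hc0))
  refine ⟨n, fun w hw x hx => (hn w hw x hx).trans ?_⟩
  gcongr
  exact (hle _ (wordCube_subset_unitCube w (corner_mem_wordCube w))).1

end Cubes

section LimitSet

variable {d M : ℕ} {ω : PercSpace d M}

lemma isClosed_approx (n : ℕ) : IsClosed (approx d M ω n) :=
  ((List.finite_length_eq (Alpha d M) n).subset fun _ hw => hw.1).isClosed_biUnion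
    fun w _ => isClosed_wordCube w

lemma corner_mem_approx {w : List (Alpha d M)} (hw : Retained d M ω w) {n : ℕ}
    (hn : n ≤ w.length) : corner w ∈ approx d M ω n := by
  refine mem_biUnion ⟨List.length_take_of_le hn, hw.of_prefix (List.take_prefix n w)⟩ ?_
  have hcorner := corner_mem_wordCube w
  rw [← List.take_append_drop n w] at hcorner
  simpa using wordCube_append_subset _ _ hcorner

lemma percLimit_subset_unitCube : percLimit d M ω ⊆ unitCube d := by
  intro x hx
  obtain ⟨w, -, hw⟩ := mem_iUnion₂.1 (mem_iInter₂.1 hx 1 (le_refl 1))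
  exact wordCube_subset_unitCube w hw

lemma exists_mem_percLimit_tendsto_corner {w : ℕ → List (Alpha d M)} (hw : ∀ k, k ≤ (w k).length)
    (hret : ∀ k, Retained d M ω (w k)) :
    ∃ z ∈ percLimit d M ω, ∃ φ : ℕ → ℕ, StrictMono φ ∧
      Filter.Tendsto (fun k => corner (w (φ k))) Filter.atTop (nhds z) := by
  obtain ⟨z, -, φ, hφ, hz⟩ := isCompact_unitCube.tendsto_subseq (x := fun k => corner (w k))
    fun k => wordCube_subset_unitCube _ (corner_mem_wordCube (w k))
  refine ⟨z, mem_iInter₂.2 fun n _ => (isClosed_approx n).mem_of_tendsto hz ?_, φ, hφ, hz⟩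
  filter_upwards [Filter.eventually_ge_atTop n] with k hk
  exact corner_mem_approx (hret _) ((hk.trans (hφ.id_le k)).trans (hw _))

lemma percLimit_ne_empty_iff : percLimit d M ω ≠ ∅ ↔ ω ∈ recurrent univ := by
  rw [← nonempty_iff_ne_empty]
  constructor
  · rintro ⟨x, hx⟩ n
    obtain ⟨w, ⟨hlen, hret⟩, -⟩ := mem_iUnion₂.1 (mem_iInter₂.1 hx (n + 1) n.succ_pos)
    exact ⟨w, by omega, hret, mem_univ _⟩
  · intro h
    choose w hw hret _ using h
    obtain ⟨z, hz, -⟩ := exists_mem_percLimit_tendsto_corner hw hret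
    exact ⟨z, hz⟩

end LimitSet

section LevelSets

variable {M m : ℕ} {K t η : ℝ} {Λ : Finset (ℝ × ℝ)} {ω : PercSpace 2 M}
  {w₀ : List (Alpha 2 M)} {f : EuclideanSpace ℝ (Fin 2) → ℝ} {D : EuclideanSpace ℝ (Fin 2) →L[ℝ] ℝ}

/-- In the coordinates in which the cube of `w` is the unit square, the line that approximates the
level set `f = t` when `D` approximates the derivative of `f` on the cube. -/
def levelLine (f : EuclideanSpace ℝ (Fin 2) → ℝ) (D : EuclideanSpace ℝ (Fin 2) →L[ℝ] ℝ) (t : ℝ)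
    (w : List (Alpha 2 M)) : ℝ × ℝ :=
  (D (EuclideanSpace.single 0 1) / D (EuclideanSpace.single 1 1),
    (M : ℝ) ^ w.length * (t - f (corner w)) / D (EuclideanSpace.single 1 1))

lemma abs_levelLine_append_sub_le (hM : 0 < M) (hD : 0 < D (EuclideanSpace.single 1 1))
    (w v : List (Alpha 2 M)) (hη : 0 ≤ η) (hf : ∀ x ∈ wordCube 2 M w, DifferentiableAt ℝ f x)
    (hfD : ∀ x ∈ wordCube 2 M w, ‖fderiv ℝ f x - D‖ ≤ η * D (EuclideanSpace.single 1 1)) :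
    |(levelLine f D t (w ++ v)).2 - (renormLine v (levelLine f D t w)).2| ≤
      2 * η * (M : ℝ) ^ v.length := by
  have hcorner (i : Fin 2) : (corner (w ++ v) - corner w) i =
      ((M : ℝ) ^ w.length)⁻¹ * wordBase 2 M v i := by
    rw [PiLp.sub_apply, corner_apply, corner_apply, wordBase_append, add_sub_cancel_left]
  have hnorm : ‖corner (w ++ v) - corner w‖ ≤ 2 * ((M : ℝ) ^ w.length)⁻¹ := by
    refine norm_le_natCast_mul_of_abs_apply_le fun i => ?_
    have hv := wordBase_nonneg v i
    rw [hcorner, abs_of_nonneg (by positivity)]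
    exact mul_le_of_le_one_right (by positivity) (wordBase_le_one v i)
  have hlinear := (convex_wordCube w).norm_image_sub_le_of_norm_fderiv_le' hf hfD
    (corner_mem_wordCube w) (wordCube_append_subset w v (corner_mem_wordCube _))
  have hDcorner : D (corner (w ++ v) - corner w) = ((M : ℝ) ^ w.length)⁻¹ *
      (wordBase 2 M v 0 * D (EuclideanSpace.single 0 1) +
        wordBase 2 M v 1 * D (EuclideanSpace.single 1 1)) := by
    rw [← sum_apply_smul_single (corner (w ++ v) - corner w)]
    simp only [Fin.sum_univ_two, map_add, map_smul, hcorner, smul_eq_mul]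
    ring
  have hdiff : (levelLine f D t (w ++ v)).2 - (renormLine v (levelLine f D t w)).2 =
      -((M : ℝ) ^ w.length * (M : ℝ) ^ v.length / D (EuclideanSpace.single 1 1)) *
        (f (corner (w ++ v)) - f (corner w) - D (corner (w ++ v) - corner w)) := by
    simp only [levelLine, renormLine, hDcorner, List.length_append, pow_add]
    field_simp [hD.ne']
    ring
  rw [hdiff, abs_mul, abs_neg, abs_of_pos (by positivity), ← Real.norm_eq_abs (_ - _)]
  calc (M : ℝ) ^ w.length * (M : ℝ) ^ v.length / D (EuclideanSpace.single 1 1) *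
        ‖f (corner (w ++ v)) - f (corner w) - D (corner (w ++ v) - corner w)‖
      ≤ (M : ℝ) ^ w.length * (M : ℝ) ^ v.length / D (EuclideanSpace.single 1 1) *
          (η * D (EuclideanSpace.single 1 1) * (2 * ((M : ℝ) ^ w.length)⁻¹)) := by
        gcongr
        exact hlinear.trans (by gcongr)
    _ = 2 * η * (M : ℝ) ^ v.length := by field_simp [hD.ne']

lemma mem_lineWindow_of_abs_snd_sub_le {δ ε : ℝ} {L L' : ℝ × ℝ} (hL : L ∈ lineWindow (δ + ε))
    (hfst : L'.1 = L.1) (hsnd : |L'.2 - L.2| ≤ ε * L.1) : L' ∈ lineWindow δ := by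
  obtain ⟨hlow, hup⟩ := abs_le.1 hsnd
  exact ⟨by rw [hfst]; linarith [hL.1], by rw [hfst]; linarith [hL.2]⟩

/-- Here `ℓ` only has to follow the renormalization of lines up to a small error: the slack between
the windows `3 / 8` and `1 / 4` absorbs it at each step, so that errors do not accumulate. -/
lemma exists_retained_mem_admissibleLines (hM : 0 < M) (hK : 0 < K) (hm : 1 ≤ m)
    (hΛ : IsLineNet M K m Λ) {ℓ : List (Alpha 2 M) → ℝ × ℝ}
    (hfst : ∀ w u, (ℓ w).1 = (ℓ u).1)
    (hsnd : ∀ w, w₀ <+: w → ∀ v : LevelWord 2 M m,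
      |(ℓ (w ++ v.1)).2 - (renormLine v.1 (ℓ w)).2| ≤ (8 * K)⁻¹)
    (hret : Retained 2 M ω w₀) (hline : ℓ w₀ ∈ admissibleLines K)
    (hhit : subtree w₀ ω ∈ perpetuallyHitting Λ (crossedWords M m)) (k : ℕ) :
    ∃ w, w₀ <+: w ∧ k ≤ w.length ∧ Retained 2 M ω w ∧ ℓ w ∈ admissibleLines K ∧
      subtree w ω ∈ perpetuallyHitting Λ (crossedWords M m) := by
  induction k with
  | zero => exact ⟨w₀, List.prefix_rfl, Nat.zero_le _, hret, hline, hhit⟩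
  | succ k ih =>
    obtain ⟨w, hpre, hlen, hwret, hwline, hwhit⟩ := ih
    obtain ⟨L, hL, hdist⟩ := hΛ.2 _ hwline
    obtain ⟨v, hv, hvret, hvhit⟩ := perpetuallyHitting_subset_hitting hwhit L hL
    have hwindow := renormLine_mem_lineWindow_of_dist_le hM hK hv hwline.1 hdist
    have hK8 : (8 * K)⁻¹ ≤ 1 / 8 * (ℓ w).1 := by
      rw [mul_inv]
      linarith [hwline.1]
    refine ⟨w ++ v.1, hpre.trans (List.prefix_append _ _), ?_,
      (retained_append _ _ _).2 ⟨hwret, hvret⟩, ?_, subtree_append ω w v.1 ▸ hvhit⟩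
    · rw [List.length_append, v.2]
      omega
    · rw [admissibleLines, mem_ofPred_eq, hfst _ w]
      exact ⟨hwline.1, hwline.2.1, mem_lineWindow_of_abs_snd_sub_le (L := renormLine v.1 (ℓ w))
        (by convert hwindow using 1; norm_num) (hfst _ _) ((hsnd w hpre v).trans hK8)⟩

lemma tendsto_apply_corner_of_levelLine_mem (hM : 2 ≤ M) (hK : 0 < K)
    (hD : 0 < D (EuclideanSpace.single 1 1))
    {w : ℕ → List (Alpha 2 M)} (hw : ∀ k, k ≤ (w k).length)
    (hline : ∀ k, levelLine f D t (w k) ∈ admissibleLines K) :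
    Filter.Tendsto (fun k => f (corner (w k))) Filter.atTop (nhds t) := by
  set b := D (EuclideanSpace.single 1 1)
  have hscale : Filter.Tendsto (fun k => ((M : ℝ) ^ (w k).length)⁻¹) Filter.atTop (nhds 0) :=
    ((tendsto_pow_atTop_atTop_of_one_lt (by exact_mod_cast hM : (1 : ℝ) < M)).comp
      (Filter.tendsto_atTop_mono hw Filter.tendsto_id)).inv_tendsto_atTop
  have hgap (k : ℕ) : t - f (corner (w k)) =
      (levelLine f D t (w k)).2 * b * ((M : ℝ) ^ (w k).length)⁻¹ := by
    change _ = (M : ℝ) ^ (w k).length * (t - f (corner (w k))) / b * b * _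
    field_simp
  have hintercept (k : ℕ) : (levelLine f D t (w k)).2 ∈ Icc 0 (1 + K) := by
    obtain ⟨hlow, hup, hwindow⟩ := hline k
    have hslope : 0 ≤ (levelLine f D t (w k)).1 := (inv_pos.2 hK).le.trans hlow
    exact ⟨by linarith [hwindow.1], by linarith [hwindow.2]⟩
  have hgap_tendsto : Filter.Tendsto (fun k => t - f (corner (w k))) Filter.atTop (nhds 0) := by
    refine squeeze_zero (g := fun k => (1 + K) * b * ((M : ℝ) ^ (w k).length)⁻¹)
      (fun k => ?_) (fun k => ?_) (by simpa using hscale.const_mul ((1 + K) * b))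
    · rw [hgap]
      exact mul_nonneg (mul_nonneg (hintercept k).1 hD.le) (by positivity)
    · rw [hgap]
      gcongr
      exact (hintercept k).2
  simpa using hgap_tendsto.const_sub t

lemma mem_image_percLimit_of_levelLine_mem (hM : 2 ≤ M) (hK : 0 < K) (hm : 1 ≤ m)
    (hΛ : IsLineNet M K m Λ) (hret : Retained 2 M ω w₀)
    (hhit : subtree w₀ ω ∈ perpetuallyHitting Λ (crossedWords M m))
    (hf : ∀ x ∈ unitCube 2, DifferentiableAt ℝ f x) (hD : 0 < D (EuclideanSpace.single 1 1))
    (hη : 0 ≤ η)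
    (hfD : ∀ x ∈ wordCube 2 M w₀, ‖fderiv ℝ f x - D‖ ≤ η * D (EuclideanSpace.single 1 1))
    (hηK : 2 * η * (M : ℝ) ^ m ≤ (8 * K)⁻¹)
    (ht : levelLine f D t w₀ ∈ admissibleLines K) : t ∈ f '' percLimit 2 M ω := by
  have hchain := exists_retained_mem_admissibleLines (by omega) hK hm hΛ (ℓ := levelLine f D t)
    (fun _ _ => rfl) (fun w hw v => ?_) hret ht hhit
  · choose w _ hlen hwret hline _ using hchain
    obtain ⟨z, hz, φ, hφ, hlim⟩ := exists_mem_percLimit_tendsto_corner hlen hwret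
    have hfz := (hf z (percLimit_subset_unitCube hz)).continuousAt.tendsto.comp hlim
    exact ⟨z, hz, tendsto_nhds_unique hfz
      ((tendsto_apply_corner_of_levelLine_mem hM hK hD hlen hline).comp hφ.tendsto_atTop)⟩
  · obtain ⟨u, rfl⟩ := hw
    have h := abs_levelLine_append_sub_le (t := t) (by omega) hD (w₀ ++ u) v.1 hη
      (fun x hx => hf x (wordCube_subset_unitCube _ hx))
      (fun x hx => hfD x (wordCube_append_subset _ _ hx))
    rw [v.2] at h
    exact h.trans hηK

lemma exists_Ioo_levelLine_mem_admissibleLines (hM : 0 < M) (hK : 0 < K)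
    (hD : 0 < D (EuclideanSpace.single 1 1))
    (hslope : K⁻¹ ≤ D (EuclideanSpace.single 0 1) / D (EuclideanSpace.single 1 1))
    (hslope' : D (EuclideanSpace.single 0 1) / D (EuclideanSpace.single 1 1) ≤ K)
    (w : List (Alpha 2 M)) :
    ∃ a b : ℝ, a < b ∧ ∀ t ∈ Ioo a b, levelLine f D t w ∈ admissibleLines K := by
  set s := D (EuclideanSpace.single 0 1) / D (EuclideanSpace.single 1 1)
  have hs : 0 < s := (inv_pos.2 hK).trans_le hslope
  have hscale : 0 < D (EuclideanSpace.single 1 1) / (M : ℝ) ^ w.length := by positivity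
  refine ⟨f (corner w) + D (EuclideanSpace.single 1 1) / M ^ w.length * (s / 4),
    f (corner w) + D (EuclideanSpace.single 1 1) / M ^ w.length * (1 + 3 * s / 4), by
      gcongr; linarith, fun t ht => ⟨hslope, hslope', ?_⟩⟩
  have hintercept : (levelLine f D t w).2 =
      (t - f (corner w)) / (D (EuclideanSpace.single 1 1) / M ^ w.length) := by
    simp only [levelLine]
    field_simp
  rw [lineWindow, mem_ofPred_eq, hintercept, le_div_iff₀ hscale, div_le_iff₀ hscale]
  change 1 / 4 * s * _ ≤ _ ∧ _ ≤ (1 + (1 - 1 / 4) * s) * _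
  constructor <;> linarith [ht.1, ht.2]

lemma exists_Ioo_subset_image_percLimit (hM : 2 ≤ M)
    (hω : ∀ K : ℕ, 1 ≤ K → ∃ (m : ℕ) (Λ : Finset (ℝ × ℝ)), 1 ≤ m ∧ IsLineNet M K m Λ ∧
      ω ∈ recurrent (perpetuallyHitting Λ (crossedWords M m)))
    {U : Set (EuclideanSpace ℝ (Fin 2))} (hU : IsOpen U) (hsq : unitCube 2 ⊆ U)
    (hf : ContDiffOn ℝ 1 f U)
    (hpos : ∀ x ∈ U, ∀ i : Fin 2, 0 < fderiv ℝ f x (EuclideanSpace.single i 1)) :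
    ∃ a b : ℝ, a < b ∧ Ioo a b ⊆ f '' percLimit 2 M ω := by
  have hf' : ContinuousOn (fderiv ℝ f) (unitCube 2) :=
    (hf.continuousOn_fderiv_of_isOpen hU le_rfl).mono hsq
  have hdiff (x) (hx : x ∈ unitCube 2) : DifferentiableAt ℝ f x :=
    (hf.differentiableOn one_ne_zero).differentiableAt (hU.mem_nhds (hsq hx))
  have hpartial (i : Fin 2) :
      ContinuousOn (fun x => fderiv ℝ f x (EuclideanSpace.single i 1)) (unitCube 2) :=
    hf'.clm_apply continuousOn_const
  obtain ⟨K, hK, hslope⟩ := exists_nat_forall_mem_Icc_inv isCompact_unitCube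
    ((hpartial 0).div (hpartial 1) fun x hx => (hpos x (hsq hx) 1).ne')
    fun x hx => div_pos (hpos x (hsq hx) 0) (hpos x (hsq hx) 1)
  obtain ⟨m, Λ, hm, hΛ, hrec⟩ := hω K hK
  have hK0 : (0 : ℝ) < K := by exact_mod_cast hK
  have hη : 0 < (16 * K * (M : ℝ) ^ m)⁻¹ := by positivity
  obtain ⟨n, hn⟩ := exists_forall_dist_corner_le_mul hM hf' (hpartial 1)
    (fun x hx => hpos x (hsq hx) 1) hη
  obtain ⟨w, hlen, hret, hhit⟩ := hrec n
  have hcorner : corner w ∈ unitCube 2 := wordCube_subset_unitCube w (corner_mem_wordCube w)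
  have hD := hpos _ (hsq hcorner) 1
  obtain ⟨a, b, hab, hline⟩ := exists_Ioo_levelLine_mem_admissibleLines (f := f) (by omega) hK0 hD
    (hslope _ hcorner).1 (hslope _ hcorner).2 w
  refine ⟨a, b, hab, fun t ht => mem_image_percLimit_of_levelLine_mem hM hK0 hm hΛ hret hhit hdiff
    hD hη.le (fun x hx => (dist_eq_norm _ _).symm.trans_le (hn w hlen x hx)) ?_ (hline t ht)⟩
  exact le_of_eq (by field_simp; norm_num)

end LevelSets

/-- if `M⁻¹ < p < 1` then, conditioned on `E ≠ ∅`, almost surely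
every `C¹` function on a neighborhood of the unit square with strictly positive
partial derivatives maps `E` onto a set containing an interval. -/
theorem smooth_image_contains_interval
    (M : ℕ) (hM : 2 ≤ M) (p : ℝ) (hp0 : ((M : ℝ))⁻¹ < p) (hp1 : p < 1)
    (P : Measure (PercSpace 2 M)) (hP : IsBernoulliPerc 2 M p P) :
    ∀ᵐ ω ∂(ProbabilityTheory.cond P {ω | percLimit 2 M ω ≠ ∅}),
      ∀ (U : Set (EuclideanSpace ℝ (Fin 2))) (f : EuclideanSpace ℝ (Fin 2) → ℝ),
        IsOpen U → {x : EuclideanSpace ℝ (Fin 2) | ∀ i, 0 ≤ x i ∧ x i ≤ 1} ⊆ U →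
        ContDiffOn ℝ 1 f U →
        (∀ x ∈ U, ∀ i : Fin 2, 0 < fderiv ℝ f x (EuclideanSpace.single i 1)) →
        ∃ a b : ℝ, a < b ∧ Set.Ioo a b ⊆ f '' percLimit 2 M ω := by
  have hM0 : (0 : ℝ) < M := by positivity
  lift p to unitInterval using ⟨(inv_pos.2 hM0).le.trans hp0.le, hp1.le⟩
  obtain rfl := hP.eq_percMeasure
  have hν : 1 < (bernoulliMeasure true false p).real {true} * M := by
    rw [bernoulliMeasure_real_apply_of_mem_of_notMem _ (by simp) (by simp) (by simp)]
    exact (inv_lt_iff_one_lt_mul₀ hM0).1 hp0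
  have hrec : ∀ᵐ ω ∂percMeasure 2 M (bernoulliMeasure true false p), ∀ K : ℕ, 1 ≤ K →
      ω ∈ recurrent univ → ∃ (m : ℕ) (Λ : Finset (ℝ × ℝ)), 1 ≤ m ∧ IsLineNet M K m Λ ∧
        ω ∈ recurrent (perpetuallyHitting Λ (crossedWords M m)) := by
    refine ae_all_iff.2 fun K => Filter.eventually_imp_distrib_left.2 fun hK => ?_
    obtain ⟨m, Λ, hm, hΛ, hae⟩ := exists_isLineNet_ae_mem_recurrent (K := K) _ hM hν
      (by exact_mod_cast hK)
    exact hae.mono fun ω hω hne => ⟨m, Λ, hm, hΛ, hω hne⟩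
  simp only [percLimit_ne_empty_iff, ofPred_mem_eq]
  refine Measure.ae_smul_measure
    ((ae_restrict_iff' (measurableSet_recurrent MeasurableSet.univ)).2 ?_) _
  filter_upwards [hrec] with ω hω hne U f hU hsq hf hpos
  exact exists_Ioo_subset_image_percLimit hM
    (fun K hK => hω K hK hne) hU hsq hf hpos
end
end

section
/- Let d ≥ 1 and let E⁽¹⁾,…,E⁽ᵈ⁾ be independent one-dimensional fractal percolations with common scale M ≥ 2 and probabilities p₁,…,p_d ∈ (0,1] satisfying ∏_{i=1}^d p_i < M^{-(d−1)}. Fix a unit vector a = (a₁,…,a_d) with all a_i > 0 and fix ε > 0. Then there exists a constant C̃ such that, for almost every realization with all E⁽ⁱ⁾ nonempty, there is N such that for all n ≥ N and every t ∈ ℝ, the hyperplane H_t intersects at most C̃·n^{(1+ε)(d−1)} cubes K_n(x₁,…,x_d) of Ẽ_n. -/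
open MeasureTheory Set ENNReal ProbabilityTheory Real

noncomputable section

/-- Words indexing `M`-adic subintervals of `[0,1]`. -/
abbrev Word1 (M : ℕ) : Type := {w : List (Fin M) // w ≠ []}

/-- Sample space of a one-dimensional fractal percolation. -/
abbrev Perc1 (M : ℕ) : Type := Word1 M → Bool

/-- `P` is the joint distribution of `d` independent one-dimensional fractal
percolations with probabilities `p i`: all labels are independent, and the labels
of the `i`-th percolation are Bernoulli(`p i`). -/
def IsIndepBernoulli1 (d M : ℕ) (p : Fin d → ℝ) (P : Measure (Fin d → Perc1 M)) : Prop :=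
  IsProbabilityMeasure P ∧
    ∀ (S : Finset (Fin d × Word1 M)) (b : Fin d × Word1 M → Bool),
      P {ω | ∀ q ∈ S, ω q.1 q.2 = b q} =
        ∏ q ∈ S, if b q then ENNReal.ofReal (p q.1) else ENNReal.ofReal (1 - p q.1)

/-- A level-`w.length` interval is retained iff its word and every nonempty
prefix of its word carry label 1. -/
def Retained1 (M : ℕ) (ω : Perc1 M) (w : List (Fin M)) : Prop :=
  ∀ (u : List (Fin M)) (hu : u ≠ []), u <+: w → ω ⟨u, hu⟩ = true

/-- Left endpoint of the `M`-adic interval indexed by the word `w`. -/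
def base1 (M : ℕ) (w : List (Fin M)) : ℝ :=
  ∑ j : Fin w.length, (w.get j : ℝ) * (M : ℝ) ^ (-(j : ℤ) - 1)

/-- The closed `M`-adic interval of level `w.length` indexed by `w`. -/
def interval1 (M : ℕ) (w : List (Fin M)) : Set ℝ :=
  Icc (base1 M w) (base1 M w + (M : ℝ) ^ (-(w.length : ℤ)))

/-- `E_n`, the union of the retained level-`n` intervals. -/
def approx1 (M : ℕ) (ω : Perc1 M) (n : ℕ) : Set ℝ :=
  ⋃ w ∈ {w : List (Fin M) | w.length = n ∧ Retained1 M ω w}, interval1 M w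

/-- The one-dimensional fractal percolation set `E = ⋂_{n ≥ 1} E_n`. -/
def limit1 (M : ℕ) (ω : Perc1 M) : Set ℝ :=
  ⋂ n ∈ {n : ℕ | 1 ≤ n}, approx1 M ω n

/-- The hyperplane `H_t = {y : a ⬝ y = t}`. -/
def Hplane (d : ℕ) (a : Fin d → ℝ) (t : ℝ) : Set (EuclideanSpace ℝ (Fin d)) :=
  {y | ∑ i, a i * y i = t}

/-- The cube of `Ẽ_n` indexed by the `d`-tuple of words `w`. -/
def prodCube (d M : ℕ) (w : Fin d → List (Fin M)) : Set (EuclideanSpace ℝ (Fin d)) :=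
  {x | ∀ i, x i ∈ interval1 M (w i)}

/-!
Index the level-`n` boxes by their integer corners in units of `M⁻ⁿ`: a hyperplane meets only boxes
whose corners lie in a window of fixed width for the linear form `a`, so it suffices to count the
retained boxes in windows, uniformly over the windows that start at one of the `M ^ (n d)` corners.

Let `S` be the set of boxes of a window at level `N`. Since `q = M ^ (d - 1) ∏ pᵢ < 1`, the expected
number of retained boxes of `S` is bounded. For large deviations, reveal the labels level by level
and, within a level, coordinate by coordinate. One label decides about a slice of `S`. If, given the
labels revealed so far, at most `δ / c` boxes of each slice are expected to be retained, then
revealing the labels of one coordinate at one level raises the exponential moment of order `c` to at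
most that of order `c exp δ`. The boxes of a slice that are alive at level `n` are controlled by the
retained boxes of the `(d - 1)`-dimensional percolation obtained by dropping one coordinate; by
induction on the dimension there are `O(N ^ (d - 2))` of these in any window, which makes the slice
`O(N ^ (d - 2) q ^ (N - n))`. The errors are summable in `n`, so an exponential moment of order
`c ≍ N ^ (2 - d)` stays bounded. By Markov's inequality, a window has more than `C N ^ (d - 1)`
retained boxes with probability at most `exp (1 - c C N ^ (d - 1))`, which beats the number of
windows for large `C`, and the Borel–Cantelli lemma concludes. If `M pᵢ < 1` for some `i` then the
induction hypothesis is not available, but the `i`-th percolation dies out.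
-/

/-! ### Words as numbers -/

section Words

variable {M : ℕ}

theorem base1_append_singleton (w : List (Fin M)) (c : Fin M) :
    base1 M (w ++ [c]) = base1 M w + (c : ℝ) * (M : ℝ) ^ (-(w.length : ℤ) - 1) := by
  have base1_eq_sum_range (v : List (Fin M)) : base1 M v =
      ∑ j ∈ Finset.range v.length,
        ((v[j]?).map fun a : Fin M => (a : ℝ)).getD 0 * (M : ℝ) ^ (-(j : ℤ) - 1) := by
    rw [Finset.sum_range, base1]
    exact Finset.sum_congr rfl fun j _ => by simp
  rw [base1_eq_sum_range, base1_eq_sum_range, List.length_append, List.length_singleton,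
    Finset.sum_range_succ]
  congr 1
  · refine Finset.sum_congr rfl fun j hj => ?_
    rw [List.getElem?_append_left (Finset.mem_range.1 hj)]
  · simp

theorem Retained1.of_prefix {ω : Perc1 M} {u w : List (Fin M)} (h : Retained1 M ω w)
    (huw : u <+: w) : Retained1 M ω u :=
  fun v hv hvu => h v hv (hvu.trans huw)

theorem retained1_nil (ω : Perc1 M) : Retained1 M ω [] :=
  fun _ hu h => absurd (List.prefix_nil.1 h) hu

theorem retained1_concat {ω : Perc1 M} {w : List (Fin M)} {c : Fin M} :
    Retained1 M ω (w ++ [c]) ↔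
      Retained1 M ω w ∧ ω ⟨w ++ [c], List.concat_ne_nil c w⟩ = true := by
  refine ⟨fun h => ⟨h.of_prefix (List.prefix_append _ _), h _ _ List.prefix_rfl⟩, ?_⟩
  rintro ⟨hw, hlabel⟩ u hu hprefix
  rcases List.prefix_concat_iff.1 hprefix with rfl | h
  exacts [hlabel, hw u hu h]

theorem retained1_congr {ω ω' : Perc1 M} {w : List (Fin M)}
    (h : ∀ q : Word1 M, q.1.length ≤ w.length → ω q = ω' q) :
    Retained1 M ω w ↔ Retained1 M ω' w :=
  forall₃_congr fun u hu hprefix => by rw [h ⟨u, hu⟩ hprefix.length_le]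

theorem finite_setOf_word1_length_le (n : ℕ) : {q : Word1 M | q.1.length ≤ n}.Finite :=
  (List.finite_length_le (Fin M) n).preimage Subtype.val_injective.injOn

theorem div_pow_sub_mem_range {N n x : ℕ} (hn : n ≤ N) (hx : x < M ^ N) :
    x / M ^ (N - n) ∈ Finset.range (M ^ n) := by
  refine Finset.mem_range.2 (Nat.div_lt_of_lt_mul ?_)
  rwa [← pow_add, Nat.sub_add_cancel hn]

variable [NeZero M]

variable (M) in
/-- The word formed by the last `n` base-`M` digits of `x`, most significant digit first. It turns
level-`n` intervals into numbers below `M ^ n`, and passing to the ancestor into division by `M`. -/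
def digitWord : ℕ → ℕ → List (Fin M)
  | 0, _ => []
  | n + 1, x => digitWord n (x / M) ++ [Fin.ofNat M x]

@[simp]
theorem length_digitWord (n x : ℕ) : (digitWord M n x).length = n := by
  induction n generalizing x with
  | zero => rfl
  | succ n ih => simp [digitWord, ih]

variable (M) in
/-- `digitWord M (n + 1) x` as an index of a label. -/
def digitNode (n x : ℕ) : Word1 M :=
  ⟨digitWord M (n + 1) x, List.concat_ne_nil _ _⟩

theorem length_digitNode (n x : ℕ) : (digitNode M n x).1.length = n + 1 :=
  length_digitWord (n + 1) x

theorem base1_digitWord {n x : ℕ} (hx : x < M ^ n) :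
    base1 M (digitWord M n x) * (M : ℝ) ^ n = x := by
  have hM : (M : ℝ) ≠ 0 := NeZero.ne _
  induction n generalizing x with
  | zero =>
    obtain rfl : x = 0 := by simpa using hx
    rw [digitWord, base1, Finset.sum_eq_zero fun j _ => j.elim0, zero_mul, Nat.cast_zero]
  | succ n ih =>
    have hlast : (M : ℝ) ^ (-(n : ℤ) - 1) * ((M : ℝ) ^ n * M) = 1 := by
      rw [← pow_succ, ← zpow_natCast, ← zpow_add₀ hM]
      simp
    have hinit := ih (Nat.div_lt_of_lt_mul (by rwa [pow_succ'] at hx))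
    rw [digitWord, base1_append_singleton, length_digitWord, add_mul, pow_succ,
      mul_assoc _ _ (_ * _), hlast, ← mul_assoc, hinit, mul_one, Fin.val_ofNat]
    exact_mod_cast Nat.div_add_mod' x M

theorem digitWord_injOn (n : ℕ) : InjOn (digitWord M n) (Iio (M ^ n)) := fun x hx y hy h => by
  exact_mod_cast (base1_digitWord hx).symm.trans (h ▸ base1_digitWord hy)

theorem digitNode_injOn (n : ℕ) : InjOn (digitNode M n) (Iio (M ^ (n + 1))) :=
  fun _ hx _ hy h => digitWord_injOn (n + 1) hx hy (congrArg Subtype.val h)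

theorem exists_digitWord_eq (w : List (Fin M)) :
    ∃ x < M ^ w.length, digitWord M w.length x = w := by
  induction w using List.reverseRecOn with
  | nil => exact ⟨0, by simp, rfl⟩
  | append_singleton w c ih =>
    obtain ⟨x, hx, hxw⟩ := ih
    have hdiv : (M * x + c) / M = x := by
      rw [Nat.mul_add_div (NeZero.pos M), Nat.div_eq_of_lt c.isLt, add_zero]
    rw [List.length_append, List.length_singleton]
    refine ⟨M * x + c, ?_, ?_⟩
    · calc M * x + c < M * (x + 1) := by rw [mul_add_one]; exact Nat.add_lt_add_left c.isLt _
        _ ≤ M ^ (w.length + 1) := by rw [pow_succ']; exact Nat.mul_le_mul_left _ hx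
    · rw [digitWord, hdiv, hxw]
      congr 2
      ext
      simp [Nat.mod_eq_of_lt c.isLt]

theorem digitWord_div_pow_prefix (n m x : ℕ) :
    digitWord M n (x / M ^ m) <+: digitWord M (n + m) x := by
  induction m generalizing x with
  | zero => simp
  | succ m ih =>
    rw [pow_succ', ← Nat.div_div_eq_div_mul]
    exact (ih (x / M)).trans (List.prefix_append _ _)

theorem retained1_digitWord_succ {ω : Perc1 M} {n x : ℕ} :
    Retained1 M ω (digitWord M (n + 1) x) ↔
      Retained1 M ω (digitWord M n (x / M)) ∧ ω (digitNode M n x) = true :=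
  retained1_concat

end Words

/-! ### Bernoulli fields -/

section BernoulliField

variable {κ α β : Type*} {p : κ → ℝ} {μ : Measure (κ → Bool)}

theorem measurableSet_setOf_eval_eq (q : κ) (b : Bool) : MeasurableSet {η : κ → Bool | η q = b} :=
  measurableSet_eq_fun (measurable_pi_apply q) measurable_const

theorem iIndepFun_eval_of_measure_forall_eq_true
    (h : ∀ S : Finset κ, μ {η | ∀ q ∈ S, η q = true} = ∏ q ∈ S, μ {η | η q = true}) :
    iIndepFun (fun q η => η q) μ := by
  have hsets : iIndepSet (fun q : κ => {η : κ → Bool | η q = true}) μ := by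
    refine (iIndepSet_iff_meas_biInter fun q => measurableSet_setOf_eval_eq q true).2 fun S => ?_
    rw [← h S]
    congr 1
    ext η
    simp
  have hind := (hsets.iIndepFun_indicator (β := ℕ)).comp (fun _ n => decide (n = 1))
    fun _ => measurable_of_countable _
  convert hind using 2 with q
  ext η
  simp [Set.indicator_apply]

theorem dependsOn_comp₂ {γ δ : Type*} {S : Set κ} {f : (κ → Bool) → β} {g : (κ → Bool) → γ}
    (hf : DependsOn f S) (hg : DependsOn g S) (φ : β → γ → δ) :
    DependsOn (fun η => φ (f η) (g η)) S :=
  fun _ _ h => congrArg₂ φ (hf h) (hg h)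

theorem measurable_of_dependsOn [MeasurableSpace β] [Nonempty β] {S : Set κ}
    (hS : S.Finite) {f : (κ → Bool) → β} (hf : DependsOn f S) : Measurable f := by
  obtain ⟨g, rfl⟩ := dependsOn_iff_exists_comp.1 hf
  have := hS.to_subtype
  exact (measurable_of_countable g).comp (measurable_pi_lambda _ fun q => measurable_pi_apply _)

theorem integrable_of_dependsOn [IsFiniteMeasure μ] {S : Set κ} (hS : S.Finite)
    {f : (κ → Bool) → ℝ} (hf : DependsOn f S) : Integrable f μ := by
  have hmeas := measurable_of_dependsOn hS hf
  obtain ⟨g, rfl⟩ := dependsOn_iff_exists_comp.1 hf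
  have := hS.to_subtype
  obtain ⟨C, hC⟩ := (Set.finite_range fun r => ‖g r‖).bddAbove
  exact .of_bound hmeas.aestronglyMeasurable C (.of_forall fun η => hC ⟨_, rfl⟩)

/-- Under `μ` the labels `η q`, `q : κ`, are independent, and `η q` is Bernoulli(`p q`). -/
structure IsBernoulliField (p : κ → ℝ) (μ : Measure (κ → Bool)) : Prop where
  iIndepFun_eval : iIndepFun (fun q η => η q) μ
  real_setOf_eq_true (q : κ) : μ.real {η | η q = true} = p q

namespace IsBernoulliField

theorem isProbabilityMeasure (hμ : IsBernoulliField p μ) : IsProbabilityMeasure μ :=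
  hμ.iIndepFun_eval.isProbabilityMeasure

theorem nonneg (hμ : IsBernoulliField p μ) (q : κ) : 0 ≤ p q :=
  hμ.real_setOf_eq_true q ▸ measureReal_nonneg

theorem le_one (hμ : IsBernoulliField p μ) (q : κ) : p q ≤ 1 :=
  have := hμ.isProbabilityMeasure
  hμ.real_setOf_eq_true q ▸ measureReal_le_one

theorem integral_ite (hμ : IsBernoulliField p μ) {S : Set κ} (hS : S.Finite) {q : κ} (hq : q ∉ S)
    {f : (κ → Bool) → ℝ} (hf : DependsOn f S) :
    ∫ η, (if η q = true then f η else 0) ∂μ = p q * ∫ η, f η ∂μ := by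
  have hlabel : Measurable fun b : Bool => if b = true then (1 : ℝ) else 0 :=
    measurable_of_countable _
  have hind : IndepFun (fun η : κ → Bool => if η q = true then (1 : ℝ) else 0) f μ := by
    obtain ⟨g, rfl⟩ := dependsOn_iff_exists_comp.1 hf
    lift S to Finset κ using hS
    exact (hμ.iIndepFun_eval.indepFun_finset {q} S (by simpa using hq) measurable_pi_apply).comp
      (φ := fun r => if r ⟨q, Finset.mem_singleton_self q⟩ = true then (1 : ℝ) else 0)
      (measurable_of_countable _) (measurable_of_countable g)
  calc ∫ η, (if η q = true then f η else 0) ∂μ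
      = ∫ η, (if η q = true then (1 : ℝ) else 0) * f η ∂μ := by
        simp only [ite_mul, one_mul, zero_mul]
    _ = (∫ η, (if η q = true then (1 : ℝ) else 0) ∂μ) * ∫ η, f η ∂μ :=
        hind.integral_fun_mul_eq_mul_integral
          (hlabel.comp (measurable_pi_apply q)).aestronglyMeasurable
          (measurable_of_dependsOn hS hf).aestronglyMeasurable
    _ = p q * ∫ η, f η ∂μ := by
        rw [← hμ.real_setOf_eq_true, ← integral_indicator_one (measurableSet_setOf_eval_eq q true)]
        simp [indicator_apply]

theorem integral_mul_exp_ite_le (hμ : IsBernoulliField p μ) {S : Set κ} (hS : S.Finite) {q : κ}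
    (hq : q ∉ S) {F g : (κ → Bool) → ℝ} (hF : DependsOn F S) (hF0 : 0 ≤ F)
    (hg : DependsOn g S) :
    ∫ η, F η * exp (if η q = true then g η else 0) ∂μ ≤
      ∫ η, F η * exp (p q * (exp (g η) - 1)) ∂μ := by
  have := hμ.isProbabilityMeasure
  have hgain : DependsOn (fun η => F η * (exp (g η) - 1)) S :=
    dependsOn_comp₂ hF hg fun x y => x * (exp y - 1)
  have hsplit (η : κ → Bool) : F η * exp (if η q = true then g η else 0) =
      F η + if η q = true then F η * (exp (g η) - 1) else 0 := by
    split_ifs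
    · ring
    · simp
  have hS' : (insert q S).Finite := hS.insert q
  have hite : DependsOn (fun η : κ → Bool => if η q = true then F η * (exp (g η) - 1) else 0)
      (insert q S) := fun η η' h => by
    simp only [h q (mem_insert q S), hgain fun x hx => h x (mem_insert_of_mem q hx)]
  calc ∫ η, F η * exp (if η q = true then g η else 0) ∂μ
      = ∫ η, F η ∂μ + ∫ η, (if η q = true then F η * (exp (g η) - 1) else 0) ∂μ := by
        simp only [hsplit]
        exact integral_add (integrable_of_dependsOn hS hF) (integrable_of_dependsOn hS' hite)
    _ = ∫ η, F η + p q * (F η * (exp (g η) - 1)) ∂μ := by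
        rw [hμ.integral_ite hS hq hgain, integral_add (integrable_of_dependsOn hS hF)
          ((integrable_of_dependsOn hS hgain).const_mul _), integral_const_mul]
    _ ≤ ∫ η, F η * exp (p q * (exp (g η) - 1)) ∂μ := by
        refine integral_mono
          (integrable_of_dependsOn hS (dependsOn_comp₂ hF hgain fun x y => x + p q * y))
          (integrable_of_dependsOn hS <|
            dependsOn_comp₂ hF hg fun x y => x * exp (p q * (exp y - 1))) fun η => ?_
        have := mul_le_mul_of_nonneg_left (add_one_le_exp (p q * (exp (g η) - 1))) (hF0 η)
        linear_combination this

theorem integral_mul_exp_sum_ite_le (hμ : IsBernoulliField p μ) {S : Set κ} (hS : S.Finite)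
    {e : α → κ} {T : Finset α} (he : InjOn e T) (hT : ∀ x ∈ T, e x ∉ S)
    {F : (κ → Bool) → ℝ} {g : α → (κ → Bool) → ℝ} (hF : DependsOn F S) (hF0 : 0 ≤ F)
    (hg : ∀ x, DependsOn (g x) S) :
    ∫ η, F η * exp (∑ x ∈ T, if η (e x) = true then g x η else 0) ∂μ ≤
      ∫ η, F η * exp (∑ x ∈ T, p (e x) * (exp (g x η) - 1)) ∂μ := by
  classical
  induction T using Finset.induction_on generalizing F with
  | empty => simp
  | insert x T hx ih =>
    simp only [Finset.sum_insert hx, exp_add]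
    have hfresh : e x ∉ S ∪ e '' T := by
      rintro (h | ⟨y, hy, hxy⟩)
      · exact hT x (Finset.mem_insert_self x T) h
      · exact hx (he (Finset.mem_insert_of_mem hy) (Finset.mem_insert_self x T) hxy ▸ hy)
    have hother : DependsOn (fun η => F η * exp (∑ y ∈ T, if η (e y) = true then g y η else 0))
        (S ∪ e '' T) := fun η η' h => by
      have hS : ∀ q ∈ S, η q = η' q := fun q hq => h q (.inl hq)
      refine congrArg₂ (· * exp ·) (hF hS) (Finset.sum_congr rfl fun y hy => ?_)
      rw [h (e y) (.inr ⟨y, hy, rfl⟩), hg y hS]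
    have hreveal := hμ.integral_mul_exp_ite_le (hS.union (T.finite_toSet.image e)) hfresh hother
      (fun η => mul_nonneg (hF0 η) (exp_nonneg _)) ((hg x).mono subset_union_left)
    have hrest := ih (he.mono (by simp)) (fun _ hy => hT _ (Finset.mem_insert_of_mem hy))
      (dependsOn_comp₂ hF (hg x) fun z w => z * exp (p (e x) * (exp w - 1)))
      (fun η => mul_nonneg (hF0 η) (exp_nonneg _))
    simp only [mul_assoc, mul_comm (exp (∑ _ ∈ T, ite _ _ _))] at hreveal hrest
    exact hreveal.trans hrest

end IsBernoulliField

end BernoulliField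

/-! ### Surviving boxes -/

section Survivors

variable {ι : Type*} {M : ℕ}

/-- The nodes of the label field on `ι × Word1 M` that are read by the `l i`-th approximations. -/
def nodesUpTo (M : ℕ) (l : ι → ℕ) : Set (ι × Word1 M) := {q | q.2.1.length ≤ l q.1}

theorem nodesUpTo_mono {l l' : ι → ℕ} (h : l ≤ l') : nodesUpTo M l ⊆ nodesUpTo M l' :=
  fun q hq => le_trans hq (h q.1)

theorem finite_nodesUpTo [Finite ι] (l : ι → ℕ) : (nodesUpTo M l).Finite := by
  refine (Set.finite_iUnion fun i =>
    (finite_setOf_word1_length_le (M := M) (l i)).image (Prod.mk i)).subset ?_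
  rintro ⟨i, w⟩ hw
  exact mem_iUnion.2 ⟨i, w, hw, rfl⟩

/-- The part of `A` whose `i`-th coordinates lie in the block `[y * K, (y + 1) * K)`. -/
def slice (A : Finset (ι → ℕ)) (i : ι) (K y : ℕ) : Finset (ι → ℕ) := {v ∈ A | v i / K = y}

theorem mem_slice {A : Finset (ι → ℕ)} {i : ι} {K y : ℕ} {v : ι → ℕ} :
    v ∈ slice A i K y ↔ v ∈ A ∧ v i / K = y :=
  Finset.mem_filter

variable [NeZero M] {J : Finset ι} {N : ℕ} {l l' : ι → ℕ} {η : ι × Word1 M → Bool} {v : ι → ℕ}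

/-- The `l`-level ancestor of the level-`N` box with base-`M` corner `v` is retained in each of the
directions of `J`. -/
def Survives (J : Finset ι) (N : ℕ) (l : ι → ℕ) (η : ι × Word1 M → Bool) (v : ι → ℕ) : Prop :=
  ∀ j ∈ J, Retained1 M (fun w => η (j, w)) (digitWord M (l j) (v j / M ^ (N - l j)))

open Classical in
/-- The boxes of `A` whose `l`-level ancestors are retained, see `Survives`. -/
def survivors (J : Finset ι) (N : ℕ) (A : Finset (ι → ℕ)) (l : ι → ℕ) (η : ι × Word1 M → Bool) :
    Finset (ι → ℕ) :=
  A.filter (Survives J N l η)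

/-- The probability that a level-`N` box survives, given that its `l`-level ancestor does. -/
def survivalProb (p : ι → ℝ) (J : Finset ι) (N : ℕ) (l : ι → ℕ) : ℝ :=
  ∏ j ∈ J, p j ^ (N - l j)

theorem mem_survivors {A : Finset (ι → ℕ)} :
    v ∈ survivors J N A l η ↔ v ∈ A ∧ Survives J N l η v := by
  classical exact Finset.mem_filter

theorem survivors_subset (A : Finset (ι → ℕ)) : survivors J N A l η ⊆ A :=
  fun _ hv => (mem_survivors.1 hv).1

theorem survivors_congr_level (A : Finset (ι → ℕ)) (h : ∀ j ∈ J, l j = l' j) :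
    survivors J N A l η = survivors J N A l' η := by
  ext v
  rw [mem_survivors, mem_survivors]
  exact and_congr_right fun _ => forall₂_congr fun j hj => by rw [h j hj]

theorem survivalProb_nonneg {p : ι → ℝ} (hp : ∀ i, 0 ≤ p i) : 0 ≤ survivalProb p J N l :=
  Finset.prod_nonneg fun j _ => pow_nonneg (hp j) _

theorem survivalProb_mono {p : ι → ℝ} (hp0 : ∀ i, 0 ≤ p i) (hp1 : ∀ i, p i ≤ 1) (h : l ≤ l') :
    survivalProb p J N l ≤ survivalProb p J N l' :=
  Finset.prod_le_prod (fun j _ => pow_nonneg (hp0 j) _) fun j _ =>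
    pow_le_pow_of_le_one (hp0 j) (hp1 j) (Nat.sub_le_sub_left (h j) N)

theorem survivalProb_const (p : ι → ℝ) (J : Finset ι) (N n : ℕ) :
    survivalProb p J N (fun _ => n) = (∏ j ∈ J, p j) ^ (N - n) :=
  Finset.prod_pow _ _ _

theorem dependsOn_survivors (J : Finset ι) (N : ℕ) (A : Finset (ι → ℕ)) (l : ι → ℕ) :
    DependsOn (survivors (M := M) J N A l) (nodesUpTo M l) := fun η η' h => by
  ext v
  rw [mem_survivors, mem_survivors]
  refine and_congr_right fun _ => forall₂_congr fun j _ => retained1_congr fun q hq => h (j, q) ?_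
  rwa [length_digitWord] at hq

theorem Survives.anti (h : Survives J N l' η v) (hl : l ≤ l') (hN : ∀ j, l' j ≤ N) :
    Survives J N l η v := fun j hj => by
  have hsub : N - l' j + (l' j - l j) = N - l j := by
    have := show l j ≤ l' j from hl j
    have := hN j
    omega
  have hprefix := digitWord_div_pow_prefix (M := M) (l j) (l' j - l j) (v j / M ^ (N - l' j))
  rw [Nat.div_div_eq_div_mul, ← pow_add, hsub, Nat.add_sub_cancel' (hl j)] at hprefix
  exact (h j hj).of_prefix hprefix

theorem card_survivors_le_of_level_le (A : Finset (ι → ℕ)) (hl : l ≤ l') (hN : ∀ j, l' j ≤ N) :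
    (survivors J N A l' η).card ≤ (survivors J N A l η).card :=
  Finset.card_le_card fun _ hv =>
    mem_survivors.2 ((mem_survivors.1 hv).imp_right fun h => h.anti hl hN)

variable {A : Finset (ι → ℕ)} {i : ι}

theorem sum_card_survivors_slice (hl : l i < N) (hA : ∀ v ∈ A, v i < M ^ N) :
    ∑ y ∈ Finset.range (M ^ (l i + 1)),
        (survivors J N (slice A i (M ^ (N - (l i + 1))) y) l η).card =
      (survivors J N A l η).card := by
  rw [Finset.card_eq_sum_card_fiberwise fun v hv =>
    div_pow_sub_mem_range hl (hA v (survivors_subset A hv))]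
  refine Finset.sum_congr rfl fun y _ => congrArg _ ?_
  ext v
  simp only [mem_survivors, mem_slice, Finset.mem_filter, and_right_comm]

section Refine

variable [DecidableEq ι]

theorem survives_update (hi : i ∈ J) (hl : l i < N) :
    Survives J N (Function.update l i (l i + 1)) η v ↔
      Survives J N l η v ∧ η (i, digitNode M (l i) (v i / M ^ (N - (l i + 1)))) = true := by
  have hparent : v i / M ^ (N - (l i + 1)) / M = v i / M ^ (N - l i) := by
    rw [Nat.div_div_eq_div_mul, ← pow_succ, Nat.sub_add_eq, Nat.sub_add_cancel (by omega)]
  have hcoord := retained1_digitWord_succ (ω := fun w => η (i, w)) (n := l i)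
    (x := v i / M ^ (N - (l i + 1)))
  rw [hparent] at hcoord
  constructor
  · intro h
    have hrefined := h i hi
    rw [Function.update_self, hcoord] at hrefined
    refine ⟨fun j hj => ?_, hrefined.2⟩
    rcases eq_or_ne j i with rfl | hji
    · exact hrefined.1
    · simpa only [Function.update_of_ne hji] using h j hj
  · rintro ⟨h, hlabel⟩ j hj
    rcases eq_or_ne j i with rfl | hji
    · rw [Function.update_self, hcoord]
      exact ⟨h j hj, hlabel⟩
    · simpa only [Function.update_of_ne hji] using h j hj

theorem card_survivors_update (hi : i ∈ J) (hl : l i < N) (hA : ∀ v ∈ A, v i < M ^ N) :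
    (survivors J N A (Function.update l i (l i + 1)) η).card =
      ∑ y ∈ Finset.range (M ^ (l i + 1)), if η (i, digitNode M (l i) y) = true then
        (survivors J N (slice A i (M ^ (N - (l i + 1))) y) l η).card else 0 := by
  rw [Finset.card_eq_sum_card_fiberwise fun v hv =>
    div_pow_sub_mem_range hl (hA v (survivors_subset A hv))]
  refine Finset.sum_congr rfl fun y _ => ?_
  split_ifs with hy
  · congr 1
    ext v
    simp only [mem_survivors, mem_slice, Finset.mem_filter, survives_update hi hl]
    constructor
    · rintro ⟨⟨hvA, hv, _⟩, rfl⟩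
      exact ⟨⟨hvA, rfl⟩, hv⟩
    · rintro ⟨⟨hvA, rfl⟩, hv⟩
      exact ⟨⟨hvA, hv, hy⟩, rfl⟩
  · rw [Finset.card_eq_zero, Finset.filter_eq_empty_iff]
    rintro v hv rfl
    exact hy ((survives_update hi hl).1 (mem_survivors.1 hv).2).2

theorem survivalProb_update (p : ι → ℝ) (hi : i ∈ J) (hl : l i < N) :
    survivalProb p J N l = p i * survivalProb p J N (Function.update l i (l i + 1)) := by
  rw [survivalProb, survivalProb, ← Finset.mul_prod_erase J _ hi, ← Finset.mul_prod_erase J _ hi,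
    Function.update_self, ← mul_assoc, ← pow_succ', Nat.sub_add_eq, Nat.sub_add_cancel (by omega)]
  congr 1
  exact Finset.prod_congr rfl fun j hj => by rw [Function.update_of_ne (Finset.ne_of_mem_erase hj)]

end Refine

end Survivors

/-! ### Exponential moments -/

section ExpMoment

variable {ι : Type*} {M : ℕ} [NeZero M] {p : ι → ℝ}
  {μ : Measure (ι × Word1 M → Bool)} {J : Finset ι} {N n : ℕ} {A : Finset (ι → ℕ)}
  {F : (ι × Word1 M → Bool) → ℝ} {c δ : ℝ}

theorem exp_sub_one_le_mul_exp {x : ℝ} (hx : 0 ≤ x) (hδ : x ≤ δ) : exp x - 1 ≤ x * exp δ := by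
  have hneg : exp x * (1 - x) ≤ 1 := by
    calc exp x * (1 - x) ≤ exp x * exp (-x) := by gcongr; exact one_sub_le_exp_neg x
      _ = 1 := by rw [← exp_add, add_neg_cancel, exp_zero]
  calc exp x - 1 ≤ x * exp x := by linear_combination hneg
    _ ≤ x * exp δ := by gcongr

theorem sum_mul_exp_card_slice_le [DecidableEq ι] {l : ι → ℕ} {i : ι}
    (hp : ∀ i, 0 ≤ p i) (hi : i ∈ J) (hl : l i < N)
    (hA : ∀ v ∈ A, v i < M ^ N) (hc : 0 ≤ c) {w : ℝ}
    (hw : c * survivalProb p J N (Function.update l i (l i + 1)) = w) {η : ι × Word1 M → Bool}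
    (hslice : ∀ y, w * (survivors J N (slice A i (M ^ (N - (l i + 1))) y) l η).card ≤ δ) :
    ∑ y ∈ Finset.range (M ^ (l i + 1)), p i *
        (exp (w * (survivors J N (slice A i (M ^ (N - (l i + 1))) y) l η).card) - 1) ≤
      c * exp δ * survivalProb p J N l * (survivors J N A l η).card := by
  have hw0 : 0 ≤ w := hw ▸ mul_nonneg hc (survivalProb_nonneg hp)
  calc _ ≤ ∑ y ∈ Finset.range (M ^ (l i + 1)), p i *
        (w * (survivors J N (slice A i (M ^ (N - (l i + 1))) y) l η).card * exp δ) := by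
        gcongr with y
        · exact hp i
        · exact exp_sub_one_le_mul_exp (by positivity) (hslice y)
    _ = c * exp δ * survivalProb p J N l * (survivors J N A l η).card := by
        rw [← sum_card_survivors_slice hl hA, Nat.cast_sum, survivalProb_update p hi hl, ← hw,
          Finset.mul_sum]
        exact Finset.sum_congr rfl fun y _ => by ring

theorem IsBernoulliField.nonneg_fst (hμ : IsBernoulliField (fun q => p q.1) μ) (i : ι) : 0 ≤ p i :=
  hμ.nonneg (i, digitNode M 0 0)

theorem IsBernoulliField.le_one_fst (hμ : IsBernoulliField (fun q => p q.1) μ) (i : ι) : p i ≤ 1 :=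
  hμ.le_one (i, digitNode M 0 0)

/-- The `F`-weighted exponential moment of order `c` of the expected number of boxes of `A` that
survive, given the labels up to the levels `l`. -/
def expMoment (p : ι → ℝ) (μ : Measure (ι × Word1 M → Bool)) (J : Finset ι) (N : ℕ)
    (A : Finset (ι → ℕ)) (F : (ι × Word1 M → Bool) → ℝ) (c : ℝ) (l : ι → ℕ) : ℝ :=
  ∫ η, F η * exp (c * survivalProb p J N l * (survivors J N A l η).card) ∂μ

/-- The levels at an intermediate stage of the passage from level `n` to level `n + 1`: the labels
of level `n + 1` have been revealed in the directions of `I` only. -/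
def partialLevel [DecidableEq ι] (n : ℕ) (I : Finset ι) : ι → ℕ :=
  I.piecewise (fun _ => n + 1) (fun _ => n)

theorem le_partialLevel [DecidableEq ι] (n : ℕ) (I : Finset ι) :
    (fun _ => n) ≤ partialLevel n I :=
  Finset.le_piecewise_of_le_of_le _ (fun _ => n.le_succ) le_rfl

theorem partialLevel_le [DecidableEq ι] (n : ℕ) (I : Finset ι) :
    partialLevel n I ≤ fun _ => n + 1 :=
  Finset.piecewise_le_of_le_of_le _ le_rfl fun _ => n.le_succ

variable [Finite ι]

theorem integrable_expMoment [IsFiniteMeasure μ] (p : ι → ℝ) (A : Finset (ι → ℕ)) (c : ℝ)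
    {l : ι → ℕ} (hF : DependsOn F (nodesUpTo M l)) :
    Integrable
      (fun η => F η * exp (c * survivalProb p J N l * (survivors J N A l η).card)) μ :=
  integrable_of_dependsOn (finite_nodesUpTo l) <|
    dependsOn_comp₂ hF (dependsOn_survivors J N A l) fun x s =>
      x * exp (c * survivalProb p J N l * s.card)

theorem expMoment_update_le_integral [DecidableEq ι] {l : ι → ℕ} {i : ι}
    (hμ : IsBernoulliField (fun q => p q.1) μ) (hi : i ∈ J) (hl : l i < N)
    (hA : ∀ v ∈ A, v i < M ^ N) (hF : DependsOn F (nodesUpTo M l)) (hF0 : 0 ≤ F) {w : ℝ}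
    (hw : c * survivalProb p J N (Function.update l i (l i + 1)) = w) :
    expMoment p μ J N A F c (Function.update l i (l i + 1)) ≤
      ∫ η, F η * exp (∑ y ∈ Finset.range (M ^ (l i + 1)), p i *
        (exp (w * (survivors J N (slice A i (M ^ (N - (l i + 1))) y) l η).card) - 1)) ∂μ := by
  have hinj : InjOn (fun y => (i, digitNode M (l i) y)) (Finset.range (M ^ (l i + 1))) := by
    rw [Finset.coe_range]
    exact (Prod.mk_right_injective i).comp_injOn (digitNode_injOn (l i))
  have hfresh (y : ℕ) : (i, digitNode M (l i) y) ∉ nodesUpTo M l := fun h =>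
    Nat.not_succ_le_self (l i) ((length_digitNode (l i) y).symm.trans_le h)
  have hdep (y : ℕ) := dependsOn_survivors (M := M) J N (slice A i (M ^ (N - (l i + 1))) y) l
  refine le_of_eq_of_le ?_ (hμ.integral_mul_exp_sum_ite_le (finite_nodesUpTo l) hinj
    (fun y _ => hfresh y) hF hF0
    fun y => dependsOn_comp₂ hF (hdep y) fun _ s => w * s.card)
  simp only [expMoment, card_survivors_update hi hl hA, Nat.cast_sum, Finset.mul_sum,
    Nat.cast_ite, Nat.cast_zero, mul_ite, mul_zero, hw]

theorem expMoment_update_le [DecidableEq ι] {l : ι → ℕ} {i : ι}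
    (hμ : IsBernoulliField (fun q => p q.1) μ) (hi : i ∈ J) (hl : l i < N)
    (hA : ∀ v ∈ A, v i < M ^ N) (hF : DependsOn F (nodesUpTo M l)) (hF0 : 0 ≤ F) (hc : 0 ≤ c)
    (hslice : ∀ η, F η ≠ 0 → ∀ y, c * survivalProb p J N (Function.update l i (l i + 1)) *
      (survivors J N (slice A i (M ^ (N - (l i + 1))) y) l η).card ≤ δ) :
    expMoment p μ J N A F c (Function.update l i (l i + 1)) ≤
      expMoment p μ J N A F (c * exp δ) l := by
  have := hμ.isProbabilityMeasure
  refine (expMoment_update_le_integral hμ hi hl hA hF hF0 rfl).trans ?_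
  refine integral_mono (integrable_of_dependsOn (finite_nodesUpTo l) fun η η' h => ?_)
    (integrable_expMoment p A _ hF) fun η => ?_
  · exact congrArg₂ (· * exp ·) (hF h)
      (Finset.sum_congr rfl fun y _ => by rw [dependsOn_survivors J N _ l h])
  · by_cases hη : F η = 0
    · simp [hη]
    · exact mul_le_mul_of_nonneg_left
        (exp_le_exp.2 (sum_mul_exp_card_slice_le hμ.nonneg_fst hi hl hA hc rfl (hslice η hη)))
        (hF0 η)

theorem expMoment_partialLevel_insert_le [DecidableEq ι] {I : Finset ι} {i : ι} {b : ℝ}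
    (hμ : IsBernoulliField (fun q => p q.1) μ) (hn : n < N) (hi : i ∉ I) (hiJ : i ∈ J)
    (hA : ∀ v ∈ A, v i < M ^ N) (hF : DependsOn F (nodesUpTo M fun _ => n)) (hF0 : 0 ≤ F)
    (hb : 0 ≤ b) (hbc : b ≤ c)
    (hslice : ∀ η, F η ≠ 0 → ∀ y, c * survivalProb p J N (fun _ => n + 1) *
      (survivors J N (slice A i (M ^ (N - (n + 1))) y) (fun _ => n) η).card ≤ δ) :
    expMoment p μ J N A F b (partialLevel n (insert i I)) ≤
      expMoment p μ J N A F (b * exp δ) (partialLevel n I) := by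
  have hlevel : partialLevel n I i = n := Finset.piecewise_eq_of_notMem _ _ _ hi
  have hupdate : partialLevel n (insert i I) =
      Function.update (partialLevel n I) i (partialLevel n I i + 1) := by
    rw [hlevel]
    exact I.piecewise_insert _ _ i
  rw [hupdate]
  refine expMoment_update_le hμ hiJ (hlevel.trans_lt hn) hA
    (hF.mono (nodesUpTo_mono (le_partialLevel n I))) hF0 hb fun η hη y =>
      le_trans ?_ (hslice η hη y)
  rw [← hupdate, hlevel]
  have hprob := survivalProb_mono (J := J) (N := N) hμ.nonneg_fst hμ.le_one_fst
    (partialLevel_le n (insert i I))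
  have hcard := card_survivors_le_of_level_le (J := J) (η := η)
    (slice A i (M ^ (N - (n + 1))) y) (le_partialLevel n I) fun j =>
      (partialLevel_le n I j).trans hn
  have hprob0 := survivalProb_nonneg (J := J) (N := N) (l := partialLevel n (insert i I))
    hμ.nonneg_fst
  have hc := hb.trans hbc
  have := mul_nonneg hc (hprob0.trans hprob)
  gcongr

theorem expMoment_partialLevel_le [DecidableEq ι] {I : Finset ι} {b : ℝ}
    (hμ : IsBernoulliField (fun q => p q.1) μ) (hn : n < N) (hI : I ⊆ J)
    (hA : ∀ i ∈ I, ∀ v ∈ A, v i < M ^ N) (hF : DependsOn F (nodesUpTo M fun _ => n)) (hF0 : 0 ≤ F)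
    (hδ : 0 ≤ δ) (hb : 0 ≤ b) (hbc : b * exp (I.card * δ) ≤ c)
    (hslice : ∀ η, F η ≠ 0 → ∀ i ∈ I, ∀ y, c * survivalProb p J N (fun _ => n + 1) *
      (survivors J N (slice A i (M ^ (N - (n + 1))) y) (fun _ => n) η).card ≤ δ) :
    expMoment p μ J N A F b (partialLevel n I) ≤
      expMoment p μ J N A F (b * exp (I.card * δ)) (fun _ => n) := by
  induction I using Finset.induction_on generalizing b with
  | empty => simp [partialLevel]
  | insert i I hi ih =>
    have hexp : b * exp ((insert i I).card * δ) = b * exp δ * exp (I.card * δ) := by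
      rw [Finset.card_insert_of_notMem hi, mul_assoc, ← exp_add]
      push_cast
      ring_nf
    have hb_le : b ≤ c := (le_mul_of_one_le_right hb (one_le_exp (by positivity))).trans hbc
    rw [hexp] at hbc ⊢
    calc expMoment p μ J N A F b (partialLevel n (insert i I))
        ≤ expMoment p μ J N A F (b * exp δ) (partialLevel n I) :=
          expMoment_partialLevel_insert_le hμ hn hi (hI (Finset.mem_insert_self i I))
            (hA i (Finset.mem_insert_self i I)) hF hF0 hb hb_le
            fun η hη => hslice η hη i (Finset.mem_insert_self i I)
      _ ≤ expMoment p μ J N A F (b * exp δ * exp (I.card * δ)) (fun _ => n) :=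
          ih ((Finset.subset_insert i I).trans hI) (fun j hj => hA j (Finset.mem_insert_of_mem hj))
            (by positivity) hbc fun η hη j hj => hslice η hη j (Finset.mem_insert_of_mem hj)

theorem expMoment_succ_le (hμ : IsBernoulliField (fun q => p q.1) μ) (hn : n < N)
    (hA : ∀ i ∈ J, ∀ v ∈ A, v i < M ^ N) (hF : DependsOn F (nodesUpTo M fun _ => n)) (hF0 : 0 ≤ F)
    (hc : 0 ≤ c) (hδ : 0 ≤ δ)
    (hslice : ∀ η, F η ≠ 0 → ∀ i ∈ J, ∀ y, c * exp (J.card * δ) *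
      survivalProb p J N (fun _ => n + 1) *
        (survivors J N (slice A i (M ^ (N - (n + 1))) y) (fun _ => n) η).card ≤ δ) :
    expMoment p μ J N A F c (fun _ => n + 1) ≤
      expMoment p μ J N A F (c * exp (J.card * δ)) (fun _ => n) := by
  classical
  have hJ : ∀ j ∈ J, partialLevel n J j = n + 1 := fun j hj => Finset.piecewise_eq_of_mem _ _ _ hj
  have hprob : survivalProb p J N (partialLevel n J) = survivalProb p J N fun _ => n + 1 :=
    Finset.prod_congr rfl fun j hj => by rw [hJ j hj]
  calc expMoment p μ J N A F c (fun _ => n + 1)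
      = expMoment p μ J N A F c (partialLevel n J) := by
        simp only [expMoment, survivors_congr_level A hJ, hprob]
    _ ≤ expMoment p μ J N A F (c * exp (J.card * δ)) (fun _ => n) :=
        expMoment_partialLevel_le hμ hn subset_rfl hA hF hF0 hδ hc le_rfl hslice

section Chain

variable {q S : ℝ} {G : ℕ → Set (ι × Word1 M → Bool)}

theorem expMoment_mono [IsFiniteMeasure μ] {F' : (ι × Word1 M → Bool) → ℝ} {l : ι → ℕ}
    (hF : DependsOn F (nodesUpTo M l)) (hF' : DependsOn F' (nodesUpTo M l)) (h : F ≤ F') :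
    expMoment p μ J N A F c l ≤ expMoment p μ J N A F' c l :=
  integral_mono (integrable_expMoment p A c hF) (integrable_expMoment p A c hF') fun η =>
    mul_le_mul_of_nonneg_right (h η) (exp_nonneg _)

theorem dependsOn_indicator_one {κ : Type*} {S : Set κ} {s : Set (κ → Bool)}
    (h : DependsOn (· ∈ s) S) : DependsOn (s.indicator (1 : (κ → Bool) → ℝ)) S :=
  fun η η' hη => by
    classical
    have hmem : η ∈ s ↔ η' ∈ s := iff_of_eq (h hη)
    simp only [indicator_apply, hmem, Pi.one_apply]

/-- The order `c * exp (1 - q ^ (N - n))` that is sufficient at level `n` for controlling the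
exponential moment of order `c` at level `N`. -/
def momentOrder (c q : ℝ) (N n : ℕ) : ℝ := c * exp (1 - q ^ (N - n))

theorem momentOrder_le (hc : 0 ≤ c) (hq : 0 ≤ q) : momentOrder c q N n ≤ c * exp 1 := by
  unfold momentOrder
  gcongr
  exact sub_le_self 1 (by positivity)

theorem momentOrder_succ_mul_exp {m : ℝ} (hm : m ≠ 0) (hn : n < N) :
    momentOrder c q N (n + 1) * exp (m * ((1 - q) * q ^ (N - (n + 1)) / m)) =
      momentOrder c q N n := by
  have hpow : q ^ (N - n) = q * q ^ (N - (n + 1)) := by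
    rw [← pow_succ', Nat.sub_add_eq, Nat.sub_add_cancel (by omega)]
  rw [momentOrder, momentOrder, mul_assoc, ← exp_add, mul_div_cancel₀ _ hm, hpow]
  ring_nf

/-- The expected number of survivors is at most `S`, and as long as the labels up to level `n` are
compatible with `G n`, the expected number of survivors in a slice, given these labels, is at most
`S * q ^ (N - (n + 1))`. -/
structure IsSliceControl (p : ι → ℝ) (J : Finset ι) (N : ℕ) (A : Finset (ι → ℕ))
    (G : ℕ → Set (ι × Word1 M → Bool)) (q S : ℝ) : Prop where
  lt_pow : ∀ i ∈ J, ∀ v ∈ A, v i < M ^ N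
  dependsOn (n : ℕ) : DependsOn (· ∈ G n) (nodesUpTo M fun _ => n)
  antitone : Antitone G
  mul_card_le : (∏ j ∈ J, p j) ^ N * A.card ≤ S
  mul_card_slice_le : ∀ n < N, ∀ η ∈ G n, ∀ i ∈ J, ∀ y, (∏ j ∈ J, p j) ^ (N - (n + 1)) *
    (survivors J N (slice A i (M ^ (N - (n + 1))) y) (fun _ => n) η).card ≤ S * q ^ (N - (n + 1))

theorem expMoment_succ_le_of_isSliceControl (hμ : IsBernoulliField (fun q => p q.1) μ)
    (hG : IsSliceControl p J N A G q S) (hJ : J.Nonempty) (hn : n < N)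
    (hq0 : 0 ≤ q) (hq1 : q ≤ 1) (hc : 0 ≤ c) (hcS : c * exp 1 * S * J.card ≤ 1 - q) :
    expMoment p μ J N A ((G (n + 1)).indicator 1) (momentOrder c q N (n + 1)) (fun _ => n + 1) ≤
      expMoment p μ J N A ((G n).indicator 1) (momentOrder c q N n) (fun _ => n) := by
  have := hμ.isProbabilityMeasure
  have hdep (m : ℕ) := dependsOn_indicator_one (hG.dependsOn m)
  have hJ0 : (0 : ℝ) < J.card := by exact_mod_cast hJ.card_pos
  rw [← momentOrder_succ_mul_exp hJ0.ne' hn]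
  refine (expMoment_mono (hdep (n + 1)) ((hdep n).mono (nodesUpTo_mono fun _ => n.le_succ))
    (indicator_le_indicator_of_subset (hG.antitone n.le_succ) fun _ => zero_le_one)).trans ?_
  refine expMoment_succ_le hμ hn hG.lt_pow (hdep n) (indicator_nonneg fun _ _ => zero_le_one)
    (mul_nonneg hc (exp_nonneg _))
    (div_nonneg (mul_nonneg (sub_nonneg.2 hq1) (by positivity)) hJ0.le) fun η hη i hi y => ?_
  rw [momentOrder_succ_mul_exp hJ0.ne' hn, survivalProb_const, mul_assoc]
  have hcontrol := hG.mul_card_slice_le n hn η (mem_of_indicator_ne_zero hη) i hi y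
  have hprob : 0 ≤ ∏ j ∈ J, p j := Finset.prod_nonneg fun j _ => hμ.nonneg_fst j
  calc _ ≤ c * exp 1 * (S * q ^ (N - (n + 1))) :=
        mul_le_mul (momentOrder_le hc hq0) hcontrol (by positivity) (by positivity)
    _ = c * exp 1 * S * J.card * q ^ (N - (n + 1)) / J.card := by field_simp
    _ ≤ (1 - q) * q ^ (N - (n + 1)) / J.card := by gcongr

theorem expMoment_le_exp_one (hμ : IsBernoulliField (fun q => p q.1) μ)
    (hG : IsSliceControl p J N A G q S) (hJ : J.Nonempty)
    (hq0 : 0 ≤ q) (hq1 : q ≤ 1) (hc : 0 ≤ c) (hcS : c * exp 1 * S * J.card ≤ 1 - q) :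
    expMoment p μ J N A ((G N).indicator 1) c (fun _ => N) ≤ exp 1 := by
  have := hμ.isProbabilityMeasure
  have hback : ∀ n ≤ N,
      expMoment p μ J N A ((G n).indicator 1) (momentOrder c q N n) (fun _ => n) ≤
        expMoment p μ J N A ((G 0).indicator 1) (momentOrder c q N 0) (fun _ => 0) := by
    intro n
    induction n with
    | zero => exact fun _ => le_rfl
    | succ n ih =>
      intro hn
      exact (expMoment_succ_le_of_isSliceControl hμ hG hJ hn hq0 hq1 hc hcS).trans
        (ih (Nat.le_of_succ_le hn))
  have hprob : 0 ≤ ∏ j ∈ J, p j := Finset.prod_nonneg fun j _ => hμ.nonneg_fst j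
  have hS : 0 ≤ S := hG.mul_card_le.trans' (by positivity)
  have hJ1 : (1 : ℝ) ≤ J.card := by exact_mod_cast hJ.card_pos
  have hexponent (η : ι × Word1 M → Bool) : momentOrder c q N 0 *
      survivalProb p J N (fun _ => 0) * (survivors J N A (fun _ => 0) η).card ≤ 1 := by
    calc _ ≤ c * exp 1 * ((∏ j ∈ J, p j) ^ N * A.card) := by
          rw [survivalProb_const, Nat.sub_zero, mul_assoc]
          gcongr
          exacts [momentOrder_le hc hq0, survivors_subset A]
      _ ≤ c * exp 1 * S * J.card := by
          rw [mul_assoc _ S]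
          exact mul_le_mul_of_nonneg_left
            (hG.mul_card_le.trans (le_mul_of_one_le_right hS hJ1)) (by positivity)
      _ ≤ 1 := hcS.trans (sub_le_self 1 hq0)
  calc expMoment p μ J N A ((G N).indicator 1) c (fun _ => N)
      ≤ expMoment p μ J N A ((G 0).indicator 1) (momentOrder c q N 0) (fun _ => 0) := by
        simpa [momentOrder] using hback N le_rfl
    _ ≤ ∫ _, exp 1 ∂μ := by
        refine integral_mono (integrable_expMoment p A _ (dependsOn_indicator_one (hG.dependsOn 0)))
          (integrable_const _) fun η => ?_
        rw [← one_mul (exp 1)]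
        exact mul_le_mul (indicator_le_self' (fun _ _ => zero_le_one) η)
          (exp_le_exp.2 (hexponent η)) (exp_nonneg _) zero_le_one
    _ = exp 1 := by simp

theorem measureReal_card_survivors_ge_le (hμ : IsBernoulliField (fun q => p q.1) μ)
    (hG : IsSliceControl p J N A G q S) (hJ : J.Nonempty)
    (hq0 : 0 ≤ q) (hq1 : q ≤ 1) (hc : 0 ≤ c) (hcS : c * exp 1 * S * J.card ≤ 1 - q) (R : ℝ) :
    μ.real {η | η ∈ G N ∧ R ≤ (survivors J N A (fun _ => N) η).card} ≤ exp (1 - c * R) := by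
  have := hμ.isProbabilityMeasure
  have hmarkov := mul_meas_ge_le_integral_of_nonneg
    (.of_forall fun η => mul_nonneg (indicator_nonneg (fun _ _ => zero_le_one) η) (exp_nonneg _))
    (integrable_expMoment (μ := μ) (J := J) (N := N) p A c
      (dependsOn_indicator_one (hG.dependsOn N))) (exp (c * R))
  have hsub : {η | η ∈ G N ∧ R ≤ (survivors J N A (fun _ => N) η).card} ⊆
      {η | exp (c * R) ≤ (G N).indicator 1 η * exp (c * survivalProb p J N (fun _ => N) *
        (survivors J N A (fun _ => N) η).card)} := by
    rintro η ⟨hη, hR⟩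
    rw [mem_ofPred_eq, indicator_of_mem hη, Pi.one_apply, one_mul, survivalProb_const, Nat.sub_self,
      pow_zero, mul_one]
    gcongr
  rw [sub_eq_add_neg, exp_add, exp_neg, ← div_eq_mul_inv, le_div_iff₀' (exp_pos _)]
  exact (mul_le_mul_of_nonneg_left (measureReal_mono hsub) (exp_nonneg _)).trans
    (hmarkov.trans (expMoment_le_exp_one hμ hG hJ hq0 hq1 hc hcS))

end Chain

end ExpMoment

/-! ### Boxes in slabs -/

section Slabs

variable {ι : Type*} [Fintype ι] {M : ℕ} {a : ι → ℝ} {J : Finset ι} {i : ι} {n N : ℕ} {s : ℝ}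

/-- The linear form `∑ i, a i * v i` on integer points. -/
def linForm (a : ι → ℝ) (v : ι → ℕ) : ℝ := ∑ i, a i * v i

/-- The integer points `v` with `linForm a v ∈ [s, s + 2 ∑ i, a i]`. The width is
chosen so that dividing by `K ≥ 2` leads to a window of the same kind, see `div_mem_window`. -/
def window (a : ι → ℝ) (s : ℝ) : Set (ι → ℕ) := {v | linForm a v ∈ Icc s (s + 2 * ∑ i, a i)}

/-- A bound for the number of points of a window on a line parallel to a coordinate axis. -/
def lineBound (a : ι → ℝ) : ℕ := ∑ i, (⌊(2 * ∑ j, a j) / a i⌋₊ + 1)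

theorem div_mem_window (ha : ∀ i, 0 ≤ a i) {K : ℕ} (hK : 2 ≤ K) {v : ι → ℕ} (hv : v ∈ window a s) :
    (fun j => v j / K) ∈ window a (s / K - ∑ i, a i) := by
  have hK' : (2 : ℝ) ≤ K := by exact_mod_cast hK
  have hK0 : (0 : ℝ) < K := by linarith
  have hσ : 0 ≤ ∑ i, a i := Finset.sum_nonneg fun i _ => ha i
  have hlower : K * linForm a (fun j => v j / K) ≤ linForm a v := by
    rw [linForm, linForm, Finset.mul_sum]
    refine Finset.sum_le_sum fun j _ => ?_
    rw [mul_left_comm]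
    exact mul_le_mul_of_nonneg_left (by exact_mod_cast Nat.mul_div_le (v j) K) (ha j)
  have hupper : linForm a v ≤ K * (linForm a (fun j => v j / K) + ∑ i, a i) := by
    rw [linForm, linForm, ← Finset.sum_add_distrib, Finset.mul_sum]
    refine Finset.sum_le_sum fun j _ => ?_
    rw [← mul_add_one, mul_left_comm]
    exact mul_le_mul_of_nonneg_left
      (by exact_mod_cast (Nat.lt_mul_div_succ (v j) (by omega)).le) (ha j)
  constructor
  · rw [sub_le_iff_le_add, div_le_iff₀' hK0]
    exact hv.1.trans hupper
  · calc linForm a (fun j => v j / K) ≤ (s + 2 * ∑ i, a i) / K :=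
          (le_div_iff₀' hK0).2 (hlower.trans hv.2)
      _ = s / K + 2 * (∑ i, a i) / K := add_div _ _ _
      _ ≤ s / K + ∑ i, a i := by
          gcongr
          rw [div_le_iff₀ hK0, mul_comm]
          gcongr
      _ = s / K - ∑ i, a i + 2 * ∑ i, a i := by ring

theorem card_le_floor_of_forall_mul_sub_le {Y : Finset ℕ} {b ρ : ℝ} (hb : 0 < b)
    (h : ∀ y ∈ Y, ∀ z ∈ Y, b * ((y : ℝ) - z) ≤ ρ) : Y.card ≤ ⌊ρ / b⌋₊ + 1 := by
  rcases Y.eq_empty_or_nonempty with rfl | hY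
  · simp
  have hspread : Y.max' hY - Y.min' hY ≤ ⌊ρ / b⌋₊ := by
    refine Nat.le_floor ?_
    rw [Nat.cast_sub (Y.min'_le _ (Y.max'_mem hY)), le_div_iff₀' hb]
    exact h _ (Y.max'_mem hY) _ (Y.min'_mem hY)
  have hcard := Finset.card_le_card fun y hy =>
    show y ∈ Finset.Icc (Y.min' hY) (Y.max' hY) from
      Finset.mem_Icc.2 ⟨Y.min'_le y hy, Y.le_max' y hy⟩
  rw [Nat.card_Icc] at hcard
  omega

theorem linForm_update_zero [DecidableEq ι] (a : ι → ℝ) (v : ι → ℕ) (i : ι) :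
    linForm a (Function.update v i 0) = linForm a v - a i * v i := by
  rw [linForm, linForm, ← Finset.add_sum_erase _ _ (Finset.mem_univ i),
    ← Finset.add_sum_erase _ (fun j => a j * (v j : ℝ)) (Finset.mem_univ i), Function.update_self,
    Nat.cast_zero, mul_zero, zero_add, add_sub_cancel_left]
  exact Finset.sum_congr rfl fun j hj => by rw [Function.update_of_ne (Finset.ne_of_mem_erase hj)]

theorem card_le_lineBound [DecidableEq ι] (ha : ∀ i, 0 < a i) {X : Finset (ι → ℕ)} {u : ι → ℕ}
    (i : ι) (hX : ∀ v ∈ X, v ∈ window a s) (hu : ∀ v ∈ X, Function.update v i 0 = u) :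
    X.card ≤ lineBound a := by
  have hinj : InjOn (fun v : ι → ℕ => v i) X := fun v hv v' hv' hvv' => by
    rw [← Function.update_eq_self i v, ← Function.update_eq_self i v', show v i = v' i from hvv']
    simpa only [Function.update_idem] using
      congrArg (Function.update · i (v' i)) ((hu v hv).trans (hu v' hv').symm)
  rw [← Finset.card_image_of_injOn hinj]
  refine (card_le_floor_of_forall_mul_sub_le (ha i) (ρ := 2 * ∑ j, a j) ?_).trans
    (Finset.single_le_sum (f := fun i => ⌊(2 * ∑ j, a j) / a i⌋₊ + 1)
      (fun _ _ => Nat.zero_le _) (Finset.mem_univ i))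
  simp only [Finset.forall_mem_image]
  intro v hv v' hv'
  have hrest := (linForm_update_zero a v i).symm.trans
    ((congrArg (linForm a) ((hu v hv).trans (hu v' hv').symm)).trans (linForm_update_zero a v' i))
  have hupper := (hX v hv).2
  have hlower := (hX v' hv').1
  linarith

theorem card_le_of_div_eq (ha : ∀ i, 0 < a i) (hi : i ∈ J) {K : ℕ} (hK : 0 < K)
    {X : Finset (ι → ℕ)} {w : ι → ℕ} (hX : ∀ v ∈ X, v ∈ window a s)
    (hJ : ∀ v ∈ X, ∀ j ∈ J, v j / K = w j) (h0 : ∀ v ∈ X, ∀ j ∉ J, v j = 0) :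
    X.card ≤ lineBound a * K ^ (J.card - 1) := by
  classical
  set T : Finset (ι → ℕ) := Fintype.piFinset fun j =>
    if j ∈ J.erase i then Finset.Ico (w j * K) ((w j + 1) * K) else {0}
  have hT : ∀ v ∈ X, Function.update v i 0 ∈ T := fun v hv => Fintype.mem_piFinset.2 fun j => by
    rcases eq_or_ne j i with rfl | hji
    · simp
    · by_cases hj : j ∈ J
      · have := (Nat.div_eq_iff hK).1 (hJ v hv j hj)
        simp only [Finset.mem_erase, hji, hj, ne_eq, not_false_eq_true, and_self, if_true,
          Function.update_of_ne, Finset.mem_Ico, add_one_mul]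
        omega
      · simp [hji, hj, h0 v hv j hj]
  have hcard : T.card = K ^ (J.card - 1) := by
    simp only [T, Fintype.card_piFinset, apply_ite Finset.card, Nat.card_Ico, add_one_mul,
      Nat.add_sub_cancel_left, Finset.card_singleton]
    rw [Finset.prod_ite_mem, Finset.univ_inter, Finset.prod_const, Finset.card_erase_of_mem hi]
  rw [← hcard]
  refine Finset.card_le_mul_card_image_of_maps_to hT _ fun u _ => ?_
  exact card_le_lineBound ha i (fun v hv => hX v (Finset.mem_filter.1 hv).1)
    fun v hv => (Finset.mem_filter.1 hv).2

variable [DecidableEq ι]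

/-- The corners, in units of `M⁻ⁿ`, of the level-`n` boxes in the directions of `J`; the other
coordinates are zero. -/
def corners (M : ℕ) (J : Finset ι) (n : ℕ) : Finset (ι → ℕ) :=
  Fintype.piFinset fun j => if j ∈ J then Finset.range (M ^ n) else {0}

open Classical in
/-- The corners of the level-`n` boxes that lie in `window a s`. -/
def slab (M : ℕ) (a : ι → ℝ) (J : Finset ι) (n : ℕ) (s : ℝ) : Finset (ι → ℕ) :=
  (corners M J n).filter (· ∈ window a s)

theorem mem_corners {v : ι → ℕ} :
    v ∈ corners M J n ↔ (∀ j ∈ J, v j < M ^ n) ∧ ∀ j ∉ J, v j = 0 := by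
  rw [corners, Fintype.mem_piFinset]
  refine ⟨fun h => ⟨fun j hj => ?_, fun j hj => ?_⟩, fun h j => ?_⟩
  · simpa [hj] using h j
  · simpa [hj] using h j
  · by_cases hj : j ∈ J
    · simpa [hj] using h.1 j hj
    · simpa [hj] using h.2 j hj

theorem card_corners (M : ℕ) (J : Finset ι) (n : ℕ) : (corners M J n).card = (M ^ n) ^ J.card := by
  simp [corners, Fintype.card_piFinset, apply_ite Finset.card, Finset.prod_ite_mem]

theorem mem_slab {v : ι → ℕ} : v ∈ slab M a J n s ↔ v ∈ corners M J n ∧ v ∈ window a s := by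
  classical exact Finset.mem_filter

theorem card_slab_le (ha : ∀ i, 0 < a i) (hM : 0 < M) (hJ : J.Nonempty) (n : ℕ) (s : ℝ) :
    (slab M a J n s).card ≤ lineBound a * (M ^ n) ^ (J.card - 1) := by
  obtain ⟨i, hi⟩ := hJ
  refine card_le_of_div_eq (w := 0) ha hi (pow_pos hM n) (fun v hv => (mem_slab.1 hv).2)
    (fun v hv j hj => ?_) fun v hv => (mem_corners.1 (mem_slab.1 hv).1).2
  exact Nat.div_eq_of_lt ((mem_corners.1 (mem_slab.1 hv).1).1 j hj)

variable [NeZero M] {η : ι × Word1 M → Bool}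

/-- The number of retained level-`n` boxes in the directions of `J` whose corners lie in
`window a s`, in units of `M⁻ⁿ`. -/
def windowCount (a : ι → ℝ) (J : Finset ι) (n : ℕ) (s : ℝ) (η : ι × Word1 M → Bool) : ℕ :=
  (survivors J n (slab M a J n s) (fun _ => n) η).card

theorem dependsOn_windowCount (a : ι → ℝ) (J : Finset ι) (n : ℕ) (s : ℝ) :
    DependsOn (windowCount (M := M) a J n s) (nodesUpTo M fun _ => n) := fun _ _ h =>
  congrArg Finset.card (dependsOn_survivors J n _ _ h)

theorem windowCount_le (ha : ∀ i, 0 < a i) (hJ : J.Nonempty) (n : ℕ) (s : ℝ)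
    (η : ι × Word1 M → Bool) : windowCount a J n s η ≤ lineBound a * (M ^ n) ^ (J.card - 1) :=
  (Finset.card_le_card (survivors_subset _)).trans (card_slab_le ha (NeZero.pos M) hJ n s)

theorem windowCount_le_of_forall_corners {R : ℕ}
    (h : ∀ x ∈ corners M J n, windowCount a J n (linForm a x) η ≤ R) (s : ℝ) :
    windowCount a J n s η ≤ R := by
  set X := survivors J n (slab M a J n s) (fun _ => n) η with hX
  rcases X.eq_empty_or_nonempty with hempty | hne
  · simp [windowCount, ← hX, hempty]
  obtain ⟨x, hx, hmin⟩ := X.exists_min_image (linForm a) hne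
  have hxs := mem_slab.1 (survivors_subset _ hx)
  refine (Finset.card_le_card fun v hv => ?_).trans (h x hxs.1)
  obtain ⟨hvs, hvη⟩ := mem_survivors.1 hv
  have hvs := mem_slab.1 hvs
  exact mem_survivors.2 ⟨mem_slab.2 ⟨hvs.1, hmin v hv, hvs.2.2.trans (by linarith [hxs.2.1])⟩, hvη⟩

theorem update_div_mem_survivors (ha : ∀ i, 0 ≤ a i) (hM : 2 ≤ M) (hn : n < N) {v : ι → ℕ}
    (hv : v ∈ survivors J N (slab M a J N s) (fun _ => n) η) (i : ι) :
    Function.update (fun j => v j / M ^ (N - n)) i 0 ∈ survivors (J.erase i) n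
      (slab M a (J.erase i) n
        (s / (M ^ (N - n) : ℕ) - ∑ i, a i - a i * (v i / M ^ (N - n) : ℕ))) (fun _ => n) η := by
  obtain ⟨hslab, hη⟩ := mem_survivors.1 hv
  obtain ⟨hcorner, hwindow⟩ := mem_slab.1 hslab
  obtain ⟨hlt, hzero⟩ := mem_corners.1 hcorner
  have hK : 2 ≤ M ^ (N - n) := hM.trans (Nat.le_self_pow (by omega) M)
  have hcoarse := div_mem_window ha hK hwindow
  refine mem_survivors.2 ⟨mem_slab.2 ⟨mem_corners.2 ⟨fun j hj => ?_, fun j hj => ?_⟩, ?_⟩, ?_⟩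
  · rw [Function.update_of_ne (Finset.ne_of_mem_erase hj)]
    exact Finset.mem_range.1 (div_pow_sub_mem_range hn.le (hlt j (Finset.mem_of_mem_erase hj)))
  · rcases eq_or_ne j i with rfl | hji
    · exact Function.update_self ..
    · have hjJ : j ∉ J := fun h => hj (Finset.mem_erase.2 ⟨hji, h⟩)
      rw [Function.update_of_ne hji, hzero j hjJ, Nat.zero_div]
  · refine ⟨?_, ?_⟩ <;> rw [linForm_update_zero]
    · exact sub_le_sub_right hcoarse.1 _
    · linarith [hcoarse.2]
  · intro j hj
    rw [Function.update_of_ne (Finset.ne_of_mem_erase hj), Nat.sub_self, pow_zero, Nat.div_one]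
    exact hη j (Finset.mem_of_mem_erase hj)

theorem card_survivors_slice_slab_le (ha : ∀ i, 0 < a i) (hM : 2 ≤ M) (hi : i ∈ J) (hn : n < N)
    (y : ℕ) {D : ℕ} (hD : ∀ s, windowCount a (J.erase i) n s η ≤ D) :
    (survivors J N (slice (slab M a J N s) i (M ^ (N - (n + 1))) y) (fun _ => n) η).card ≤
      lineBound a * (M ^ (N - n)) ^ (J.card - 1) * D := by
  set X := survivors J N (slice (slab M a J N s) i (M ^ (N - (n + 1))) y) (fun _ => n) η
  have hX (v : ι → ℕ) (hv : v ∈ X) :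
      v ∈ survivors J N (slab M a J N s) (fun _ => n) η ∧ v i / M ^ (N - n) = y / M := by
    obtain ⟨hslice, hη⟩ := mem_survivors.1 hv
    obtain ⟨hslab, rfl⟩ := mem_slice.1 hslice
    refine ⟨mem_survivors.2 ⟨hslab, hη⟩, ?_⟩
    rw [Nat.div_div_eq_div_mul, ← pow_succ, Nat.sub_add_eq, Nat.sub_add_cancel (by omega)]
  refine (Finset.card_le_mul_card_image_of_maps_to
    (fun v hv => (hX v hv).2 ▸ update_div_mem_survivors (fun i => (ha i).le) hM hn (hX v hv).1 i)
    _ fun w _ => ?_).trans (Nat.mul_le_mul_left _ (hD _))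
  have hfiber (v : ι → ℕ) (hv : v ∈ X.filter fun v =>
      Function.update (fun j => v j / M ^ (N - n)) i 0 = w) :=
    (Finset.mem_filter.1 hv).imp_left fun hvX =>
      (hX v hvX).imp_left fun h => mem_slab.1 (survivors_subset _ h)
  refine card_le_of_div_eq (w := Function.update w i (y / M)) ha hi (NeZero.pos _)
    (fun v hv => (hfiber v hv).1.1.2) (fun v hv j _ => ?_)
    fun v hv => (mem_corners.1 (hfiber v hv).1.1.1).2
  rcases eq_or_ne j i with rfl | hji
  · rw [Function.update_self, (hfiber v hv).1.2]
  · rw [Function.update_of_ne hji, ← (hfiber v hv).2, Function.update_of_ne hji]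

end Slabs

/-! ### Extinction -/

section BorelCantelli

variable {Ω : Type*} [MeasurableSpace Ω] {μ : Measure Ω}

theorem ae_eventually_notMem_of_measureReal_le_geometric [IsFiniteMeasure μ] {s : ℕ → Set Ω}
    {c r : ℝ} (hr0 : 0 ≤ r) (hr1 : r < 1) (h : ∀ n, μ.real (s n) ≤ c * r ^ n) :
    ∀ᵐ x ∂μ, ∀ᶠ n in Filter.atTop, x ∉ s n := by
  refine ae_eventually_notMem (ne_top_of_le_ne_top
    ((summable_geometric_of_lt_one hr0 hr1).mul_left c).tsum_ofReal_ne_top ?_)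
  exact ENNReal.tsum_le_tsum fun n => ENNReal.le_ofReal_iff_toReal_le (measure_ne_top _ _)
    (measureReal_nonneg.trans (h n)) |>.2 (h n)

end BorelCantelli

section Extinction

variable {ι : Type*} [Finite ι] {M : ℕ} [NeZero M] {p : ι → ℝ} {μ : Measure (ι × Word1 M → Bool)}

theorem measureReal_retained1_digitWord (hμ : IsBernoulliField (fun q => p q.1) μ) (i : ι)
    (n x : ℕ) :
    μ.real {η | Retained1 M (fun w => η (i, w)) (digitWord M n x)} = p i ^ n := by
  classical
  have := hμ.isProbabilityMeasure
  have hdep (n x : ℕ) : DependsOn (fun η : ι × Word1 M → Bool =>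
      if Retained1 M (fun w => η (i, w)) (digitWord M n x) then (1 : ℝ) else 0)
      (nodesUpTo M fun _ => n) := fun η η' h => by
    have hiff := retained1_congr (w := digitWord M n x) fun q hq => h (i, q) <| by
      rwa [length_digitWord] at hq
    simp only [hiff]
  have hintegral (n x : ℕ) :
      μ.real {η | Retained1 M (fun w => η (i, w)) (digitWord M n x)} =
        ∫ η, (if Retained1 M (fun w => η (i, w)) (digitWord M n x) then (1 : ℝ) else 0) ∂μ := by
    have hmeas := measurable_of_dependsOn (finite_nodesUpTo _) (hdep n x)
    rw [← integral_indicator_one]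
    · simp [indicator_apply]
    · convert hmeas (measurableSet_singleton 1) using 1
      ext η
      simp
  induction n generalizing x with
  | zero => simp [digitWord, retained1_nil]
  | succ n ih =>
    have hfresh : (i, digitNode M n x) ∉ nodesUpTo M fun _ : ι => n := by
      simp [nodesUpTo, length_digitNode]
    rw [pow_succ', ← ih (x / M), hintegral, hintegral,
      ← hμ.integral_ite (finite_nodesUpTo _) hfresh (hdep n (x / M))]
    simp only [retained1_digitWord_succ, and_comm, ite_and]

theorem ae_eventually_forall_not_retained1 (hμ : IsBernoulliField (fun q => p q.1) μ) {i : ι}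
    (hi : M * p i < 1) :
    ∀ᵐ η ∂μ, ∀ᶠ n in Filter.atTop, ∀ x < M ^ n,
      ¬ Retained1 M (fun w => η (i, w)) (digitWord M n x) := by
  have := hμ.isProbabilityMeasure
  have hbound (n : ℕ) : μ.real (⋃ x ∈ Finset.range (M ^ n),
      {η | Retained1 M (fun w => η (i, w)) (digitWord M n x)}) ≤ 1 * (M * p i) ^ n := by
    refine (measureReal_biUnion_finset_le _ _).trans_eq ?_
    simp [measureReal_retained1_digitWord hμ, mul_pow]
  have hr := mul_nonneg (Nat.cast_nonneg (α := ℝ) M) (hμ.nonneg_fst i)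
  filter_upwards [ae_eventually_notMem_of_measureReal_le_geometric hr hi hbound] with η hη
  filter_upwards [hη] with n hn x hx hretained
  exact hn (mem_iUnion₂.2 ⟨x, Finset.mem_range.2 hx, hretained⟩)

end Extinction

/-! ### Induction on the number of directions -/

section Induction

variable {ι : Type*} [Fintype ι] [DecidableEq ι] {M : ℕ} [NeZero M] {p a : ι → ℝ} {J : Finset ι}
  {i : ι} {k n N B D : ℕ} {s : ℝ} {η : ι × Word1 M → Bool} {μ : Measure (ι × Word1 M → Bool)}

/-- Up to level `n`, every window contains at most `D` retained boxes after any one of the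
directions of `J` is dropped. -/
def goodEvent (a : ι → ℝ) (J : Finset ι) (D n : ℕ) : Set (ι × Word1 M → Bool) :=
  {η | ∀ m ≤ n, ∀ i ∈ J, ∀ s, windowCount a (J.erase i) m s η ≤ D}

theorem isSliceControl_goodEvent (hμ : IsBernoulliField (fun q => p q.1) μ) (ha : ∀ i, 0 < a i)
    (hM : 2 ≤ M) (hJ : J.Nonempty) (hq : (M : ℝ) ^ (J.card - 1) * ∏ j ∈ J, p j ≤ 1) (hD : 1 ≤ D)
    (N : ℕ) (s : ℝ) :
    IsSliceControl p J N (slab M a J N s) (goodEvent (M := M) a J D)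
      ((M : ℝ) ^ (J.card - 1) * ∏ j ∈ J, p j)
      ((lineBound a * M ^ (J.card - 1) * D : ℕ) : ℝ) where
  lt_pow i hi v hv := (mem_corners.1 (mem_slab.1 hv).1).1 i hi
  dependsOn n η η' h := by
    refine propext (forall₅_congr fun m hm i _ s => ?_)
    rw [dependsOn_windowCount a (J.erase i) m s fun q hq => h q (nodesUpTo_mono (fun _ => hm) hq)]
  antitone _ _ hmn _ hη m hm := hη m (hm.trans hmn)
  mul_card_le := by
    have hprob : 0 ≤ ∏ j ∈ J, p j := Finset.prod_nonneg fun j _ => hμ.nonneg_fst j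
    calc (∏ j ∈ J, p j) ^ N * ((slab M a J N s).card : ℝ)
        ≤ (∏ j ∈ J, p j) ^ N * (lineBound a * (M ^ N) ^ (J.card - 1) : ℕ) := by
          gcongr
          exact card_slab_le ha (NeZero.pos M) hJ N s
      _ = ((M : ℝ) ^ (J.card - 1) * ∏ j ∈ J, p j) ^ N * lineBound a := by
          push_cast
          ring
      _ ≤ 1 * lineBound a := by
          gcongr
          exact pow_le_one₀ (by positivity) hq
      _ ≤ (lineBound a * M ^ (J.card - 1) * D : ℕ) := by
          rw [one_mul, mul_assoc]
          exact_mod_cast Nat.le_mul_of_pos_right _ (Nat.mul_pos (NeZero.pos _) hD)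
  mul_card_slice_le n hn η hη i hi y := by
    have hprob : 0 ≤ ∏ j ∈ J, p j := Finset.prod_nonneg fun j _ => hμ.nonneg_fst j
    have hlevel : N - n = N - (n + 1) + 1 := by omega
    calc _ ≤ (∏ j ∈ J, p j) ^ (N - (n + 1)) *
          (lineBound a * (M ^ (N - n)) ^ (J.card - 1) * D : ℕ) := by
          gcongr
          exact card_survivors_slice_slab_le ha hM hi hn y (hη n le_rfl i hi)
      _ = _ := by
          rw [hlevel]
          push_cast
          ring

theorem measureReal_goodEvent_windowCount_ge_le (hμ : IsBernoulliField (fun q => p q.1) μ)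
    (ha : ∀ i, 0 < a i) (hM : 2 ≤ M) (hJ : J.Nonempty)
    (hq : (M : ℝ) ^ (J.card - 1) * ∏ j ∈ J, p j ≤ 1) (hD : 1 ≤ D) {c : ℝ} (hc : 0 ≤ c)
    (hcD : c * exp 1 * (lineBound a * M ^ (J.card - 1) * D : ℕ) * J.card ≤
      1 - (M : ℝ) ^ (J.card - 1) * ∏ j ∈ J, p j) (N : ℕ) (s R : ℝ) :
    μ.real {η | η ∈ goodEvent a J D N ∧ R ≤ windowCount a J N s η} ≤ exp (1 - c * R) :=
  measureReal_card_survivors_ge_le hμ (isSliceControl_goodEvent hμ ha hM hJ hq hD N s) hJ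
    (mul_nonneg (by positivity) (Finset.prod_nonneg fun j _ => hμ.nonneg_fst j)) hq hc hcD R

theorem measureReal_goodEvent_exists_windowCount_gt_le (hμ : IsBernoulliField (fun q => p q.1) μ)
    (ha : ∀ i, 0 < a i) (hM : 2 ≤ M) (hJ : J.Nonempty)
    (hq : (M : ℝ) ^ (J.card - 1) * ∏ j ∈ J, p j ≤ 1) (hD : 1 ≤ D) {c : ℝ} (hc : 0 ≤ c)
    (hcD : c * exp 1 * (lineBound a * M ^ (J.card - 1) * D : ℕ) * J.card ≤
      1 - (M : ℝ) ^ (J.card - 1) * ∏ j ∈ J, p j) (N R : ℕ) :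
    μ.real {η | η ∈ goodEvent a J D N ∧ ∃ s, R < windowCount a J N s η} ≤
      (M ^ N) ^ J.card * exp (1 - c * R) := by
  have := hμ.isProbabilityMeasure
  have hsub : {η : ι × Word1 M → Bool | η ∈ goodEvent a J D N ∧ ∃ s, R < windowCount a J N s η} ⊆
      ⋃ x ∈ corners M J N,
        {η | η ∈ goodEvent a J D N ∧ (R : ℝ) ≤ windowCount a J N (linForm a x) η} := by
    rintro η ⟨hη, s, hs⟩
    by_contra hcorners
    refine hs.not_ge (windowCount_le_of_forall_corners (fun x hx => ?_) s)
    by_contra! hR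
    exact hcorners (mem_iUnion₂.2 ⟨x, hx, hη, by exact_mod_cast hR.le⟩)
  calc _ ≤ ∑ x ∈ corners M J N, exp (1 - c * R) :=
        (measureReal_mono hsub (measure_ne_top _ _)).trans <|
          (measureReal_biUnion_finset_le _ _).trans <| Finset.sum_le_sum fun x _ =>
            measureReal_goodEvent_windowCount_ge_le hμ ha hM hJ hq hD hc hcD N _ R
    _ = (M ^ N) ^ J.card * exp (1 - c * R) := by simp [card_corners]

theorem pow_mul_exp_one_sub_mul_log {K : ℝ} (hK : 0 < K) (N : ℕ) :
    K ^ N * exp (1 - N * Real.log (2 * K)) = exp 1 * 2⁻¹ ^ N := by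
  rw [exp_sub, exp_nat_mul, exp_log (by positivity), mul_pow, inv_pow]
  field_simp

theorem exists_forall_measureReal_windowCount_gt_le (hμ : IsBernoulliField (fun q => p q.1) μ)
    (ha : ∀ i, 0 < a i) (hM : 2 ≤ M) (hJ : J.Nonempty)
    (hq : (M : ℝ) ^ (J.card - 1) * ∏ j ∈ J, p j < 1) (hB : 1 ≤ B) (k : ℕ) :
    ∃ C : ℕ, ∀ N : ℕ, μ.real {η | η ∈ goodEvent a J (B * (N + 1) ^ k) N ∧
      ∃ s, C * (N + 1) ^ (k + 1) < windowCount a J N s η} ≤ exp 1 * 2⁻¹ ^ N := by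
  have hL : 0 < lineBound a :=
    Finset.sum_pos (fun _ _ => Nat.succ_pos _) (hJ.mono (Finset.subset_univ J))
  have hM1 : (1 : ℝ) ≤ M := Nat.one_le_cast.2 (NeZero.pos M)
  set q := (M : ℝ) ^ (J.card - 1) * ∏ j ∈ J, p j
  -- `γ / (N + 1) ^ k` is an admissible order for the exponential moment at level `N`.
  set γ := (1 - q) / (exp 1 * (lineBound a * M ^ (J.card - 1) * B : ℕ) * J.card) with hγ
  have hγ0 : 0 < γ := div_pos (sub_pos.2 hq) (by positivity)
  obtain ⟨C, hC⟩ := exists_nat_ge (Real.log (2 * M ^ J.card) / γ)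
  rw [div_le_iff₀ hγ0] at hC
  refine ⟨C, fun N => ?_⟩
  have hlog : 0 ≤ Real.log (2 * M ^ J.card : ℝ) :=
    log_nonneg (by linarith [one_le_pow₀ hM1 (n := J.card)])
  have hexponent :
      N * Real.log (2 * M ^ J.card) ≤ γ / (N + 1) ^ k * (C * (N + 1) ^ (k + 1) : ℕ) := by
    calc N * Real.log (2 * M ^ J.card) ≤ (N + 1) * (C * γ) := by
          gcongr
          exact le_add_of_nonneg_right zero_le_one
      _ = γ / (N + 1) ^ k * (C * (N + 1) ^ (k + 1) : ℕ) := by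
          push_cast
          field_simp
          ring
  have horder : γ / (N + 1) ^ k * exp 1 *
      (lineBound a * M ^ (J.card - 1) * (B * (N + 1) ^ k) : ℕ) * J.card ≤ 1 - q := by
    rw [hγ]
    push_cast
    field_simp
    exact le_rfl
  calc _ ≤ ((M : ℝ) ^ N) ^ J.card * exp (1 - γ / (N + 1) ^ k * (C * (N + 1) ^ (k + 1) : ℕ)) :=
        measureReal_goodEvent_exists_windowCount_gt_le hμ ha hM hJ hq.le
          (Nat.mul_pos hB (by positivity)) (by positivity) horder N _
    _ ≤ ((M : ℝ) ^ J.card) ^ N * exp (1 - N * Real.log (2 * M ^ J.card)) := by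
        rw [pow_right_comm]
        gcongr
    _ = exp 1 * 2⁻¹ ^ N := pow_mul_exp_one_sub_mul_log (by positivity) N

theorem eventually_forall_windowCount_le (ha : ∀ i, 0 < a i) (hJ : J.card = k + 1)
    {C : ℕ} (h : ∀ᶠ n in Filter.atTop, ∀ s, windowCount a J n s η ≤ C * (n + 1) ^ k) :
    ∀ᶠ N in Filter.atTop, ∀ n ≤ N, ∀ s,
      windowCount a J n s η ≤ (lineBound a + C) * (N + 1) ^ k := by
  obtain ⟨N₀, hN₀⟩ := Filter.eventually_atTop.1 h
  filter_upwards [Filter.eventually_ge_atTop (M ^ N₀)] with N hN n hn s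
  rcases le_total N₀ n with hlarge | hsmall
  · exact (hN₀ n hlarge s).trans (by gcongr; omega)
  · have hne : J.Nonempty := Finset.card_pos.1 (by omega)
    refine (windowCount_le ha hne n s η).trans ?_
    rw [hJ, Nat.add_sub_cancel]
    have hpow : M ^ n ≤ N + 1 :=
      ((Nat.pow_le_pow_right (NeZero.pos M) hsmall).trans hN).trans (Nat.le_succ N)
    exact Nat.mul_le_mul (Nat.le_add_right _ _) (Nat.pow_le_pow_left hpow k)

theorem windowCount_eq_zero (hi : i ∈ J)
    (h : ∀ x < M ^ n, ¬ Retained1 M (fun w => η (i, w)) (digitWord M n x)) (s : ℝ) :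
    windowCount a J n s η = 0 := by
  refine Finset.card_eq_zero.2 (Finset.eq_empty_of_forall_notMem fun v hv => ?_)
  obtain ⟨hslab, hη⟩ := mem_survivors.1 hv
  exact h _ (Finset.mem_range.1 (div_pow_sub_mem_range le_rfl
    ((mem_corners.1 (mem_slab.1 hslab).1).1 i hi))) (hη i hi)

theorem exists_ae_eventually_windowCount_le_of_erase (hμ : IsBernoulliField (fun q => p q.1) μ)
    (ha : ∀ i, 0 < a i) (hM : 2 ≤ M) (hJ : J.card = k + 1 + 1)
    (hq : (M : ℝ) ^ (k + 1) * ∏ j ∈ J, p j < 1)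
    (h : ∀ i ∈ J, ∃ C : ℕ, ∀ᵐ η ∂μ, ∀ᶠ n in Filter.atTop, ∀ s,
      windowCount a (J.erase i) n s η ≤ C * (n + 1) ^ k) :
    ∃ C : ℕ, ∀ᵐ η ∂μ, ∀ᶠ n in Filter.atTop, ∀ s,
      windowCount a J n s η ≤ C * (n + 1) ^ (k + 1) := by
  have := hμ.isProbabilityMeasure
  choose! C hC using h
  set B := lineBound a + ∑ i ∈ J, C i + 1
  obtain ⟨C', hC'⟩ := exists_forall_measureReal_windowCount_gt_le (J := J) (B := B) hμ ha hM
    (Finset.card_pos.1 (by omega)) (by rwa [hJ]) (Nat.le_add_left 1 _) k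
  have hupper := ae_eventually_notMem_of_measureReal_le_geometric (by norm_num) (by norm_num) hC'
  refine ⟨C', ?_⟩
  filter_upwards [hupper, (Filter.eventually_all_finset J).2 hC] with η hη hlower
  have hgood : ∀ᶠ N in Filter.atTop, η ∈ goodEvent a J (B * (N + 1) ^ k) N := by
    filter_upwards [(Filter.eventually_all_finset J).2 fun i hi => eventually_forall_windowCount_le
      ha (by rw [Finset.card_erase_of_mem hi, hJ, Nat.add_sub_cancel]) (hlower i hi)]
      with N hN n hn i hi s
    have hCi : lineBound a + C i ≤ B := Nat.le_succ_of_le <|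
      Nat.add_le_add_left (Finset.single_le_sum (fun _ _ => Nat.zero_le _) hi) _
    exact (hN i hi n hn s).trans (Nat.mul_le_mul_right _ hCi)
  filter_upwards [hη, hgood] with N hN hgoodN s
  by_contra! hgt
  exact hN ⟨hgoodN, s, hgt⟩

theorem exists_ae_eventually_windowCount_le (hμ : IsBernoulliField (fun q => p q.1) μ)
    (ha : ∀ i, 0 < a i) (hM : 2 ≤ M) (k : ℕ) (J : Finset ι) (hJ : J.card = k + 1)
    (hq : (M : ℝ) ^ k * ∏ j ∈ J, p j < 1) :
    ∃ C : ℕ, ∀ᵐ η ∂μ, ∀ᶠ n in Filter.atTop, ∀ s, windowCount a J n s η ≤ C * (n + 1) ^ k := by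
  have := hμ.isProbabilityMeasure
  induction k generalizing J with
  | zero =>
    refine ⟨lineBound a, .of_forall fun η => .of_forall fun n s => ?_⟩
    have hne : J.Nonempty := Finset.card_pos.1 (by omega)
    simpa [hJ] using windowCount_le ha hne n s η
  | succ k ih =>
    by_cases hextinct : ∃ i ∈ J, M * p i < 1
    · obtain ⟨i, hi, hi1⟩ := hextinct
      refine ⟨0, ?_⟩
      filter_upwards [ae_eventually_forall_not_retained1 hμ hi1] with η hη
      filter_upwards [hη] with n hn s
      exact (windowCount_eq_zero hi hn s).le.trans (Nat.zero_le _)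
    push Not at hextinct
    refine exists_ae_eventually_windowCount_le_of_erase hμ ha hM hJ hq fun i hi => ih (J.erase i)
      (by rw [Finset.card_erase_of_mem hi, hJ, Nat.add_sub_cancel]) (hq.trans_le' ?_)
    have hprod : 0 ≤ ∏ j ∈ J.erase i, p j := Finset.prod_nonneg fun j _ => hμ.nonneg_fst j
    calc (M : ℝ) ^ k * ∏ j ∈ J.erase i, p j
        ≤ M ^ k * (M * p i * ∏ j ∈ J.erase i, p j) := by
          gcongr
          exact le_mul_of_one_le_left hprod (hextinct i hi)
      _ = M ^ (k + 1) * ∏ j ∈ J, p j := by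
          rw [← Finset.mul_prod_erase J p hi]
          ring

end Induction

/-! ### Hyperplanes -/

section Hyperplane

variable {d M : ℕ} {p a : Fin d → ℝ}

theorem measurable_uncurry_eval : Measurable fun (ω : Fin d → Perc1 M) (q : Fin d × Word1 M) =>
    ω q.1 q.2 :=
  measurable_pi_lambda _ fun q => (measurable_pi_apply q.2).comp (measurable_pi_apply q.1)

theorem isBernoulliField_map_uncurry {P : Measure (Fin d → Perc1 M)}
    (hP : IsIndepBernoulli1 d M p P) :
    IsBernoulliField (fun q => p q.1) (P.map fun ω (q : Fin d × Word1 M) => ω q.1 q.2) := by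
  obtain ⟨_, hcylinder⟩ := hP
  have hmap (S : Finset (Fin d × Word1 M)) :
      P.map (fun ω (q : Fin d × Word1 M) => ω q.1 q.2) {η | ∀ q ∈ S, η q = true} =
        ∏ q ∈ S, ENNReal.ofReal (p q.1) := by
    have hmeas : MeasurableSet {η : Fin d × Word1 M → Bool | ∀ q ∈ S, η q = true} := by
      simp only [ofPred_forall]
      exact S.measurableSet_biInter fun q _ => measurableSet_setOf_eval_eq q true
    rw [Measure.map_apply measurable_uncurry_eval hmeas]
    simpa using hcylinder S fun _ => true
  have hlabel (q : Fin d × Word1 M) :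
      P.map (fun ω (q : Fin d × Word1 M) => ω q.1 q.2) {η | η q = true} =
        ENNReal.ofReal (p q.1) := by
    simpa using hmap {q}
  refine ⟨iIndepFun_eval_of_measure_forall_eq_true fun S => by simp only [hmap, hlabel],
    fun q => ?_⟩
  have hfalse : ENNReal.ofReal (1 - p q.1) ≤ 1 := by
    have hzero := hcylinder {q} fun _ => false
    simp only [Finset.prod_singleton, Bool.false_eq_true, if_false] at hzero
    exact hzero ▸ prob_le_one
  rw [measureReal_def, hlabel, ENNReal.toReal_ofReal]
  linarith [ENNReal.ofReal_le_one.1 hfalse]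

variable [NeZero M]

theorem mem_window_of_mem_hplane (ha : ∀ i, 0 ≤ a i) {n : ℕ} {t : ℝ} {x : Fin d → ℕ}
    (hx : ∀ i, x i < M ^ n)
    (h : (Hplane d a t ∩ prodCube d M fun i => digitWord M n (x i)).Nonempty) :
    x ∈ window a (t * M ^ n - ∑ i, a i) := by
  obtain ⟨y, hyt, hy⟩ := h
  have hMn : (0 : ℝ) < (M : ℝ) ^ n := pow_pos (Nat.cast_pos.2 (NeZero.pos M)) n
  have hbox (i : Fin d) : (x i : ℝ) ≤ y i * M ^ n ∧ y i * M ^ n ≤ x i + 1 := by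
    obtain ⟨hleft, hright⟩ := hy i
    rw [length_digitWord, zpow_neg, zpow_natCast] at hright
    rw [← base1_digitWord (hx i), ← inv_mul_cancel₀ hMn.ne', ← add_mul]
    exact ⟨mul_le_mul_of_nonneg_right hleft hMn.le, mul_le_mul_of_nonneg_right hright hMn.le⟩
  have ht : t * M ^ n = ∑ i, a i * (y i * M ^ n) := by
    rw [← show ∑ i, a i * y i = t from hyt, Finset.sum_mul]
    exact Finset.sum_congr rfl fun i _ => mul_assoc _ _ _
  have hlower : linForm a x ≤ t * M ^ n := by
    rw [ht]
    exact Finset.sum_le_sum fun i _ => mul_le_mul_of_nonneg_left (hbox i).1 (ha i)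
  have hupper : t * M ^ n ≤ linForm a x + ∑ i, a i := by
    rw [ht, linForm, ← Finset.sum_add_distrib]
    refine Finset.sum_le_sum fun i _ => ?_
    rw [← mul_add_one]
    exact mul_le_mul_of_nonneg_left (hbox i).2 (ha i)
  constructor <;> linarith

theorem ncard_setOf_hplane_inter_prodCube_nonempty_le (ha : ∀ i, 0 ≤ a i) (n : ℕ) (t : ℝ)
    (ω : Fin d → Perc1 M) :
    {w : Fin d → List (Fin M) | (∀ i, (w i).length = n ∧ Retained1 M (ω i) (w i)) ∧
        (Hplane d a t ∩ prodCube d M w).Nonempty}.ncard ≤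
      windowCount a Finset.univ n (t * M ^ n - ∑ i, a i) fun q => ω q.1 q.2 := by
  classical
  refine le_trans ?_ (Finset.card_image_le (f := fun x i => digitWord M n (x i)))
  rw [← Set.ncard_coe_finset]
  refine Set.ncard_le_ncard ?_ (Finset.finite_toSet _)
  rintro w ⟨hw, hmeet⟩
  choose x hx hxw using fun i => exists_digitWord_eq (w i)
  simp only [(hw _).1] at hx hxw
  obtain rfl : (fun i => digitWord M n (x i)) = w := funext hxw
  refine Finset.mem_coe.2 (Finset.mem_image_of_mem _ (mem_survivors.2 ⟨mem_slab.2 ⟨?_, ?_⟩, ?_⟩))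
  · exact mem_corners.2 ⟨fun i _ => hx i, fun i hi => absurd (Finset.mem_univ i) hi⟩
  · exact mem_window_of_mem_hplane ha hx hmeet
  · intro i _
    rw [Nat.sub_self, pow_zero, Nat.div_one]
    exact (hw i).2

end Hyperplane

theorem natCast_pow_le_rpow_one_add_mul {ε : ℝ} (hε : 0 ≤ ε) {d n : ℕ} (hd : 1 ≤ d) (hn : 1 ≤ n) :
    (n : ℝ) ^ (d - 1) ≤ (n : ℝ) ^ ((1 + ε) * ((d : ℝ) - 1)) := by
  have hd1 : (1 : ℝ) ≤ d := Nat.one_le_cast.2 hd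
  rw [← Real.rpow_natCast, Nat.cast_sub hd, Nat.cast_one]
  exact Real.rpow_le_rpow_of_exponent_le (Nat.one_le_cast.2 hn)
    (le_mul_of_one_le_left (by linarith) (by linarith))

theorem hyperplane_cube_count_general
    (d M : ℕ) (hd : 1 ≤ d) (hM : 2 ≤ M)
    (p : Fin d → ℝ) (hprod : ∏ i, p i < (M : ℝ) ^ (1 - (d : ℤ)))
    (P : Measure (Fin d → Perc1 M)) (hP : IsIndepBernoulli1 d M p P)
    (a : Fin d → ℝ) (ha : ∀ i, 0 < a i) :
    ∃ C : ℕ, ∀ᵐ ω ∂P, ∃ N : ℕ, ∀ n ≥ N, ∀ t : ℝ,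
      {w : Fin d → List (Fin M) | (∀ i, (w i).length = n ∧ Retained1 M (ω i) (w i)) ∧
        (Hplane d a t ∩ prodCube d M w).Nonempty}.ncard ≤ C * n ^ (d - 1) := by
  have : NeZero M := ⟨by omega⟩
  have hq : (M : ℝ) ^ (d - 1) * ∏ i, p i < 1 := by
    have hexponent : 1 - (d : ℤ) = -((d - 1 : ℕ) : ℤ) := by omega
    have hM0 : (0 : ℝ) < M := Nat.cast_pos.2 (NeZero.pos M)
    rwa [hexponent, zpow_neg, zpow_natCast, ← one_div, lt_div_iff₀' (by positivity)] at hprod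
  obtain ⟨C, hC⟩ := exists_ae_eventually_windowCount_le (isBernoulliField_map_uncurry hP) ha hM
    (d - 1) Finset.univ (by simp; omega) hq
  refine ⟨C * 2 ^ (d - 1), ?_⟩
  filter_upwards [ae_of_ae_map measurable_uncurry_eval.aemeasurable hC] with ω hω
  obtain ⟨N, hN⟩ := Filter.eventually_atTop.1 hω
  refine ⟨max N 1, fun n hn t => ?_⟩
  calc _ ≤ windowCount a Finset.univ n (t * M ^ n - ∑ i, a i) fun q => ω q.1 q.2 :=
        ncard_setOf_hplane_inter_prodCube_nonempty_le (fun i => (ha i).le) n t ω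
    _ ≤ C * (n + 1) ^ (d - 1) := hN n (le_of_max_le_left hn) _
    _ ≤ C * (2 * n) ^ (d - 1) := by
        gcongr
        linarith [le_of_max_le_right hn]
    _ = C * 2 ^ (d - 1) * n ^ (d - 1) := by rw [mul_pow, mul_assoc]

/-- under `∏ pᵢ < M^{-(d-1)}` there is a constant `C̃` such that
almost surely (given all `E⁽ⁱ⁾ ≠ ∅`), for all large `n`, every hyperplane `H_t`
meets at most `C̃ n^{(1+ε)(d-1)}` cubes of `Ẽ_n`. -/
theorem hyperplane_cube_count
    (d M : ℕ) (hd : 1 ≤ d) (hM : 2 ≤ M)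
    (p : Fin d → ℝ) (hp0 : ∀ i, 0 < p i) (hp1 : ∀ i, p i ≤ 1)
    (hprod : ∏ i, p i < (M : ℝ) ^ (1 - (d : ℤ)))
    (P : Measure (Fin d → Perc1 M)) (hP : IsIndepBernoulli1 d M p P)
    (a : Fin d → ℝ) (ha : ∀ i, 0 < a i) (hnorm : ∑ i, a i ^ 2 = 1)
    (ε : ℝ) (hε : 0 < ε) :
    ∃ C : ℝ, ∀ᵐ ω ∂(ProbabilityTheory.cond P {ω | ∀ i, limit1 M (ω i) ≠ ∅}),
      ∃ N : ℕ, ∀ n ≥ N, ∀ t : ℝ,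
        (({w : Fin d → List (Fin M) |
            (∀ i, (w i).length = n ∧ Retained1 M (ω i) (w i)) ∧
            (Hplane d a t ∩ prodCube d M w).Nonempty}.ncard : ℝ)) ≤
          C * (n : ℝ) ^ ((1 + ε) * ((d : ℝ) - 1)) := by
  obtain ⟨C, hC⟩ := hyperplane_cube_count_general d M hd hM p hprod P hP a ha
  refine ⟨C, cond_absolutelyContinuous.ae_le ?_⟩
  filter_upwards [hC] with ω ⟨N, hN⟩
  refine ⟨max N 1, fun n hn t => ?_⟩
  calc _ ≤ (C : ℝ) * (n : ℝ) ^ (d - 1) := by exact_mod_cast hN n (le_of_max_le_left hn) t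
    _ ≤ _ := by
      gcongr
      exact natCast_pow_le_rpow_one_add_mul hε.le hd (le_of_max_le_right hn)
end
end
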